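/- arXiv:1604.00618 — 2 statements merged into one kernel-verified Lean document; each statement's English description precedes it below -/
import Mathlib

section
/- Let (Ω, Σ, μ) be a measure space and let Y be a Hilbert space. Then the pair (L₁(μ, c₀), Y) has the BPBp for compact operators, and for every measure space (Ω', Σ', ν) and every 1 < p < ∞, the pair (L₁(μ, L_p(ν)), Y) has the BPBp for compact operators. -/
open MeasureTheory
open scoped ENNReal NNReal

noncomputable section

/-- A pair `(X, Y)` of normed spaces has the Bishop–Phelps–Bollobás property for compact
operators with the function `η`. -/
def BPBpCompactWith (𝕜 : Type*) [RCLike 𝕜] (X Y : Type*) [NormedAddCommGroup X]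
    [NormedSpace 𝕜 X] [NormedAddCommGroup Y] [NormedSpace 𝕜 Y] (η : ℝ → ℝ) : Prop :=
  ∀ ε : ℝ, 0 < ε → 0 < η ε ∧
    ∀ T : X →L[𝕜] Y, IsCompactOperator T → ‖T‖ = 1 →
      ∀ x₀ : X, ‖x₀‖ = 1 → 1 - η ε < ‖T x₀‖ →
        ∃ S : X →L[𝕜] Y, ∃ x₁ : X, IsCompactOperator S ∧ ‖S‖ = 1 ∧ ‖x₁‖ = 1 ∧
          ‖S x₁‖ = 1 ∧ ‖x₀ - x₁‖ < ε ∧ ‖S - T‖ < ε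

/-- A pair `(X, Y)` has the Bishop–Phelps–Bollobás property for compact operators. -/
def BPBpCompact (𝕜 : Type*) [RCLike 𝕜] (X Y : Type*) [NormedAddCommGroup X]
    [NormedSpace 𝕜 X] [NormedAddCommGroup Y] [NormedSpace 𝕜 Y] : Prop :=
  ∃ η : ℝ → ℝ, BPBpCompactWith 𝕜 X Y η

/-!
Let `T : L₁(μ, X) → Y` be compact. If the dual ball of `X` has small weak-* slices in a uniform
sense, then every set of positive finite measure contains one on which `T` acts through an almost
constant operator `X → Y`; compactness leaves only finitely many functionals to control. By
Hahn–Banach the simple functions carried by such sets are dense, so `T` almost attains its norm at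
some `∑ᵢ 1_{Bᵢ} xᵢ` with `T` almost constant on each `Bᵢ`. These pieces are replaced independently
by operators that attain their norms near `xᵢ`. Since the norm of `L₁` is additive, the pieces
reassemble to a norm-attaining operator as soon as all of them attain their norm with the *same*
value `y`; this prescribed value is what the pointed form of the property records. In a Hilbert
space the value can be steered to `y` by a contraction close to the identity.

The pointed property follows by perturbing `R : X → Y` by a rank one operator in the direction
`y`: a compact operator which attains the perturbed norm must do so near the given point when `X`
is uniformly convex. For `c₀`, the parallelogram law shows that `R` barely sees the coordinates
where `|x i|` is far from `1`, so `R` may be restricted to the remaining finitely many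
coordinates, where it attains its norm, and the maximiser is rotated coordinatewise towards `x`.
-/

theorem disjoint_biUnion_of_notMem {Ω ι : Type*} {E : ι → Set Ω}
    (hE : Pairwise (Function.onFun Disjoint E)) {s : Finset ι} {i : ι} (hi : i ∉ s) :
    Disjoint (E i) (⋃ j ∈ s, E j) :=
  Set.disjoint_iUnion₂_right.2 fun _ hj ↦ hE (ne_of_mem_of_not_mem hj hi).symm

section Cutoff

variable {𝕜 : Type*} [RCLike 𝕜] {X : Type*} [NormedAddCommGroup X] [NormedSpace 𝕜 X]
  {Ω : Type*} [MeasurableSpace Ω] {μ : Measure Ω} {A B C D : Set Ω}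

/-- The measurable sets of positive finite measure, on which averages make sense. -/
structure PosFinite (μ : Measure Ω) (A : Set Ω) : Prop where
  measurableSet : MeasurableSet A
  ne_zero : μ A ≠ 0
  ne_top : μ A ≠ ∞

theorem PosFinite.measureReal_pos (hA : PosFinite μ A) : 0 < μ.real A :=
  ENNReal.toReal_pos hA.ne_zero hA.ne_top

theorem PosFinite.mono (hA : PosFinite μ A) (hBA : B ⊆ A) (hB : MeasurableSet B)
    (hB₀ : μ B ≠ 0) : PosFinite μ B :=
  ⟨hB, hB₀, ne_top_of_le_ne_top hA.ne_top (measure_mono hBA)⟩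

open Classical in
variable (𝕜) in
/-- Multiplication by the indicator function of `B`, as an operator on `L¹(μ, X)`; it is `0` by
convention when `B` is not measurable. -/
def cutoff (B : Set Ω) : Lp X 1 μ →L[𝕜] Lp X 1 μ :=
  if hB : MeasurableSet B then
    LinearMap.mkContinuous
      { toFun f := ((Lp.memLp f).indicator hB).toLp _
        map_add' f g := by
          rw [← MemLp.toLp_add]
          refine MemLp.toLp_congr _ _ ?_
          filter_upwards [Lp.coeFn_add f g] with ω hω
          rw [← Set.indicator_add', Set.indicator_apply, Set.indicator_apply, hω]
        map_smul' c f := by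
          rw [RingHom.id_apply, ← MemLp.toLp_const_smul]
          refine MemLp.toLp_congr _ _ ?_
          filter_upwards [Lp.coeFn_smul c f] with ω hω
          rw [Pi.smul_apply, ← Set.indicator_const_smul_apply, Set.indicator_apply,
            Set.indicator_apply, hω, Pi.smul_apply] }
      1 fun f ↦ by
        rw [one_mul]
        refine Lp.norm_le_norm_of_ae_le ?_
        filter_upwards [((Lp.memLp f).indicator hB).coeFn_toLp] with ω hω
        exact hω ▸ norm_indicator_le_norm_self _ _
  else 0

theorem cutoff_of_not_measurableSet (hB : ¬MeasurableSet B) :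
    (cutoff 𝕜 B : Lp X 1 μ →L[𝕜] Lp X 1 μ) = 0 := dif_neg hB

theorem cutoff_coeFn (hB : MeasurableSet B) (f : Lp X 1 μ) :
    (cutoff 𝕜 B f : Ω → X) =ᵐ[μ] B.indicator f := by
  rw [cutoff, dif_pos hB]
  exact ((Lp.memLp f).indicator hB).coeFn_toLp

theorem norm_cutoff_apply (hB : MeasurableSet B) (f : Lp X 1 μ) :
    ‖cutoff 𝕜 B f‖ = ∫ ω in B, ‖f ω‖ ∂μ := by
  rw [L1.norm_eq_integral_norm, ← integral_indicator hB]
  refine integral_congr_ae ?_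
  filter_upwards [cutoff_coeFn (𝕜 := 𝕜) hB f] with ω hω
  rw [hω, norm_indicator_eq_indicator_norm]

theorem cutoff_union (hB : MeasurableSet B) (hC : MeasurableSet C) (hBC : Disjoint B C)
    (f : Lp X 1 μ) : cutoff 𝕜 (B ∪ C) f = cutoff 𝕜 B f + cutoff 𝕜 C f := by
  refine Lp.ext ?_
  filter_upwards [cutoff_coeFn (𝕜 := 𝕜) hB f, cutoff_coeFn (𝕜 := 𝕜) hC f,
    cutoff_coeFn (𝕜 := 𝕜) (hB.union hC) f,
    Lp.coeFn_add (cutoff 𝕜 B f) (cutoff 𝕜 C f)] with ω hωB hωC hωU hadd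
  rw [hadd, Pi.add_apply, hωB, hωC, hωU, Set.indicator_union_of_disjoint hBC]

theorem norm_cutoff_union (hB : MeasurableSet B) (hC : MeasurableSet C) (hBC : Disjoint B C)
    (f : Lp X 1 μ) : ‖cutoff 𝕜 (B ∪ C) f‖ = ‖cutoff 𝕜 B f‖ + ‖cutoff 𝕜 C f‖ := by
  have hf := (L1.integrable_coeFn f).norm
  rw [norm_cutoff_apply (hB.union hC), norm_cutoff_apply hB, norm_cutoff_apply hC,
    setIntegral_union hBC hC hf.integrableOn hf.integrableOn]

theorem norm_cutoff_add_of_disjoint_support (hB : MeasurableSet B) {f g : Ω → X}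
    (hf : MemLp f 1 μ) (hg : MemLp g 1 μ)
    (hfg : Disjoint (Function.support f) (Function.support g)) :
    ‖cutoff 𝕜 B (hf.toLp f + hg.toLp g)‖ =
      ‖cutoff 𝕜 B (hf.toLp f)‖ + ‖cutoff 𝕜 B (hg.toLp g)‖ := by
  simp_rw [norm_cutoff_apply hB]
  rw [← integral_add (L1.integrable_coeFn _).norm.integrableOn
    (L1.integrable_coeFn _).norm.integrableOn]
  refine integral_congr_ae (ae_restrict_of_ae ?_)
  filter_upwards [Lp.coeFn_add (hf.toLp f) (hg.toLp g), hf.coeFn_toLp, hg.coeFn_toLp]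
    with ω hadd hωf hωg
  rw [hadd, Pi.add_apply, hωf, hωg]
  by_cases h : f ω = 0
  · simp [h]
  · simp [Function.notMem_support.1 (Set.disjoint_left.1 hfg (Function.mem_support.2 h))]

theorem cutoff_empty : (cutoff 𝕜 (∅ : Set Ω) : Lp X 1 μ →L[𝕜] Lp X 1 μ) = 0 := by
  ext1 f
  rw [zero_apply, ← norm_eq_zero, norm_cutoff_apply .empty, setIntegral_empty]

theorem cutoff_univ : (cutoff 𝕜 (Set.univ : Set Ω) : Lp X 1 μ →L[𝕜] Lp X 1 μ) = .id 𝕜 _ := by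
  refine ContinuousLinearMap.ext fun f ↦ Lp.ext ?_
  filter_upwards [cutoff_coeFn (𝕜 := 𝕜) .univ f] with ω hω
  rw [hω, Set.indicator_univ, ContinuousLinearMap.id_apply]

section Finset

variable {ι : Type*} {E : ι → Set Ω}

theorem cutoff_biUnion (hE : ∀ i, MeasurableSet (E i))
    (hdisj : Pairwise (Function.onFun Disjoint E)) (s : Finset ι) (f : Lp X 1 μ) :
    cutoff 𝕜 (⋃ i ∈ s, E i) f = ∑ i ∈ s, cutoff 𝕜 (E i) f := by
  classical
  induction s using Finset.induction_on with
  | empty => simp [cutoff_empty]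
  | insert i s hi ih =>
    rw [Finset.set_biUnion_insert, cutoff_union (hE i) (s.measurableSet_biUnion fun j _ ↦ hE j)
      (disjoint_biUnion_of_notMem hdisj hi), ih, Finset.sum_insert hi]

theorem norm_cutoff_biUnion (hE : ∀ i, MeasurableSet (E i))
    (hdisj : Pairwise (Function.onFun Disjoint E)) (s : Finset ι) (f : Lp X 1 μ) :
    ‖cutoff 𝕜 (⋃ i ∈ s, E i) f‖ = ∑ i ∈ s, ‖cutoff 𝕜 (E i) f‖ := by
  classical
  induction s using Finset.induction_on with
  | empty => simp [cutoff_empty]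
  | insert i s hi ih =>
    rw [Finset.set_biUnion_insert, norm_cutoff_union (hE i)
      (s.measurableSet_biUnion fun j _ ↦ hE j) (disjoint_biUnion_of_notMem hdisj hi), ih,
      Finset.sum_insert hi]

theorem norm_cutoff_sub_sum_cutoff_add (hE : ∀ i, MeasurableSet (E i))
    (hdisj : Pairwise (Function.onFun Disjoint E)) (hA : MeasurableSet A) (hEA : ∀ i, E i ⊆ A)
    (s : Finset ι) (f : Lp X 1 μ) :
    ‖cutoff 𝕜 A f - ∑ i ∈ s, cutoff 𝕜 (E i) f‖ + ∑ i ∈ s, ‖cutoff 𝕜 (E i) f‖ =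
      ‖cutoff 𝕜 A f‖ := by
  set U := ⋃ i ∈ s, E i
  have hU : MeasurableSet U := s.measurableSet_biUnion fun i _ ↦ hE i
  have hAU : A \ U ∪ U = A := Set.sdiff_union_of_subset (Set.iUnion₂_subset fun i _ ↦ hEA i)
  have hsub : cutoff 𝕜 A f - cutoff 𝕜 U f = cutoff 𝕜 (A \ U) f := by
    rw [sub_eq_iff_eq_add, ← cutoff_union (hA.diff hU) hU Set.disjoint_sdiff_left, hAU]
  rw [← cutoff_biUnion hE hdisj, ← norm_cutoff_biUnion hE hdisj, hsub,
    ← norm_cutoff_union (hA.diff hU) hU Set.disjoint_sdiff_left, hAU]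

theorem hasSum_cutoff_iUnion [Countable ι] (hE : ∀ i, MeasurableSet (E i))
    (hdisj : Pairwise (Function.onFun Disjoint E)) (f : Lp X 1 μ) :
    HasSum (fun i ↦ cutoff 𝕜 (E i) f) (cutoff 𝕜 (⋃ i, E i) f) := by
  have hnorm : HasSum (fun i ↦ ‖cutoff 𝕜 (E i) f‖) ‖cutoff 𝕜 (⋃ i, E i) f‖ := by
    simp_rw [norm_cutoff_apply (hE _), norm_cutoff_apply (.iUnion hE)]
    exact hasSum_integral_iUnion hE hdisj (L1.integrable_coeFn f).norm.integrableOn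
  have hrest (s : Finset ι) : ‖∑ i ∈ s, cutoff 𝕜 (E i) f - cutoff 𝕜 (⋃ i, E i) f‖ =
      ‖cutoff 𝕜 (⋃ i, E i) f‖ - ∑ i ∈ s, ‖cutoff 𝕜 (E i) f‖ := by
    rw [norm_sub_rev, eq_sub_iff_add_eq,
      norm_cutoff_sub_sum_cutoff_add hE hdisj (.iUnion hE) (Set.subset_iUnion E)]
  refine tendsto_iff_norm_sub_tendsto_zero.2 ?_
  simpa [hrest] using hnorm.const_sub ‖cutoff 𝕜 (⋃ i, E i) f‖

end Finset

variable (𝕜) in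
/-- The vector measure `D ↦ 1_D f` with values in `L¹(μ, X)`. -/
def cutoffMeasure (f : Lp X 1 μ) : VectorMeasure Ω (Lp X 1 μ) where
  measureOf' D := cutoff 𝕜 D f
  empty' := by rw [cutoff_empty, zero_apply]
  not_measurable' D hD := by
    rw [cutoff_of_not_measurableSet hD, zero_apply]
  m_iUnion' _ hD hdisj := hasSum_cutoff_iUnion hD hdisj f

end Cutoff

section AvgEmb

variable {𝕜 : Type*} [RCLike 𝕜] {X : Type*} [NormedAddCommGroup X] [NormedSpace 𝕜 X]
  {Ω : Type*} [MeasurableSpace Ω] {μ : Measure Ω} {A B C D : Set Ω}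

theorem indicatorConstLp_const_smul (hB : MeasurableSet B) (hBμ : μ B ≠ ∞) (c : 𝕜) (x : X) :
    indicatorConstLp 1 hB hBμ (c • x) = c • indicatorConstLp 1 hB hBμ x := by
  rw [indicatorConstLp, indicatorConstLp, ← MemLp.toLp_const_smul]
  exact MemLp.toLp_congr _ _ (.of_forall fun ω ↦ Set.indicator_const_smul_apply B c _ ω)

theorem norm_indicatorConstLp_one (hB : MeasurableSet B) (hBμ : μ B ≠ ∞) (x : X) :
    ‖indicatorConstLp 1 hB hBμ x‖ = μ.real B * ‖x‖ := by
  rw [norm_indicatorConstLp one_ne_zero ENNReal.one_ne_top, ENNReal.toReal_one, div_one,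
    Real.rpow_one, mul_comm]

open Classical in
variable (𝕜 μ) in
/-- The embedding `x ↦ μ(B)⁻¹ 1_B x` of `X` into `L¹(μ, X)`, isometric when `B` has positive finite
measure; it is `0` by convention for all other `B`. -/
def avgEmb (B : Set Ω) : X →L[𝕜] Lp X 1 μ :=
  if hB : PosFinite μ B then
    (μ.real B : 𝕜)⁻¹ • LinearMap.mkContinuous
      { toFun x := indicatorConstLp 1 hB.measurableSet hB.ne_top x
        map_add' x y := by exact indicatorConstLp_add.symm
        map_smul' c x := by exact indicatorConstLp_const_smul _ _ c x }
      (μ.real B) fun x ↦ (norm_indicatorConstLp_one hB.measurableSet hB.ne_top x).le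
  else 0

theorem avgEmb_apply (hB : PosFinite μ B) (x : X) : avgEmb 𝕜 μ B x =
    (μ.real B : 𝕜)⁻¹ • indicatorConstLp 1 hB.measurableSet hB.ne_top x := by
  rw [avgEmb, dif_pos hB]
  rfl

theorem indicatorConstLp_eq_smul_avgEmb (hB : PosFinite μ B) (x : X) :
    indicatorConstLp 1 hB.measurableSet hB.ne_top x = (μ.real B : 𝕜) • avgEmb 𝕜 μ B x := by
  rw [avgEmb_apply hB, smul_inv_smul₀ (RCLike.ofReal_ne_zero.2 hB.measureReal_pos.ne')]

theorem norm_avgEmb_apply (hB : PosFinite μ B) (x : X) : ‖avgEmb 𝕜 μ B x‖ = ‖x‖ := by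
  have hpos := hB.measureReal_pos
  rw [avgEmb_apply hB, norm_smul, norm_indicatorConstLp_one, norm_inv, RCLike.norm_ofReal,
    abs_of_pos hpos, inv_mul_cancel_left₀ hpos.ne']

theorem norm_avgEmb_le (hB : PosFinite μ B) : ‖(avgEmb 𝕜 μ B : X →L[𝕜] Lp X 1 μ)‖ ≤ 1 :=
  ContinuousLinearMap.opNorm_le_bound _ zero_le_one fun x ↦ by
    rw [norm_avgEmb_apply hB, one_mul]

theorem cutoff_indicatorConstLp (hA : MeasurableSet A) (hB : MeasurableSet B) (hBμ : μ B ≠ ∞)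
    (hABμ : μ (A ∩ B) ≠ ∞) (x : X) :
    cutoff 𝕜 A (indicatorConstLp 1 hB hBμ x) = indicatorConstLp 1 (hA.inter hB) hABμ x := by
  refine Lp.ext ?_
  filter_upwards [cutoff_coeFn (𝕜 := 𝕜) hA (indicatorConstLp 1 hB hBμ x),
    indicatorConstLp_coeFn (p := 1) (hs := hB) (hμs := hBμ) (c := x),
    indicatorConstLp_coeFn (p := 1) (hs := hA.inter hB) (hμs := hABμ) (c := x)] with ω hA hB hAB
  rw [hA, hAB, ← Set.indicator_indicator]
  by_cases h : ω ∈ A <;> simp [h, hB]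

theorem cutoff_avgEmb (hD : PosFinite μ D) (hB : PosFinite μ B) (hDB : D ⊆ B) (x : X) :
    cutoff 𝕜 D (avgEmb 𝕜 μ B x) = (μ.real D / μ.real B : 𝕜) • avgEmb 𝕜 μ D x := by
  have hinter : D ∩ B = D := Set.inter_eq_left.2 hDB
  rw [avgEmb_apply hB, map_smul,
    cutoff_indicatorConstLp hD.measurableSet _ _ (by rw [hinter]; exact hD.ne_top)]
  simp_rw [hinter]
  rw [indicatorConstLp_eq_smul_avgEmb (𝕜 := 𝕜) hD, smul_smul, div_eq_inv_mul]

theorem cutoff_avgEmb_of_disjoint (hA : MeasurableSet A) (hB : PosFinite μ B)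
    (hAB : Disjoint A B) (x : X) : cutoff 𝕜 A (avgEmb 𝕜 μ B x) = 0 := by
  have hinter : A ∩ B = ∅ := hAB.inter_eq
  rw [avgEmb_apply hB, map_smul, cutoff_indicatorConstLp hA _ _ (by simp [hinter])]
  simp_rw [hinter]
  rw [indicatorConstLp_empty, smul_zero]

theorem cutoff_avgEmb_self (hB : PosFinite μ B) (x : X) :
    cutoff 𝕜 B (avgEmb 𝕜 μ B x) = avgEmb 𝕜 μ B x := by
  rw [cutoff_avgEmb hB hB subset_rfl,
    div_self (RCLike.ofReal_ne_zero.2 hB.measureReal_pos.ne'), one_smul]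

end AvgEmb
section LocallyAlmostConstant

variable {𝕜 : Type*} [RCLike 𝕜] {X : Type*} [NormedAddCommGroup X] [NormedSpace 𝕜 X]
  {Ω : Type*} [MeasurableSpace Ω] {μ : Measure Ω} {A B D : Set Ω}

theorem exists_subset_forall_le_re_avgEmb (φ : Lp X 1 μ →L[𝕜] 𝕜) (hA : PosFinite μ A) {x : X}
    {t : ℝ} (ht : t < RCLike.re (φ (avgEmb 𝕜 μ A x))) :
    ∃ B ⊆ A, PosFinite μ B ∧ ∀ D ⊆ B, PosFinite μ D → t ≤ RCLike.re (φ (avgEmb 𝕜 μ D x)) := by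
  have : IsFiniteMeasure (μ.restrict A) := ⟨by simpa using hA.ne_top.lt_top⟩
  set f : Lp X 1 μ := (μ.real A : 𝕜) • avgEmb 𝕜 μ A x with hf
  -- The negative part of the Hahn decomposition of `D ↦ t μ(D) - Re φ(1_D x)` is the set `B`.
  let v : SignedMeasure Ω := t • (μ.restrict A).toSignedMeasure -
    (cutoffMeasure 𝕜 f).mapRange ((RCLike.re : 𝕜 →+ ℝ).comp φ.toLinearMap.toAddMonoidHom)
      (RCLike.continuous_re.comp φ.continuous)
  have hv {D : Set Ω} (hD : MeasurableSet D) (hDA : D ⊆ A) :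
      v D = t * μ.real D - RCLike.re (φ (cutoff 𝕜 D f)) := by
    simp only [v, sub_apply, smul_apply, smul_eq_mul,
      Measure.toSignedMeasure_apply_measurable hD, measureReal_restrict_apply hD,
      Set.inter_eq_left.2 hDA]
    rfl
  have hcut {D : Set Ω} (hD : PosFinite μ D) (hDA : D ⊆ A) :
      v D = μ.real D * (t - RCLike.re (φ (avgEmb 𝕜 μ D x))) := by
    rw [hv hD.measurableSet hDA, hf, map_smul, cutoff_avgEmb hD hA hDA, smul_smul,
      mul_div_cancel₀ _ (RCLike.ofReal_ne_zero.2 hA.measureReal_pos.ne'), map_smul, smul_eq_mul,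
      RCLike.re_ofReal_mul]
    ring
  have hvA : v A < 0 := by
    rw [hcut hA subset_rfl]
    exact mul_neg_of_pos_of_neg hA.measureReal_pos (by linarith)
  obtain ⟨B, hBm, hBA, hBle, hBneg⟩ := SignedMeasure.exists_subset_restrict_nonpos hvA
  have hB₀ : μ B ≠ 0 := by
    intro hB₀
    have hcut₀ : cutoff 𝕜 B f = 0 := by
      rw [← norm_eq_zero, norm_cutoff_apply hBm, setIntegral_measure_zero _ hB₀]
    simp [hv hBm hBA, hcut₀, measureReal_def, hB₀] at hBneg
  refine ⟨B, hBA, hA.mono hBA hBm hB₀, fun D hDB hD ↦ ?_⟩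
  have hvD := (VectorMeasure.restrict_le_restrict_iff _ _ hBm).1 hBle hD.measurableSet hDB
  rw [hcut hD (hDB.trans hBA), zero_apply] at hvD
  exact sub_nonpos.1 (nonpos_of_mul_nonpos_right hvD hD.measureReal_pos)

variable {Y : Type*} [NormedAddCommGroup Y] [NormedSpace 𝕜 Y]

/-- The averages `x ↦ T(μ(D)⁻¹ 1_D x)` of `T` over the subsets `D` of `B` differ by at most `ε`. -/
def OscLE (T : Lp X 1 μ →L[𝕜] Y) (ε : ℝ) (B : Set Ω) : Prop :=
  ∀ D ⊆ B, ∀ D' ⊆ B, PosFinite μ D → PosFinite μ D' →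
    ‖T ∘L avgEmb 𝕜 μ D - T ∘L avgEmb 𝕜 μ D'‖ ≤ ε

/-- Every set of positive finite measure has such a subset on which the averages of `T` oscillate
arbitrarily little. -/
def LocallyAlmostConstant (T : Lp X 1 μ →L[𝕜] Y) : Prop :=
  ∀ ε > 0, ∀ A, PosFinite μ A → ∃ B ⊆ A, PosFinite μ B ∧ OscLE T ε B

variable {S T : Lp X 1 μ →L[𝕜] Y} {ε : ℝ}

theorem OscLE.mono (h : OscLE T ε B) (hDB : D ⊆ B) : OscLE T ε D :=
  fun E hE E' hE' ↦ h E (hE.trans hDB) E' (hE'.trans hDB)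

theorem LocallyAlmostConstant.add (hS : LocallyAlmostConstant S) (hT : LocallyAlmostConstant T) :
    LocallyAlmostConstant (S + T) := by
  intro ε hε A hA
  obtain ⟨B, hBA, hB, hSB⟩ := hS (ε / 2) (half_pos hε) A hA
  obtain ⟨C, hCB, hC, hTC⟩ := hT (ε / 2) (half_pos hε) B hB
  refine ⟨C, hCB.trans hBA, hC, fun D hD D' hD' hDμ hDμ' ↦ ?_⟩
  rw [ContinuousLinearMap.add_comp, ContinuousLinearMap.add_comp, add_sub_add_comm,
    ← add_halves ε]
  exact norm_add_le_of_le (hSB.mono hCB D hD D' hD' hDμ hDμ') (hTC D hD D' hD' hDμ hDμ')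

theorem locallyAlmostConstant_zero : LocallyAlmostConstant (0 : Lp X 1 μ →L[𝕜] Y) :=
  fun ε hε A hA ↦ ⟨A, subset_rfl, hA, fun D _ D' _ _ _ ↦ by simpa using hε.le⟩

theorem LocallyAlmostConstant.sum {ι : Type*} {s : Finset ι} {T : ι → Lp X 1 μ →L[𝕜] Y}
    (hT : ∀ i ∈ s, LocallyAlmostConstant (T i)) : LocallyAlmostConstant (∑ i ∈ s, T i) :=
  Finset.sum_induction T _ (fun _ _ ↦ .add) locallyAlmostConstant_zero hT

theorem LocallyAlmostConstant.smulRight {φ : Lp X 1 μ →L[𝕜] 𝕜} (hφ : LocallyAlmostConstant φ)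
    (y : Y) : LocallyAlmostConstant (φ.smulRight y) := by
  intro ε hε A hA
  obtain ⟨B, hBA, hB, hφB⟩ := hφ (ε / (‖y‖ + 1)) (by positivity) A hA
  refine ⟨B, hBA, hB, fun D hD D' hD' hDμ hDμ' ↦ ?_⟩
  have hcomp : φ.smulRight y ∘L avgEmb 𝕜 μ D - φ.smulRight y ∘L avgEmb 𝕜 μ D' =
      (φ ∘L avgEmb 𝕜 μ D - φ ∘L avgEmb 𝕜 μ D').smulRight y := by
    ext x
    simp [sub_smul]
  calc ‖φ.smulRight y ∘L avgEmb 𝕜 μ D - φ.smulRight y ∘L avgEmb 𝕜 μ D'‖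
      = ‖φ ∘L avgEmb 𝕜 μ D - φ ∘L avgEmb 𝕜 μ D'‖ * ‖y‖ := by
        rw [hcomp, ContinuousLinearMap.norm_smulRight_apply]
    _ ≤ ε / (‖y‖ + 1) * (‖y‖ + 1) := by
        gcongr
        · exact hφB D hD D' hD' hDμ hDμ'
        · linarith
    _ = ε := div_mul_cancel₀ _ (by positivity)

theorem norm_comp_avgEmb_le (T : Lp X 1 μ →L[𝕜] Y) (hD : PosFinite μ D) :
    ‖T ∘L avgEmb 𝕜 μ D‖ ≤ ‖T‖ :=
  (T.opNorm_comp_le _).trans (mul_le_of_le_one_right (norm_nonneg _) (norm_avgEmb_le hD))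

theorem locallyAlmostConstant_of_forall_norm_sub_le
    (h : ∀ ε > 0, ∃ S : Lp X 1 μ →L[𝕜] Y, LocallyAlmostConstant S ∧ ‖T - S‖ ≤ ε) :
    LocallyAlmostConstant T := by
  intro ε hε A hA
  obtain ⟨S, hS, hTS⟩ := h (ε / 3) (by positivity)
  obtain ⟨B, hBA, hB, hSB⟩ := hS (ε / 3) (by positivity) A hA
  refine ⟨B, hBA, hB, fun D hD D' hD' hDμ hDμ' ↦ ?_⟩
  have hD_le := (norm_comp_avgEmb_le (T - S) hDμ).trans hTS
  have hD'_le := (norm_comp_avgEmb_le (T - S) hDμ').trans hTS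
  calc ‖T ∘L avgEmb 𝕜 μ D - T ∘L avgEmb 𝕜 μ D'‖
      = ‖(T - S) ∘L avgEmb 𝕜 μ D + (S ∘L avgEmb 𝕜 μ D - S ∘L avgEmb 𝕜 μ D') -
          (T - S) ∘L avgEmb 𝕜 μ D'‖ := by
        rw [ContinuousLinearMap.sub_comp, ContinuousLinearMap.sub_comp]
        abel_nf
    _ ≤ ε / 3 + ε / 3 + ε / 3 :=
        norm_sub_le_of_le (norm_add_le_of_le hD_le (hSB D hD D' hD' hDμ hDμ')) hD'_le
    _ = ε := by ring

section SetIntegral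

variable [CompleteSpace X] [NormedSpace ℝ X] [IsScalarTower ℝ 𝕜 X]

variable (𝕜) in
/-- The operator `f ↦ ∫_B f dμ` on `L¹(μ, X)`. -/
def setIntegralCLM (B : Set Ω) : Lp X 1 μ →L[𝕜] X :=
  L1.integralCLM' 𝕜 ∘L cutoff 𝕜 B

theorem norm_setIntegralCLM_apply_le (B : Set Ω) (f : Lp X 1 μ) :
    ‖setIntegralCLM 𝕜 B f‖ ≤ ‖cutoff 𝕜 B f‖ := by
  rw [setIntegralCLM, ContinuousLinearMap.comp_apply, ← L1.integral_eq']
  exact L1.norm_integral_le _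

theorem setIntegralCLM_indicatorConstLp (hB : MeasurableSet B) (hD : MeasurableSet D)
    (hDμ : μ D ≠ ∞) (hBDμ : μ (B ∩ D) ≠ ∞) (x : X) :
    setIntegralCLM 𝕜 B (indicatorConstLp 1 hD hDμ x) = (μ.real (B ∩ D) : 𝕜) • x := by
  rw [setIntegralCLM, ContinuousLinearMap.comp_apply, ← L1.integral_eq',
    cutoff_indicatorConstLp hB hD hDμ hBDμ, L1.integral_eq_integral, integral_indicatorConstLp,
    RCLike.real_smul_eq_coe_smul (K := 𝕜)]

theorem setIntegralCLM_avgEmb (hB : PosFinite μ B) (x : X) :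
    setIntegralCLM 𝕜 B (avgEmb 𝕜 μ B x) = x := by
  rw [avgEmb_apply hB, map_smul, setIntegralCLM_indicatorConstLp hB.measurableSet _ _
    (by simpa using hB.ne_top), Set.inter_self,
    inv_smul_smul₀ (RCLike.ofReal_ne_zero.2 hB.measureReal_pos.ne')]

theorem setIntegralCLM_avgEmb_of_disjoint (hA : MeasurableSet A) (hB : PosFinite μ B)
    (hAB : Disjoint A B) (x : X) : setIntegralCLM 𝕜 A (avgEmb 𝕜 μ B x) = 0 := by
  rw [setIntegralCLM, ContinuousLinearMap.comp_apply, cutoff_avgEmb_of_disjoint hA hB hAB,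
    map_zero]

theorem OscLE.norm_apply_cutoff_sub_le (hT : OscLE T ε B) (hB : PosFinite μ B) (f : Lp X 1 μ) :
    ‖T (cutoff 𝕜 B f) - T (avgEmb 𝕜 μ B (setIntegralCLM 𝕜 B f))‖ ≤ ε * ‖cutoff 𝕜 B f‖ := by
  induction f using Lp.induction ENNReal.one_ne_top with
  | @indicatorConst c s hs hsμ =>
    have hBs : μ (B ∩ s) ≠ ∞ := ne_top_of_le_ne_top hB.ne_top (measure_mono Set.inter_subset_left)
    rw [Lp.simpleFunc.coe_indicatorConst, cutoff_indicatorConstLp hB.measurableSet hs _ hBs,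
      setIntegralCLM_indicatorConstLp hB.measurableSet hs _ hBs, norm_indicatorConstLp_one]
    by_cases h₀ : μ (B ∩ s) = 0
    · have hzero : indicatorConstLp 1 (hB.measurableSet.inter hs) hBs c = 0 := by
        rw [← norm_eq_zero, norm_indicatorConstLp_one, measureReal_def, h₀, ENNReal.toReal_zero,
          zero_mul]
      simp [hzero, measureReal_def, h₀]
    have hD : PosFinite μ (B ∩ s) := ⟨hB.measurableSet.inter hs, h₀, hBs⟩
    rw [indicatorConstLp_eq_smul_avgEmb (𝕜 := 𝕜) hD, map_smul, map_smul, map_smul, ← smul_sub,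
      norm_smul, RCLike.norm_ofReal, abs_of_pos hD.measureReal_pos, mul_left_comm]
    gcongr
    exact ContinuousLinearMap.le_of_opNorm_le _
      (hT _ Set.inter_subset_left _ subset_rfl hD hB) c
  | @add f g hf hg hfg ihf ihg =>
    rw [norm_cutoff_add_of_disjoint_support hB.measurableSet hf hg hfg, mul_add]
    simp only [map_add, add_sub_add_comm]
    exact norm_add_le_of_le ihf ihg
  | isClosed => exact isClosed_le (by fun_prop) (by fun_prop)

end SetIntegral

end LocallyAlmostConstant

section Dual

variable {𝕜 : Type*} [RCLike 𝕜] {X : Type*} [NormedAddCommGroup X] [NormedSpace 𝕜 X]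

theorem exists_norm_le_one_lt_re_apply {f : X →L[𝕜] 𝕜} {r : ℝ} (h : r < ‖f‖) :
    ∃ x, ‖x‖ ≤ 1 ∧ r < RCLike.re (f x) := by
  obtain ⟨x, hx, hr⟩ := f.exists_lt_apply_of_lt_opNorm h
  obtain ⟨c, hc, hfx⟩ := RCLike.exists_norm_eq_mul_self (f x)
  refine ⟨c • x, by rw [norm_smul, hc, one_mul]; exact hx.le, ?_⟩
  rwa [map_smul, smul_eq_mul, ← hfx, RCLike.ofReal_re]

theorem opNorm_le_of_forall_re_apply_le {f : X →L[𝕜] 𝕜} {C : ℝ}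
    (h : ∀ x, ‖x‖ ≤ 1 → RCLike.re (f x) ≤ C) : ‖f‖ ≤ C := by
  by_contra! hC
  obtain ⟨x, hx, hr⟩ := exists_norm_le_one_lt_re_apply hC
  exact (h x hx).not_gt hr

theorem re_apply_le_norm {f : X →L[𝕜] 𝕜} (hf : ‖f‖ ≤ 1) (x : X) : RCLike.re (f x) ≤ ‖x‖ :=
  (RCLike.re_le_norm _).trans (f.le_of_opNorm_le_of_le hf le_rfl |>.trans_eq (one_mul _))

variable (𝕜 X) in
/-- Near-norming slices of the dual ball are small up to finitely many coordinates: functionals of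
norm at most one that almost attain the value one at `x` and almost agree on a suitable finite set
are close in norm. -/
def HasWeakStarSmallSlices : Prop :=
  ∀ ε > 0, ∃ δ > 0, ∀ x : X, ‖x‖ ≤ 1 → ∃ F : Finset X, ∃ δ' > 0, ∀ ψ ψ' : X →L[𝕜] 𝕜,
    ‖ψ‖ ≤ 1 → ‖ψ'‖ ≤ 1 → 1 - δ ≤ RCLike.re (ψ x) → 1 - δ ≤ RCLike.re (ψ' x) →
    (∀ v ∈ F, ‖ψ v - ψ' v‖ ≤ δ') → ‖ψ - ψ'‖ ≤ ε

theorem HasWeakStarSmallSlices.exists_scaled (hX : HasWeakStarSmallSlices 𝕜 X) {ε : ℝ} (hε : 0 < ε)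
    (C : ℝ) :
    ∃ δ > 0, ∀ M > 0, M ≤ C → ∀ x : X, ‖x‖ ≤ 1 → ∃ F : Finset X, ∃ δ' > 0, ∀ ψ ψ' : X →L[𝕜] 𝕜,
      ‖ψ‖ ≤ M → ‖ψ'‖ ≤ M → M * (1 - δ) ≤ RCLike.re (ψ x) → M * (1 - δ) ≤ RCLike.re (ψ' x) →
      (∀ v ∈ F, ‖ψ v - ψ' v‖ ≤ δ') → ‖ψ - ψ'‖ ≤ ε := by
  obtain ⟨δ, hδ, hslice⟩ := hX (ε / (|C| + 1)) (by positivity)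
  refine ⟨δ, hδ, fun M hM hMC x hx ↦ ?_⟩
  obtain ⟨F, δ', hδ', hF⟩ := hslice x hx
  refine ⟨F, M * δ', by positivity, fun ψ ψ' hψ hψ' hψx hψ'x hψψ' ↦ ?_⟩
  have hnorm : ‖((M⁻¹ : ℝ) : 𝕜)‖ = M⁻¹ := by rw [RCLike.norm_ofReal, abs_of_pos (inv_pos.2 hM)]
  have hscaled := hF (((M⁻¹ : ℝ) : 𝕜) • ψ) (((M⁻¹ : ℝ) : 𝕜) • ψ')
    (by rwa [norm_smul, hnorm, inv_mul_le_one₀ hM])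
    (by rwa [norm_smul, hnorm, inv_mul_le_one₀ hM])
    (by rwa [smul_apply, smul_eq_mul, RCLike.re_ofReal_mul, le_inv_mul_iff₀ hM])
    (by rwa [smul_apply, smul_eq_mul, RCLike.re_ofReal_mul, le_inv_mul_iff₀ hM])
    fun v hv ↦ by
      rw [smul_apply, smul_apply, ← smul_sub, norm_smul, hnorm, inv_mul_le_iff₀ hM]
      exact hψψ' v hv
  have hsub : ((M⁻¹ : ℝ) : 𝕜) • ψ - ((M⁻¹ : ℝ) : 𝕜) • ψ' = ((M⁻¹ : ℝ) : 𝕜) • (ψ - ψ') := by module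
  rw [hsub, norm_smul, hnorm, inv_mul_le_iff₀ hM] at hscaled
  calc ‖ψ - ψ'‖ ≤ M * (ε / (|C| + 1)) := hscaled
    _ ≤ (|C| + 1) * (ε / (|C| + 1)) := by
        gcongr
        linarith [le_abs_self C]
    _ = ε := mul_div_cancel₀ _ (by positivity)

variable (X) in
/-- Uniform smoothness: the modulus of smoothness is `o(t)` as `t → 0`. -/
def UniformlySmooth : Prop :=
  ∀ ε > 0, ∃ t > 0, ∀ x y : X, ‖x‖ ≤ 1 → ‖y‖ ≤ t → ‖x + y‖ + ‖x - y‖ ≤ 2 + ε * t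

theorem UniformlySmooth.hasWeakStarSmallSlices (h : UniformlySmooth X) :
    HasWeakStarSmallSlices 𝕜 X := by
  intro ε hε
  obtain ⟨t, ht, hsmooth⟩ := h (ε / 2) (half_pos hε)
  refine ⟨t * ε / 4, by positivity, fun x hx ↦ ⟨∅, 1, one_pos, fun ψ ψ' hψ hψ' hψx hψ'x _ ↦ ?_⟩⟩
  refine opNorm_le_of_forall_re_apply_le fun y hy ↦ ?_
  have hty : ‖(t : 𝕜) • y‖ ≤ t := by
    rw [norm_smul, RCLike.norm_ofReal, abs_of_pos ht]
    exact mul_le_of_le_one_right ht.le hy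
  have hplus := re_apply_le_norm hψ (x + (t : 𝕜) • y)
  have hminus := re_apply_le_norm hψ' (x - (t : 𝕜) • y)
  rw [map_add, map_smul, smul_eq_mul, map_add, RCLike.re_ofReal_mul] at hplus
  rw [map_sub, map_smul, smul_eq_mul, map_sub, RCLike.re_ofReal_mul] at hminus
  rw [sub_apply, map_sub]
  refine le_of_mul_le_mul_left ?_ ht
  linarith [hsmooth x _ hx hty]

end Dual

section Functionals

variable {𝕜 : Type*} [RCLike 𝕜] {X : Type*} [NormedAddCommGroup X] [NormedSpace 𝕜 X]
  {Ω : Type*} [MeasurableSpace Ω] {μ : Measure Ω} {A : Set Ω} {δ : ℝ}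

theorem exists_subset_almost_max {g : Set Ω → ℝ} {C : ℝ} (hg : ∀ D, PosFinite μ D → g D ≤ C)
    (hA : PosFinite μ A) (hδ : 0 < δ) :
    ∃ D ⊆ A, PosFinite μ D ∧ ∃ M ≤ C, M - δ < g D ∧ ∀ E ⊆ A, PosFinite μ E → g E ≤ M := by
  set S : Set ℝ := g '' {D | D ⊆ A ∧ PosFinite μ D}
  have hne : S.Nonempty := ⟨g A, A, ⟨subset_rfl, hA⟩, rfl⟩
  have hle : ∀ r ∈ S, r ≤ C := by
    rintro _ ⟨D, ⟨-, hD⟩, rfl⟩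
    exact hg D hD
  obtain ⟨_, ⟨D, ⟨hDA, hD⟩, rfl⟩, hMD⟩ := exists_lt_of_lt_csSup hne (sub_lt_self (sSup S) hδ)
  exact ⟨D, hDA, hD, sSup S, csSup_le hne hle, hMD,
    fun E hEA hE ↦ le_csSup ⟨C, hle⟩ ⟨E, ⟨hEA, hE⟩, rfl⟩⟩

theorem exists_subset_forall_almost_norming (φ : Lp X 1 μ →L[𝕜] 𝕜) (hA : PosFinite μ A)
    (hδ : 0 < δ) :
    ∃ B ⊆ A, PosFinite μ B ∧ ∃ M ≤ ‖φ‖, ∃ x : X, ‖x‖ ≤ 1 ∧ ∀ D ⊆ B, PosFinite μ D →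
      ‖φ ∘L avgEmb 𝕜 μ D‖ ≤ M ∧ M - δ ≤ RCLike.re (φ (avgEmb 𝕜 μ D x)) := by
  obtain ⟨D, hDA, hD, M, hM, hMD, hmax⟩ :=
    exists_subset_almost_max (fun _ ↦ norm_comp_avgEmb_le φ) hA hδ
  obtain ⟨x, hx, hMx⟩ := exists_norm_le_one_lt_re_apply hMD
  obtain ⟨B, hBD, hB, hle⟩ := exists_subset_forall_le_re_avgEmb φ hD hMx
  exact ⟨B, hBD.trans hDA, hB, M, hM, x, hx,
    fun E hEB hE ↦ ⟨hmax E (hEB.trans (hBD.trans hDA)) hE, hle E hEB hE⟩⟩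

theorem exists_subset_forall_abs_re_avgEmb_sub_le (φ : Lp X 1 μ →L[𝕜] 𝕜) (x : X)
    (hA : PosFinite μ A) (hδ : 0 < δ) :
    ∃ B ⊆ A, PosFinite μ B ∧ ∀ D ⊆ B, ∀ D' ⊆ B, PosFinite μ D → PosFinite μ D' →
      |RCLike.re (φ (avgEmb 𝕜 μ D x)) - RCLike.re (φ (avgEmb 𝕜 μ D' x))| ≤ δ := by
  obtain ⟨D, hDA, hD, M, -, hMD, hmax⟩ :=
    exists_subset_almost_max (g := fun D ↦ RCLike.re (φ (avgEmb 𝕜 μ D x)))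
      (fun D hD ↦ (RCLike.re_le_norm _).trans
        ((φ ∘L avgEmb 𝕜 μ D).le_of_opNorm_le (norm_comp_avgEmb_le φ hD) x)) hA hδ
  obtain ⟨B, hBD, hB, hle⟩ := exists_subset_forall_le_re_avgEmb φ hD hMD
  have hBA := hBD.trans hDA
  refine ⟨B, hBA, hB, fun E hE E' hE' hEμ hEμ' ↦ abs_le.2 ⟨?_, ?_⟩⟩
  · linarith [hle E hE hEμ, hmax E' (hE'.trans hBA) hEμ']
  · linarith [hle E' hE' hEμ', hmax E (hE.trans hBA) hEμ]

theorem exists_subset_forall_norm_avgEmb_sub_le (φ : Lp X 1 μ →L[𝕜] 𝕜) (x : X)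
    (hA : PosFinite μ A) (hδ : 0 < δ) :
    ∃ B ⊆ A, PosFinite μ B ∧ ∀ D ⊆ B, ∀ D' ⊆ B, PosFinite μ D → PosFinite μ D' →
      ‖φ (avgEmb 𝕜 μ D x) - φ (avgEmb 𝕜 μ D' x)‖ ≤ δ := by
  obtain ⟨B, hBA, hB, hre⟩ := exists_subset_forall_abs_re_avgEmb_sub_le φ x hA (half_pos hδ)
  obtain ⟨C, hCB, hC, him⟩ :=
    exists_subset_forall_abs_re_avgEmb_sub_le φ ((RCLike.I : 𝕜) • x) hB (half_pos hδ)
  refine ⟨C, hCB.trans hBA, hC, fun D hD D' hD' hDμ hDμ' ↦ ?_⟩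
  have hre' := hre D (hD.trans hCB) D' (hD'.trans hCB) hDμ hDμ'
  have him' := him D hD D' hD' hDμ hDμ'
  simp only [map_smul, smul_eq_mul, RCLike.I_mul_re] at him'
  rw [neg_sub_neg, abs_sub_comm] at him'
  set z := φ (avgEmb 𝕜 μ D x) - φ (avgEmb 𝕜 μ D' x) with hz
  rw [← map_sub, ← hz] at hre' him'
  calc ‖z‖ = ‖(RCLike.re z : 𝕜) + RCLike.im z * RCLike.I‖ := by rw [RCLike.re_add_im]
    _ ≤ |RCLike.re z| + |RCLike.im z| * 1 := by
        refine norm_add_le_of_le (RCLike.norm_ofReal _).le ?_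
        rw [norm_mul, RCLike.norm_ofReal]
        gcongr
        rw [RCLike.norm_I]
        split_ifs <;> norm_num
    _ ≤ δ := by linarith

theorem exists_subset_forall_mem_finset_norm_avgEmb_sub_le (φ : Lp X 1 μ →L[𝕜] 𝕜) (F : Finset X)
    (hA : PosFinite μ A) (hδ : 0 < δ) :
    ∃ B ⊆ A, PosFinite μ B ∧ ∀ D ⊆ B, ∀ D' ⊆ B, PosFinite μ D → PosFinite μ D' →
      ∀ v ∈ F, ‖φ (avgEmb 𝕜 μ D v) - φ (avgEmb 𝕜 μ D' v)‖ ≤ δ := by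
  classical
  induction F using Finset.induction_on with
  | empty => exact ⟨A, subset_rfl, hA, by simp⟩
  | insert v F _ ih =>
    obtain ⟨B, hBA, hB, hF⟩ := ih
    obtain ⟨C, hCB, hC, hv⟩ := exists_subset_forall_norm_avgEmb_sub_le φ v hB hδ
    refine ⟨C, hCB.trans hBA, hC, fun D hD D' hD' hDμ hDμ' ↦ ?_⟩
    rw [Finset.forall_mem_insert]
    exact ⟨hv D hD D' hD' hDμ hDμ', hF D (hD.trans hCB) D' (hD'.trans hCB) hDμ hDμ'⟩

theorem HasWeakStarSmallSlices.locallyAlmostConstant (hX : HasWeakStarSmallSlices 𝕜 X)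
    (φ : Lp X 1 μ →L[𝕜] 𝕜) : LocallyAlmostConstant φ := by
  intro ε hε A hA
  obtain ⟨δ, hδ, hslice⟩ := hX.exists_scaled hε ‖φ‖
  obtain ⟨B, hBA, hB, M, hMφ, x, hx, hpeak⟩ :=
    exists_subset_forall_almost_norming φ hA (δ := ε / 2 * δ) (by positivity)
  obtain hMε | hMε := le_or_gt M (ε / 2)
  · refine ⟨B, hBA, hB, fun D hD D' hD' hDμ hDμ' ↦ (norm_sub_le _ _).trans ?_⟩
    linarith [(hpeak D hD hDμ).1, (hpeak D' hD' hDμ').1]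
  obtain ⟨F, δ', hδ', hF⟩ := hslice M ((half_pos hε).trans hMε) hMφ x hx
  obtain ⟨C, hCB, hC, hCF⟩ := exists_subset_forall_mem_finset_norm_avgEmb_sub_le φ F hB hδ'
  have hpeak' {D : Set Ω} (hD : D ⊆ C) (hDμ : PosFinite μ D) :
      M * (1 - δ) ≤ RCLike.re (φ (avgEmb 𝕜 μ D x)) :=
    le_trans (by nlinarith) (hpeak D (hD.trans hCB) hDμ).2
  exact ⟨C, hCB.trans hBA, hC, fun D hD D' hD' hDμ hDμ' ↦
    hF _ _ (hpeak D (hD.trans hCB) hDμ).1 (hpeak D' (hD'.trans hCB) hDμ').1 (hpeak' hD hDμ)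
      (hpeak' hD' hDμ') (hCF D hD D' hD' hDμ hDμ')⟩

end Functionals

section CompactOperators

variable {𝕜 : Type*} [RCLike 𝕜] {E : Type*} [NormedAddCommGroup E] [NormedSpace 𝕜 E]
  {Y : Type*} [NormedAddCommGroup Y] [InnerProductSpace 𝕜 Y]

theorem exists_finiteDimensional_norm_sub_starProjection_comp_le {T : E →L[𝕜] Y}
    (hT : IsCompactOperator T) {ε : ℝ} (hε : 0 < ε) :
    ∃ V : Submodule 𝕜 Y, ∃ _ : FiniteDimensional 𝕜 V, ‖T - V.starProjection ∘L T‖ ≤ ε := by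
  have hball : TotallyBounded (T '' Metric.closedBall 0 1) :=
    (hT.isCompact_closure_image_closedBall 1).totallyBounded.subset subset_closure
  obtain ⟨t, ht, hcover⟩ := Metric.totallyBounded_iff.1 hball ε hε
  let V : Submodule 𝕜 Y := Submodule.span 𝕜 t
  have : FiniteDimensional 𝕜 V := FiniteDimensional.span_of_finite 𝕜 ht
  refine ⟨V, this, ContinuousLinearMap.opNorm_le_of_unit_norm hε.le fun f hf ↦ ?_⟩
  obtain ⟨y, hy, hfy⟩ := Set.mem_iUnion₂.1 (hcover ⟨f, by simpa using hf.le, rfl⟩)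
  rw [sub_apply, ContinuousLinearMap.comp_apply, V.starProjection_minimal]
  exact (ciInf_le ⟨0, by rintro _ ⟨z, rfl⟩; positivity⟩
    (⟨y, Submodule.subset_span hy⟩ : V)).trans (mem_ball_iff_norm.1 hfy).le

variable {X : Type*} [NormedAddCommGroup X] [NormedSpace 𝕜 X] {Ω : Type*} [MeasurableSpace Ω]
  {μ : Measure Ω}

theorem HasWeakStarSmallSlices.locallyAlmostConstant_of_isCompactOperator
    (hX : HasWeakStarSmallSlices 𝕜 X) {T : Lp X 1 μ →L[𝕜] Y} (hT : IsCompactOperator T) :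
    LocallyAlmostConstant T := by
  refine locallyAlmostConstant_of_forall_norm_sub_le fun ε hε ↦ ?_
  obtain ⟨V, _, hV⟩ := exists_finiteDimensional_norm_sub_starProjection_comp_le hT hε
  refine ⟨_, ?_, hV⟩
  let b := stdOrthonormalBasis 𝕜 V
  have hsum : V.starProjection ∘L T = ∑ i, (innerSL 𝕜 (b i : Y) ∘L T).smulRight (b i : Y) := by
    ext f
    rw [b.starProjection_eq_sum_rankOne]
    simp
  rw [hsum]
  exact .sum fun i _ ↦ (hX.locallyAlmostConstant _).smulRight _

end CompactOperators

section StepFunctions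

variable {𝕜 : Type*} [RCLike 𝕜] {X : Type*} [NormedAddCommGroup X] [NormedSpace 𝕜 X]
  {Ω : Type*} [MeasurableSpace Ω] {μ : Measure Ω} {P : Set Ω → Prop}

theorem exists_dual_eq_zero_on_of_notMem {W : Submodule 𝕜 X} (hW : IsClosed (W : Set X)) {x : X}
    (hx : x ∉ W) : ∃ φ : X →L[𝕜] 𝕜, (∀ w ∈ W, φ w = 0) ∧ 0 < RCLike.re (φ x) := by
  have : IsClosed (W : Set X) := hW
  have hmk : W.mkQL x ≠ 0 := by simpa using hx
  obtain ⟨φ, -, hφ⟩ := exists_dual_vector 𝕜 _ (norm_ne_zero_iff.2 hmk)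
  refine ⟨φ ∘L W.mkQL, fun w hw ↦ ?_, ?_⟩
  · have : W.mkQL w = 0 := by simpa using hw
    rw [ContinuousLinearMap.comp_apply, this, map_zero]
  · rw [ContinuousLinearMap.comp_apply, hφ, RCLike.ofReal_re]
    exact norm_pos_iff.2 hmk

variable (𝕜 X μ P) in
/-- The span of the step functions `1_B x` with `B` of positive finite measure satisfying `P`. -/
def stepSpan : Submodule 𝕜 (Lp X 1 μ) :=
  Submodule.span 𝕜 {f | ∃ B x, PosFinite μ B ∧ P B ∧ avgEmb 𝕜 μ B x = f}

theorem avgEmb_mem_topologicalClosure_stepSpan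
    (hP : ∀ A, PosFinite μ A → ∃ B ⊆ A, PosFinite μ B ∧ P B) {A : Set Ω} (hA : PosFinite μ A)
    (x : X) : avgEmb 𝕜 μ A x ∈ (stepSpan 𝕜 X μ P).topologicalClosure := by
  by_contra hx
  obtain ⟨φ, hφ, hφx⟩ :=
    exists_dual_eq_zero_on_of_notMem (Submodule.isClosed_topologicalClosure _) hx
  obtain ⟨B, -, hB, hφB⟩ := exists_subset_forall_le_re_avgEmb φ hA (half_lt_self hφx)
  obtain ⟨D, hDB, hD, hPD⟩ := hP B hB
  have hzero : φ (avgEmb 𝕜 μ D x) = 0 :=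
    hφ _ (Submodule.le_topologicalClosure _ (Submodule.subset_span ⟨D, x, hD, hPD, rfl⟩))
  have hpos := hφB D hDB hD
  rw [hzero, map_zero] at hpos
  linarith

theorem topologicalClosure_stepSpan_eq_top
    (hP : ∀ A, PosFinite μ A → ∃ B ⊆ A, PosFinite μ B ∧ P B) :
    (stepSpan 𝕜 X μ P).topologicalClosure = ⊤ := by
  refine eq_top_iff.2 fun f _ ↦ ?_
  induction f using Lp.induction ENNReal.one_ne_top with
  | @indicatorConst c A hA hAμ =>
    rw [Lp.simpleFunc.coe_indicatorConst]
    by_cases h₀ : μ A = 0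
    · have hzero : indicatorConstLp 1 hA hAμ.ne c = 0 := by
        rw [← norm_eq_zero, norm_indicatorConstLp_one, measureReal_def, h₀, ENNReal.toReal_zero,
          zero_mul]
      rw [hzero]
      exact zero_mem _
    · have hA' : PosFinite μ A := ⟨hA, h₀, hAμ.ne⟩
      rw [indicatorConstLp_eq_smul_avgEmb (𝕜 := 𝕜) hA']
      exact Submodule.smul_mem _ _ (avgEmb_mem_topologicalClosure_stepSpan hP hA' c)
  | add _ _ _ ihf ihg => exact add_mem (ihf trivial) (ihg trivial)
  | isClosed => simp

theorem exists_simpleFunc_avgEmb {B : Set Ω} (hB : PosFinite μ B) (hPB : P B) (x : X) :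
    ∃ (ι : Type) (l : SimpleFunc Ω ι) (F : ι → X),
      (∀ i, F i ≠ 0 → μ (l ⁻¹' {i}) ≠ ∞ ∧ P (l ⁻¹' {i})) ∧ avgEmb 𝕜 μ B x =ᵐ[μ] F ∘ l := by
  let l : SimpleFunc Ω Bool := .piecewise B hB.measurableSet (.const Ω true) (.const Ω false)
  have hl : l ⁻¹' {true} = B := by ext ω; simp [l, Set.piecewise]
  refine ⟨Bool, l, fun b ↦ if b then ((μ.real B)⁻¹ : 𝕜) • x else 0, ?_, ?_⟩
  · rintro (_ | _) h
    · simp at h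
    · rw [hl]; exact ⟨hB.ne_top, hPB⟩
  · rw [avgEmb_apply hB, ← indicatorConstLp_const_smul]
    filter_upwards [indicatorConstLp_coeFn (p := 1) (hs := hB.measurableSet) (hμs := hB.ne_top)
      (c := (μ.real B : 𝕜)⁻¹ • x)] with ω hω
    rw [hω]
    by_cases h : ω ∈ B <;> simp [l, h]

theorem exists_simpleFunc_of_mem_stepSpan (hP : ∀ ⦃B D⦄, D ⊆ B → P B → P D)
    {g : Lp X 1 μ} (hg : g ∈ stepSpan 𝕜 X μ P) :
    ∃ (ι : Type) (l : SimpleFunc Ω ι) (F : ι → X),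
      (∀ i, F i ≠ 0 → μ (l ⁻¹' {i}) ≠ ∞ ∧ P (l ⁻¹' {i})) ∧ g =ᵐ[μ] F ∘ l := by
  induction hg using Submodule.span_induction with
  | mem f hf =>
    obtain ⟨B, x, hB, hPB, rfl⟩ := hf
    exact exists_simpleFunc_avgEmb hB hPB x
  | zero => exact ⟨Unit, .const Ω (), 0, by simp, Lp.coeFn_zero _ _ _⟩
  | add f g _ _ hf hg =>
    obtain ⟨ι, l, F, hl, hF⟩ := hf
    obtain ⟨κ, m, G, hm, hG⟩ := hg
    refine ⟨ι × κ, l.pair m, fun p ↦ F p.1 + G p.2, ?_, ?_⟩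
    · rintro ⟨i, j⟩ h
      rw [SimpleFunc.pair_preimage_singleton]
      by_cases hi : F i = 0
      · have hj := hm j fun hj ↦ h (by simp [hi, hj])
        exact ⟨ne_top_of_le_ne_top hj.1 (measure_mono Set.inter_subset_right),
          hP Set.inter_subset_right hj.2⟩
      · exact ⟨ne_top_of_le_ne_top (hl i hi).1 (measure_mono Set.inter_subset_left),
          hP Set.inter_subset_left (hl i hi).2⟩
    · filter_upwards [Lp.coeFn_add f g, hF, hG] with ω hfg hfω hgω
      rw [hfg, Pi.add_apply, hfω, hgω]
      rfl
  | smul c f _ hf =>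
    obtain ⟨ι, l, F, hl, hF⟩ := hf
    refine ⟨ι, l, c • F, fun i hi ↦ hl i fun h ↦ hi (by simp [h]), ?_⟩
    filter_upwards [Lp.coeFn_smul c f, hF] with ω hcf hfω
    rw [hcf, Pi.smul_apply, hfω]
    rfl

theorem cutoff_ae_eq_indicator_of_ae_eq_comp {ι : Type*} {l : SimpleFunc Ω ι} {F : ι → X}
    {g : Lp X 1 μ} (hg : g =ᵐ[μ] F ∘ l) (i : ι) :
    cutoff 𝕜 (l ⁻¹' {i}) g =ᵐ[μ] (l ⁻¹' {i}).indicator fun _ ↦ F i := by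
  filter_upwards [cutoff_coeFn (𝕜 := 𝕜) (l.measurableSet_preimage {i}) g, hg] with ω hcut hgω
  rw [hcut]
  by_cases h : l ω = i <;> simp [h, hgω]

theorem exists_eq_sum_avgEmb_of_mem_stepSpan (hP : ∀ ⦃B D⦄, D ⊆ B → P B → P D)
    {g : Lp X 1 μ} (hg : g ∈ stepSpan 𝕜 X μ P) :
    ∃ (ι : Type) (s : Finset ι) (B : ι → Set Ω) (x : ι → X), (∀ i, MeasurableSet (B i)) ∧
      Pairwise (Function.onFun Disjoint B) ∧ (∀ i ∈ s, PosFinite μ (B i) ∧ P (B i)) ∧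
      g = ∑ i ∈ s, avgEmb 𝕜 μ (B i) (x i) := by
  classical
  obtain ⟨ι, l, F, hF, hgF⟩ := exists_simpleFunc_of_mem_stepSpan hP hg
  let B (i : ι) : Set Ω := l ⁻¹' {i}
  have hB (i : ι) : MeasurableSet (B i) := l.measurableSet_preimage {i}
  have hdisj : Pairwise (Function.onFun Disjoint B) := fun i j hij ↦
    (Set.disjoint_singleton.2 hij).preimage l
  have hcover : ⋃ i ∈ l.range, B i = Set.univ := by
    ext ω
    simp [B]
  refine ⟨ι, l.range.filter fun i ↦ F i ≠ 0 ∧ μ (B i) ≠ 0, B, fun i ↦ (μ.real (B i) : 𝕜) • F i, hB,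
    hdisj, fun i hi ↦ ?_, ?_⟩
  · obtain ⟨-, hFi, hBi⟩ := Finset.mem_filter.1 hi
    exact ⟨⟨hB i, hBi, (hF i hFi).1⟩, (hF i hFi).2⟩
  calc g = cutoff 𝕜 (⋃ i ∈ l.range, B i) g := by rw [hcover, cutoff_univ]; rfl
    _ = ∑ i ∈ l.range, cutoff 𝕜 (B i) g := cutoff_biUnion hB hdisj _ g
    _ = _ := ?_
  rw [Finset.sum_filter]
  refine Finset.sum_congr rfl fun i _ ↦ ?_
  split_ifs with hi
  · have hBi : PosFinite μ (B i) := ⟨hB i, hi.2, (hF i hi.1).1⟩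
    rw [map_smul, ← indicatorConstLp_eq_smul_avgEmb hBi]
    exact Lp.ext ((cutoff_ae_eq_indicator_of_ae_eq_comp hgF i).trans indicatorConstLp_coeFn.symm)
  · rcases not_and_or.1 hi with hi | hi
    · refine (Lp.eq_zero_iff_ae_eq_zero).2 ((cutoff_ae_eq_indicator_of_ae_eq_comp hgF i).trans ?_)
      rw [not_not.1 hi, Set.indicator_zero]
      rfl
    · rw [← norm_eq_zero, norm_cutoff_apply (hB i), setIntegral_measure_zero _ (not_not.1 hi)]

theorem LocallyAlmostConstant.exists_norm_sub_sum_avgEmb_lt {Y : Type*} [NormedAddCommGroup Y]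
    [NormedSpace 𝕜 Y] {T : Lp X 1 μ →L[𝕜] Y} (hT : LocallyAlmostConstant T) {δ ε : ℝ}
    (hδ : 0 < δ) (hε : 0 < ε) (f : Lp X 1 μ) :
    ∃ (ι : Type) (s : Finset ι) (B : ι → Set Ω) (x : ι → X), (∀ i, MeasurableSet (B i)) ∧
      Pairwise (Function.onFun Disjoint B) ∧ (∀ i ∈ s, PosFinite μ (B i) ∧ OscLE T ε (B i)) ∧
      ‖f - ∑ i ∈ s, avgEmb 𝕜 μ (B i) (x i)‖ < δ := by
  have hf : f ∈ (stepSpan 𝕜 X μ (OscLE T ε)).topologicalClosure := by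
    rw [topologicalClosure_stepSpan_eq_top (hT ε hε)]
    trivial
  obtain ⟨g, hg, hfg⟩ := Metric.mem_closure_iff.1 hf δ hδ
  obtain ⟨ι, s, B, x, hB, hdisj, hs, rfl⟩ :=
    exists_eq_sum_avgEmb_of_mem_stepSpan (fun _ _ hDB h ↦ h.mono hDB) hg
  exact ⟨ι, s, B, x, hB, hdisj, hs, by rwa [← dist_eq_norm]⟩

end StepFunctions

section Glue

variable {𝕜 : Type*} [RCLike 𝕜] {X : Type*} [NormedAddCommGroup X] [NormedSpace 𝕜 X]
  {Ω : Type*} [MeasurableSpace Ω] {μ : Measure Ω}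
  {ι : Type*} {s : Finset ι} {B : ι → Set Ω}

theorem norm_sum_avgEmb (hB : ∀ i, MeasurableSet (B i))
    (hdisj : Pairwise (Function.onFun Disjoint B)) (hs : ∀ i ∈ s, PosFinite μ (B i)) (x : ι → X) :
    ‖∑ i ∈ s, avgEmb 𝕜 μ (B i) (x i)‖ = ∑ i ∈ s, ‖x i‖ := by
  have hcut (j : ι) (hj : j ∈ s) :
      cutoff 𝕜 (B j) (∑ i ∈ s, avgEmb 𝕜 μ (B i) (x i)) = avgEmb 𝕜 μ (B j) (x j) := by
    rw [map_sum, Finset.sum_eq_single_of_mem j hj, cutoff_avgEmb_self (hs j hj)]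
    exact fun i hi hij ↦ cutoff_avgEmb_of_disjoint (hB j) (hs i hi) (hdisj hij.symm) _
  have hsupp : cutoff 𝕜 (⋃ j ∈ s, B j) (∑ i ∈ s, avgEmb 𝕜 μ (B i) (x i)) =
      ∑ i ∈ s, avgEmb 𝕜 μ (B i) (x i) := by
    rw [cutoff_biUnion hB hdisj, Finset.sum_congr rfl hcut]
  rw [← hsupp, norm_cutoff_biUnion hB hdisj]
  exact Finset.sum_congr rfl fun i hi ↦ by rw [hcut i hi, norm_avgEmb_apply (hs i hi)]

theorem norm_sub_sum_cutoff_add (hB : ∀ i, MeasurableSet (B i))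
    (hdisj : Pairwise (Function.onFun Disjoint B)) (f : Lp X 1 μ) :
    ‖f - ∑ i ∈ s, cutoff 𝕜 (B i) f‖ + ∑ i ∈ s, ‖cutoff 𝕜 (B i) f‖ = ‖f‖ := by
  simpa [cutoff_univ] using norm_cutoff_sub_sum_cutoff_add (𝕜 := 𝕜) hB hdisj .univ
    (fun i ↦ Set.subset_univ (B i)) s f

variable [CompleteSpace X] [NormedSpace ℝ X] [IsScalarTower ℝ 𝕜 X]
  {Y : Type*} [NormedAddCommGroup Y] [NormedSpace 𝕜 Y]
  {T : Lp X 1 μ →L[𝕜] Y} {S : ι → X →L[𝕜] Y} {ε : ℝ}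

variable (s B T S) in
/-- The operator that agrees with `T` off the sets `B i`, `i ∈ s`, and sends `f` supported on `B i`
to `S i (∫ f)`. -/
def glue : Lp X 1 μ →L[𝕜] Y :=
  T + ∑ i ∈ s, (S i ∘L setIntegralCLM 𝕜 (B i) - T ∘L cutoff 𝕜 (B i))

theorem glue_apply (f : Lp X 1 μ) : glue s B T S f =
    T (f - ∑ i ∈ s, cutoff 𝕜 (B i) f) + ∑ i ∈ s, S i (setIntegralCLM 𝕜 (B i) f) := by
  simp only [glue, add_apply, sum_apply, sub_apply, ContinuousLinearMap.comp_apply,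
    Finset.sum_sub_distrib, map_sub, map_sum]
  abel

theorem isCompactOperator_glue (hT : IsCompactOperator T)
    (hS : ∀ i ∈ s, IsCompactOperator (S i)) : IsCompactOperator (glue s B T S) := by
  refine hT.add (Submodule.sum_mem (compactOperator (RingHom.id 𝕜) (Lp X 1 μ) Y) fun i hi ↦ ?_)
  exact ((hS i hi).comp_clm _).sub (hT.comp_clm _)

theorem glue_apply_avgEmb (hB : ∀ i, MeasurableSet (B i))
    (hdisj : Pairwise (Function.onFun Disjoint B)) {i : ι} (hi : i ∈ s) (hBi : PosFinite μ (B i))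
    (x : X) : glue s B T S (avgEmb 𝕜 μ (B i) x) = S i x := by
  rw [glue_apply, Finset.sum_eq_single_of_mem i hi, Finset.sum_eq_single_of_mem i hi,
    cutoff_avgEmb_self hBi, sub_self, map_zero, zero_add, setIntegralCLM_avgEmb hBi]
  · intro j _ hji
    rw [setIntegralCLM_avgEmb_of_disjoint (hB j) hBi (hdisj hji), map_zero]
  · exact fun j _ hji ↦ cutoff_avgEmb_of_disjoint (hB j) hBi (hdisj hji) x

theorem norm_glue_le_one (hB : ∀ i, MeasurableSet (B i))
    (hdisj : Pairwise (Function.onFun Disjoint B)) (hT : ‖T‖ ≤ 1) (hS : ∀ i ∈ s, ‖S i‖ ≤ 1) :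
    ‖glue s B T S‖ ≤ 1 := by
  refine ContinuousLinearMap.opNorm_le_bound _ zero_le_one fun f ↦ ?_
  rw [glue_apply, one_mul, ← norm_sub_sum_cutoff_add (𝕜 := 𝕜) (s := s) hB hdisj f]
  refine norm_add_le_of_le ((T.le_of_opNorm_le hT _).trans_eq (one_mul _)) ?_
  refine norm_sum_le_of_le s fun i hi ↦ ?_
  calc ‖S i (setIntegralCLM 𝕜 (B i) f)‖ ≤ 1 * ‖setIntegralCLM 𝕜 (B i) f‖ :=
        (S i).le_of_opNorm_le (hS i hi) _
    _ ≤ ‖cutoff 𝕜 (B i) f‖ := by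
        rw [one_mul]
        exact norm_setIntegralCLM_apply_le _ _

theorem norm_glue_sub_le (hB : ∀ i, MeasurableSet (B i))
    (hdisj : Pairwise (Function.onFun Disjoint B)) (hε : 0 ≤ ε) (hs : ∀ i ∈ s, PosFinite μ (B i))
    (hosc : ∀ i ∈ s, OscLE T ε (B i)) (hS : ∀ i ∈ s, ‖S i - T ∘L avgEmb 𝕜 μ (B i)‖ ≤ ε) :
    ‖glue s B T S - T‖ ≤ 2 * ε := by
  refine ContinuousLinearMap.opNorm_le_bound _ (by positivity) fun f ↦ ?_
  have hpiece (i : ι) (hi : i ∈ s) :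
      ‖S i (setIntegralCLM 𝕜 (B i) f) - T (cutoff 𝕜 (B i) f)‖ ≤ 2 * ε * ‖cutoff 𝕜 (B i) f‖ := by
    set x := setIntegralCLM 𝕜 (B i) f
    calc ‖S i x - T (cutoff 𝕜 (B i) f)‖
        = ‖(S i - T ∘L avgEmb 𝕜 μ (B i)) x - (T (cutoff 𝕜 (B i) f) - T (avgEmb 𝕜 μ (B i) x))‖ := by
          simp only [sub_apply, ContinuousLinearMap.comp_apply, sub_sub_sub_cancel_right]
      _ ≤ ε * ‖x‖ + ε * ‖cutoff 𝕜 (B i) f‖ :=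
          norm_sub_le_of_le (ContinuousLinearMap.le_of_opNorm_le _ (hS i hi) x)
            ((hosc i hi).norm_apply_cutoff_sub_le (hs i hi) f)
      _ ≤ 2 * ε * ‖cutoff 𝕜 (B i) f‖ := by
          nlinarith [norm_setIntegralCLM_apply_le (𝕜 := 𝕜) (B i) f]
  calc ‖(glue s B T S - T) f‖
      ≤ ∑ i ∈ s, 2 * ε * ‖cutoff 𝕜 (B i) f‖ := by
        rw [glue, add_sub_cancel_left, sum_apply]
        exact norm_sum_le_of_le s hpiece
    _ ≤ 2 * ε * ‖f‖ := by
        rw [← Finset.mul_sum, ← norm_sub_sum_cutoff_add (𝕜 := 𝕜) (s := s) hB hdisj f]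
        gcongr
        exact le_add_of_nonneg_left (norm_nonneg _)

end Glue

section PointedProperty

variable {𝕜 : Type*} [RCLike 𝕜] {X : Type*} [NormedAddCommGroup X] [NormedSpace 𝕜 X]
  {Y : Type*} [NormedAddCommGroup Y] [InnerProductSpace 𝕜 Y]

open scoped InnerProductSpace

variable (𝕜 X Y) in
/-- A Bishop–Phelps–Bollobás property for compact operators in which the value `y` at the new point
is prescribed, with the parameters `ε` and `η` fixed. Prescribing `y` is what allows corrections
made on disjoint sets to add up in norm. -/
def PointedBPBpCompactAt (ε η : ℝ) : Prop :=
  ∀ (y : Y) (R : X →L[𝕜] Y) (x : X), ‖y‖ = 1 → IsCompactOperator R → ‖R‖ ≤ 1 → ‖x‖ = 1 →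
    1 - η < RCLike.re ⟪y, R x⟫_𝕜 →
      ∃ (S : X →L[𝕜] Y) (z : X), IsCompactOperator S ∧ ‖S‖ ≤ 1 ∧ ‖z‖ = 1 ∧ S z = y ∧
        ‖S - R‖ ≤ ε ∧ ‖z - x‖ ≤ ε

variable (𝕜 X Y) in
/-- The Bishop–Phelps–Bollobás property for compact operators with prescribed value at the new
point. -/
def PointedBPBpCompact : Prop :=
  ∀ ε : ℝ, 0 < ε → ∃ η : ℝ, 0 < η ∧ PointedBPBpCompactAt 𝕜 X Y ε η

theorem PointedBPBpCompactAt.exists_scaled {ε η : ℝ} (h : PointedBPBpCompactAt 𝕜 X Y ε η) {y : Y}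
    {R : X →L[𝕜] Y} {x : X} (hy : ‖y‖ = 1) (hR : IsCompactOperator R) (hR1 : ‖R‖ ≤ 1)
    (hx : (1 - η) * ‖x‖ < RCLike.re ⟪y, R x⟫_𝕜) :
    ∃ (S : X →L[𝕜] Y) (z : X), IsCompactOperator S ∧ ‖S‖ ≤ 1 ∧ ‖z‖ = ‖x‖ ∧
      S z = (‖x‖ : 𝕜) • y ∧ ‖S - R‖ ≤ ε ∧ ‖z - x‖ ≤ ε * ‖x‖ := by
  have hx0 : x ≠ 0 := by
    rintro rfl
    simp at hx
  have hxpos : 0 < ‖x‖ := norm_pos_iff.2 hx0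
  have hx𝕜 : (‖x‖ : 𝕜) ≠ 0 := RCLike.ofReal_ne_zero.2 hxpos.ne'
  obtain ⟨S, z, hS, hS1, hz, hSz, hSR, hzx⟩ := h y R ((‖x‖⁻¹ : 𝕜) • x) hy hR hR1
    (norm_smul_inv_norm hx0) (by
      rw [map_smul, inner_smul_right, ← RCLike.ofReal_inv, RCLike.re_ofReal_mul, inv_mul_eq_div,
        lt_div_iff₀ hxpos]
      exact hx)
  refine ⟨S, (‖x‖ : 𝕜) • z, hS, hS1, by simp [norm_smul, hz], by rw [map_smul, hSz], hSR, ?_⟩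
  calc ‖(‖x‖ : 𝕜) • z - x‖ = ‖(‖x‖ : 𝕜) • (z - (‖x‖⁻¹ : 𝕜) • x)‖ := by
        rw [smul_sub, smul_inv_smul₀ hx𝕜]
    _ = ‖x‖ * ‖z - (‖x‖⁻¹ : 𝕜) • x‖ := by simp [norm_smul]
    _ ≤ ε * ‖x‖ := by
        rw [mul_comm]
        gcongr

end PointedProperty

theorem mul_sum_filter_not_lt_le {ι : Type*} {s : Finset ι} {a w : ι → ℝ} {η : ℝ}
    (haw : ∀ i ∈ s, a i ≤ w i) :
    η * ∑ i ∈ s with ¬(1 - η) * w i < a i, w i ≤ ∑ i ∈ s, (w i - a i) := by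
  rw [Finset.mul_sum]
  calc ∑ i ∈ s with ¬(1 - η) * w i < a i, η * w i
      ≤ ∑ i ∈ s with ¬(1 - η) * w i < a i, (w i - a i) := by
        refine Finset.sum_le_sum fun i hi ↦ ?_
        linarith [not_lt.1 (Finset.mem_filter.1 hi).2]
    _ ≤ ∑ i ∈ s, (w i - a i) :=
        Finset.sum_le_sum_of_subset_of_nonneg (Finset.filter_subset _ s)
          fun i hi _ ↦ sub_nonneg.2 (haw i hi)

section Normalization

variable {𝕜 E : Type*} [RCLike 𝕜] [NormedAddCommGroup E] [NormedSpace 𝕜 E] {u v : E}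

theorem norm_smul_inv_norm_sub_self (hu : u ≠ 0) : ‖(‖u‖⁻¹ : 𝕜) • u - u‖ = |1 - ‖u‖| := by
  have hu𝕜 : (‖u‖ : 𝕜) ≠ 0 := RCLike.ofReal_ne_zero.2 (norm_ne_zero_iff.2 hu)
  calc ‖(‖u‖⁻¹ : 𝕜) • u - u‖ = ‖((1 - ‖u‖ : ℝ) : 𝕜) • (‖u‖⁻¹ : 𝕜) • u‖ := by
        rw [RCLike.ofReal_sub, sub_smul, smul_inv_smul₀ hu𝕜, RCLike.ofReal_one, one_smul]
    _ = |1 - ‖u‖| := by rw [norm_smul, norm_smul_inv_norm hu, mul_one, RCLike.norm_ofReal]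

theorem norm_smul_inv_norm_sub_le (hu : u ≠ 0) (hv : ‖v‖ = 1) :
    ‖(‖u‖⁻¹ : 𝕜) • u - v‖ ≤ 2 * ‖u - v‖ := by
  calc ‖(‖u‖⁻¹ : 𝕜) • u - v‖ ≤ ‖(‖u‖⁻¹ : 𝕜) • u - u‖ + ‖u - v‖ :=
        norm_sub_le_norm_sub_add_norm_sub ..
    _ ≤ 2 * ‖u - v‖ := by
        rw [norm_smul_inv_norm_sub_self hu, ← hv, two_mul, norm_sub_rev u v]
        gcongr
        exact abs_norm_sub_norm_le v u

end Normalization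

theorem re_inner_smul_inv_norm_self {𝕜 E : Type*} [RCLike 𝕜] [SeminormedAddCommGroup E]
    [InnerProductSpace 𝕜 E] (v : E) : RCLike.re (inner 𝕜 ((‖v‖⁻¹ : 𝕜) • v) v) = ‖v‖ := by
  rw [inner_smul_left, ← RCLike.ofReal_inv, RCLike.conj_ofReal, RCLike.re_ofReal_mul,
    inner_self_eq_norm_sq, sq, ← mul_assoc, inv_mul_mul_self]

theorem norm_eq_one_of_apply_eq_norm_smul {𝕜 E F : Type*} [RCLike 𝕜] [NormedAddCommGroup E]
    [NormedSpace 𝕜 E] [NormedAddCommGroup F] [NormedSpace 𝕜 F] {S : E →L[𝕜] F} {u : E} {y : F}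
    (hS : ‖S‖ ≤ 1) (hu : u ≠ 0) (hy : ‖y‖ = 1) (hSu : S u = (‖u‖ : 𝕜) • y) :
    ‖S‖ = 1 ∧ ‖S ((‖u‖⁻¹ : 𝕜) • u)‖ = 1 := by
  have happly : ‖S ((‖u‖⁻¹ : 𝕜) • u)‖ = 1 := by
    rw [map_smul, hSu, inv_smul_smul₀ (RCLike.ofReal_ne_zero.2 (norm_ne_zero_iff.2 hu)), hy]
  exact ⟨hS.antisymm (happly.symm.le.trans (S.unit_le_opNorm _ (norm_smul_inv_norm hu).le)), happly⟩

section BochnerL1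

variable {𝕜 : Type*} [RCLike 𝕜] {X : Type*} [NormedAddCommGroup X] [NormedSpace 𝕜 X]
  {Ω : Type*} [MeasurableSpace Ω] {μ : Measure Ω}
  {Y : Type*} [NormedAddCommGroup Y] [InnerProductSpace 𝕜 Y]

open scoped InnerProductSpace

section Step

variable {ι : Type*} {s : Finset ι} {B : ι → Set Ω} {x z : ι → X} {T : Lp X 1 μ →L[𝕜] Y} {y : Y}
  {ε η : ℝ}

theorem norm_sum_filter_avgEmb_sub_le {p : ι → Prop} [DecidablePred p] (hε : 0 ≤ ε)
    (hs : ∀ i ∈ s, PosFinite μ (B i)) (hzx : ∀ i ∈ s.filter p, ‖z i - x i‖ ≤ ε * ‖x i‖) :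
    ‖∑ i ∈ s with p i, avgEmb 𝕜 μ (B i) (z i) - ∑ i ∈ s, avgEmb 𝕜 μ (B i) (x i)‖ ≤
      ε * ∑ i ∈ s, ‖x i‖ + ∑ i ∈ s with ¬p i, ‖x i‖ := by
  have hs' {q : ι → Prop} [DecidablePred q] (i : ι) (hi : i ∈ s.filter q) : PosFinite μ (B i) :=
    hs i (Finset.mem_filter.1 hi).1
  rw [← Finset.sum_filter_add_sum_filter_not s p fun i ↦ avgEmb 𝕜 μ (B i) (x i), sub_add_eq_sub_sub,
    ← Finset.sum_sub_distrib]
  refine norm_sub_le_of_le ?_ (norm_sum_le_of_le _ fun i hi ↦ (norm_avgEmb_apply (hs' i hi) _).le)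
  calc ‖∑ i ∈ s with p i, (avgEmb 𝕜 μ (B i) (z i) - avgEmb 𝕜 μ (B i) (x i))‖
      ≤ ∑ i ∈ s with p i, ε * ‖x i‖ := norm_sum_le_of_le _ fun i hi ↦ by
        rw [← map_sub, norm_avgEmb_apply (hs' i hi)]
        exact hzx i hi
    _ ≤ ε * ∑ i ∈ s, ‖x i‖ := by
        rw [Finset.mul_sum]
        exact Finset.sum_le_sum_of_subset_of_nonneg (Finset.filter_subset p s)
          fun i _ _ ↦ by positivity

open scoped Classical in
theorem mul_sum_norm_filter_not_lt_le (hT1 : ‖T‖ ≤ 1) (hy : ‖y‖ = 1)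
    (hs : ∀ i ∈ s, PosFinite μ (B i)) :
    η * ∑ i ∈ s with ¬(1 - η) * ‖x i‖ < RCLike.re ⟪y, T (avgEmb 𝕜 μ (B i) (x i))⟫_𝕜, ‖x i‖ ≤
      ∑ i ∈ s, ‖x i‖ - RCLike.re ⟪y, T (∑ i ∈ s, avgEmb 𝕜 μ (B i) (x i))⟫_𝕜 := by
  rw [map_sum, inner_sum, map_sum, ← Finset.sum_sub_distrib]
  refine mul_sum_filter_not_lt_le fun i hi ↦ ?_
  calc RCLike.re ⟪y, T (avgEmb 𝕜 μ (B i) (x i))⟫_𝕜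
      ≤ ‖y‖ * ‖T (avgEmb 𝕜 μ (B i) (x i))‖ := re_inner_le_norm _ _
    _ ≤ ‖x i‖ := by
        simpa [hy, norm_avgEmb_apply (hs i hi)] using T.le_of_opNorm_le hT1 (avgEmb 𝕜 μ (B i) (x i))

variable [CompleteSpace X]

open scoped Classical in
theorem PointedBPBpCompactAt.exists_correction_sum_avgEmb (h : PointedBPBpCompactAt 𝕜 X Y ε η)
    (hε : 0 ≤ ε) (hη : 0 < η) (hT : IsCompactOperator T) (hT1 : ‖T‖ ≤ 1) (hy : ‖y‖ = 1)
    (hB : ∀ i, MeasurableSet (B i)) (hdisj : Pairwise (Function.onFun Disjoint B))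
    (hs : ∀ i ∈ s, PosFinite μ (B i) ∧ OscLE T ε (B i)) {g : Lp X 1 μ}
    (hg : g = ∑ i ∈ s, avgEmb 𝕜 μ (B i) (x i)) (hgT : ‖g‖ - RCLike.re ⟪y, T g⟫_𝕜 ≤ η * ε) :
    ∃ (S : Lp X 1 μ →L[𝕜] Y) (g' : Lp X 1 μ), IsCompactOperator S ∧ ‖S‖ ≤ 1 ∧
      S g' = (‖g'‖ : 𝕜) • y ∧ ‖S - T‖ ≤ 2 * ε ∧ ‖g' - g‖ ≤ ε * ‖g‖ + ε := by
  let := NormedSpace.restrictScalars ℝ 𝕜 X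
  have := IsScalarTower.restrictScalars ℝ 𝕜 X
  have hpos (i : ι) (hi : i ∈ s) : PosFinite μ (B i) := (hs i hi).1
  have hgnorm : ‖g‖ = ∑ i ∈ s, ‖x i‖ := by rw [hg, norm_sum_avgEmb hB hdisj hpos]
  let G : Finset ι := {i ∈ s | (1 - η) * ‖x i‖ < RCLike.re ⟪y, T (avgEmb 𝕜 μ (B i) (x i))⟫_𝕜}
  have hGs (i : ι) (hi : i ∈ G) : PosFinite μ (B i) ∧ OscLE T ε (B i) :=
    hs i (Finset.mem_filter.1 hi).1
  have hlocal (i : ι) (hi : i ∈ G) := h.exists_scaled hy (hT.comp_clm (avgEmb 𝕜 μ (B i)))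
    ((norm_comp_avgEmb_le T (hGs i hi).1).trans hT1) (Finset.mem_filter.1 hi).2
  choose! S z hS hS1 hz hSz hSR hzx using hlocal
  refine ⟨glue G B T S, ∑ i ∈ G, avgEmb 𝕜 μ (B i) (z i), isCompactOperator_glue hT hS,
    norm_glue_le_one hB hdisj hT1 hS1, ?_, norm_glue_sub_le hB hdisj hε
      (fun i hi ↦ (hGs i hi).1) (fun i hi ↦ (hGs i hi).2) hSR, ?_⟩
  · rw [norm_sum_avgEmb hB hdisj fun i hi ↦ (hGs i hi).1, Finset.sum_congr rfl hz, map_sum,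
      RCLike.ofReal_sum, Finset.sum_smul]
    exact Finset.sum_congr rfl fun i hi ↦ by
      rw [glue_apply_avgEmb hB hdisj hi (hGs i hi).1, hSz i hi]
  · have hbad : ∑ i ∈ s with ¬(1 - η) * ‖x i‖ < RCLike.re ⟪y, T (avgEmb 𝕜 μ (B i) (x i))⟫_𝕜,
        ‖x i‖ ≤ ε := by
      refine le_of_mul_le_mul_left ((mul_sum_norm_filter_not_lt_le hT1 hy hpos).trans ?_) hη
      rwa [← hgnorm, ← hg]
    rw [hgnorm, hg]
    exact (norm_sum_filter_avgEmb_sub_le hε hpos hzx).trans (by gcongr)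

end Step

variable [CompleteSpace X]

theorem exists_attaining_near_of_lt_norm_apply {ε η δ : ℝ} (h : PointedBPBpCompactAt 𝕜 X Y ε η)
    (hX : HasWeakStarSmallSlices 𝕜 X) (hε : 0 < ε) (hε1 : ε ≤ 1 / 8) (hη : 0 < η) (hδ : 0 < δ)
    (hδε : δ ≤ ε) (hδη : 3 * δ ≤ η * ε) {T : Lp X 1 μ →L[𝕜] Y} {f₀ : Lp X 1 μ}
    (hT : IsCompactOperator T) (hT1 : ‖T‖ = 1) (hf₀ : ‖f₀‖ = 1) (hTf₀ : 1 - δ < ‖T f₀‖) :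
    ∃ (S : Lp X 1 μ →L[𝕜] Y) (f : Lp X 1 μ), IsCompactOperator S ∧ ‖S‖ = 1 ∧ ‖f‖ = 1 ∧
      ‖S f‖ = 1 ∧ ‖f₀ - f‖ ≤ 8 * ε ∧ ‖S - T‖ ≤ 2 * ε := by
  have hTf₀_ne : T f₀ ≠ 0 := norm_pos_iff.1 (by linarith)
  set y : Y := (‖T f₀‖⁻¹ : 𝕜) • T f₀
  have hy : ‖y‖ = 1 := norm_smul_inv_norm hTf₀_ne
  obtain ⟨ι, s, B, x, hB, hdisj, hs, hgf⟩ := (hX.locallyAlmostConstant_of_isCompactOperator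
    hT).exists_norm_sub_sum_avgEmb_lt hδ hε f₀
  set g := ∑ i ∈ s, avgEmb 𝕜 μ (B i) (x i) with hg
  have hgnorm : ‖g‖ ≤ 1 + δ := by
    linarith [norm_le_norm_add_norm_sub f₀ g]
  have hgT : 1 - 2 * δ ≤ RCLike.re ⟪y, T g⟫_𝕜 := by
    have hdiff : RCLike.re ⟪y, T (f₀ - g)⟫_𝕜 ≤ δ := by
      calc RCLike.re ⟪y, T (f₀ - g)⟫_𝕜 ≤ ‖y‖ * ‖T (f₀ - g)‖ := re_inner_le_norm _ _
        _ ≤ ‖f₀ - g‖ := by simpa [hy] using T.le_of_opNorm_le hT1.le (f₀ - g)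
        _ ≤ δ := hgf.le
    rw [map_sub, inner_sub_right, map_sub, re_inner_smul_inv_norm_self] at hdiff
    linarith
  obtain ⟨S, g', hS, hS1, hSg', hST, hg'g⟩ := h.exists_correction_sum_avgEmb hε.le hη hT hT1.le hy
    hB hdisj hs hg (by linarith)
  have hg'f₀ : ‖g' - f₀‖ ≤ 4 * ε := by
    have := norm_sub_le_norm_sub_add_norm_sub g' g f₀
    rw [norm_sub_rev g] at this
    nlinarith
  have hg'_ne : g' ≠ 0 := by
    rintro rfl
    rw [zero_sub, norm_neg, hf₀] at hg'f₀
    linarith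
  obtain ⟨hS_eq, hSf⟩ := norm_eq_one_of_apply_eq_norm_smul hS1 hg'_ne hy hSg'
  refine ⟨S, (‖g'‖⁻¹ : 𝕜) • g', hS, hS_eq, norm_smul_inv_norm hg'_ne, hSf, ?_, hST⟩
  rw [norm_sub_rev]
  linarith [norm_smul_inv_norm_sub_le (𝕜 := 𝕜) hg'_ne hf₀]

theorem PointedBPBpCompact.bpbpCompact_L1 (h : PointedBPBpCompact 𝕜 X Y)
    (hX : HasWeakStarSmallSlices 𝕜 X) : BPBpCompact 𝕜 (Lp X 1 μ) Y := by
  have key (ε₀ : ℝ) (hε₀ : 0 < ε₀) : ∃ δ : ℝ, 0 < δ ∧ ∀ T : Lp X 1 μ →L[𝕜] Y, IsCompactOperator T →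
      ‖T‖ = 1 → ∀ f₀ : Lp X 1 μ, ‖f₀‖ = 1 → 1 - δ < ‖T f₀‖ →
        ∃ S : Lp X 1 μ →L[𝕜] Y, ∃ f : Lp X 1 μ, IsCompactOperator S ∧ ‖S‖ = 1 ∧ ‖f‖ = 1 ∧
          ‖S f‖ = 1 ∧ ‖f₀ - f‖ < ε₀ ∧ ‖S - T‖ < ε₀ := by
    obtain ⟨ε, hε, hε8, hεε₀⟩ : ∃ ε > 0, ε ≤ 1 / 8 ∧ 8 * ε < ε₀ :=
      ⟨min (1 / 8) (ε₀ / 16), by positivity, min_le_left _ _,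
        by linarith [min_le_right (1 / 8) (ε₀ / 16)]⟩
    obtain ⟨η, hη, hpt⟩ := h ε hε
    obtain ⟨δ, hδ, hδε, hδη⟩ : ∃ δ > 0, δ ≤ ε ∧ 3 * δ ≤ η * ε :=
      ⟨min ε (η * ε / 3), by positivity, min_le_left _ _,
        by linarith [min_le_right ε (η * ε / 3)]⟩
    refine ⟨δ, hδ, fun T hT hT1 f₀ hf₀ hTf₀ ↦ ?_⟩
    obtain ⟨S, f, hS, hS1, hf, hSf, hff₀, hST⟩ :=
      exists_attaining_near_of_lt_norm_apply hpt hX hε hε8 hη hδ hδε hδη hT hT1 hf₀ hTf₀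
    exact ⟨S, f, hS, hS1, hf, hSf, by linarith, by linarith⟩
  choose! η hη hmain using key
  exact ⟨η, fun ε hε ↦ ⟨hη ε hε, hmain ε hε⟩⟩

end BochnerL1

section HilbertTarget

variable {𝕜 : Type*} [RCLike 𝕜] {X : Type*} [NormedAddCommGroup X] [NormedSpace 𝕜 X]
  {Y : Type*} [NormedAddCommGroup Y] [InnerProductSpace 𝕜 Y]
  {R T : X →L[𝕜] Y} {w y : Y} {x z : X} {e : ℝ}

open scoped InnerProductSpace

variable (𝕜) in
/-- The operator sending the unit vector `w` to the unit vector `y` and `wᗮ` to `yᗮ` by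
orthogonal projection. -/
def steer (w y : Y) : Y →L[𝕜] Y :=
  (innerSL 𝕜 w).smulRight y + (𝕜 ∙ y)ᗮ.starProjection ∘L (𝕜 ∙ w)ᗮ.starProjection

theorem steer_apply (v : Y) : steer 𝕜 w y v =
    ⟪w, v⟫_𝕜 • y + (𝕜 ∙ y)ᗮ.starProjection ((𝕜 ∙ w)ᗮ.starProjection v) := by
  simp [steer]

theorem steer_apply_self (hw : ‖w‖ = 1) : steer 𝕜 w y w = y := by
  rw [steer_apply, Submodule.starProjection_orthogonalComplement_singleton_eq_zero, map_zero,
    add_zero, inner_self_eq_norm_sq_to_K, hw, RCLike.ofReal_one, one_pow, one_smul]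

theorem norm_steer_le_one (hw : ‖w‖ = 1) (hy : ‖y‖ = 1) : ‖steer 𝕜 w y‖ ≤ 1 := by
  refine ContinuousLinearMap.opNorm_le_bound _ zero_le_one fun v ↦ ?_
  rw [one_mul, ← sq_le_sq₀ (norm_nonneg _) (norm_nonneg _)]
  set q := (𝕜 ∙ w)ᗮ.starProjection v
  have horth : ⟪⟪w, v⟫_𝕜 • y, (𝕜 ∙ y)ᗮ.starProjection q⟫_𝕜 = 0 :=
    Submodule.inner_right_of_mem_orthogonal
      (Submodule.smul_mem _ _ (Submodule.mem_span_singleton_self y))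
      (Submodule.starProjection_apply_mem _ q)
  calc ‖steer 𝕜 w y v‖ ^ 2
      = ‖⟪w, v⟫_𝕜 • y‖ ^ 2 + ‖(𝕜 ∙ y)ᗮ.starProjection q‖ ^ 2 := by
        rw [steer_apply, sq, sq, sq, norm_add_sq_eq_norm_sq_add_norm_sq_of_inner_eq_zero _ _ horth]
    _ ≤ ‖⟪w, v⟫_𝕜 • w‖ ^ 2 + ‖q‖ ^ 2 := by
        rw [norm_smul, norm_smul, hw, hy]
        gcongr
        exact Submodule.norm_starProjection_apply_le _ q
    _ = ‖v‖ ^ 2 := by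
        rw [← Submodule.starProjection_unit_singleton 𝕜 hw,
          ← Submodule.norm_sq_eq_add_norm_sq_starProjection]

theorem norm_steer_sub_id_le (hw : ‖w‖ = 1) (hy : ‖y‖ = 1) :
    ‖steer 𝕜 w y - .id 𝕜 Y‖ ≤ 2 * ‖w - y‖ := by
  refine ContinuousLinearMap.opNorm_le_bound _ (by positivity) fun v ↦ ?_
  set q := (𝕜 ∙ w)ᗮ.starProjection v with hq
  have hv : ⟪w, v⟫_𝕜 • w + q = v := by
    rw [hq, Submodule.starProjection_orthogonal_val, Submodule.starProjection_unit_singleton 𝕜 hw,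
      add_sub_cancel]
  have hwq : ⟪w, q⟫_𝕜 = 0 := Submodule.inner_right_of_mem_orthogonal
    (Submodule.mem_span_singleton_self w) (Submodule.starProjection_apply_mem _ v)
  have hdiff : (steer 𝕜 w y - .id 𝕜 Y) v = -(⟪w, v⟫_𝕜 • (w - y) - ⟪w - y, q⟫_𝕜 • y) := by
    rw [sub_apply, steer_apply, ← hq, Submodule.starProjection_orthogonal_val,
      Submodule.starProjection_unit_singleton 𝕜 hy, inner_sub_left, hwq,
      ContinuousLinearMap.id_apply]
    nth_rw 2 [← hv]
    module
  have hqv : ‖q‖ ≤ ‖v‖ := Submodule.norm_starProjection_apply_le _ v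
  calc ‖(steer 𝕜 w y - .id 𝕜 Y) v‖ ≤ ‖⟪w, v⟫_𝕜‖ * ‖w - y‖ + ‖⟪w - y, q⟫_𝕜‖ * ‖y‖ := by
        rw [hdiff, norm_neg, ← norm_smul, ← norm_smul]
        exact norm_sub_le _ _
    _ ≤ ‖w‖ * ‖v‖ * ‖w - y‖ + ‖w - y‖ * ‖q‖ * ‖y‖ := by
        gcongr <;> exact norm_inner_le_norm _ _
    _ ≤ 2 * ‖w - y‖ * ‖v‖ := by
        rw [hw, hy]
        nlinarith [norm_nonneg (w - y)]

theorem norm_sub_le_two_mul_of_le_re_inner {u v : Y} (he : 0 ≤ e) (hu : ‖u‖ = 1) (hv : ‖v‖ ≤ 1)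
    (huv : 1 - e ^ 2 ≤ RCLike.re ⟪u, v⟫_𝕜) : ‖v - u‖ ≤ 2 * e := by
  refine (sq_le_sq₀ (norm_nonneg _) (by positivity)).1 ?_
  rw [norm_sub_sq (𝕜 := 𝕜), hu, inner_re_symm]
  nlinarith [norm_nonneg v]

theorem norm_apply_sub_le_of_norm_sub_le (hR : ‖R‖ ≤ 1) (hy : ‖y‖ = 1) (hx : ‖x‖ = 1)
    (hz : ‖z‖ = 1) (hTR : ‖T - R‖ ≤ e) (hzx : ‖z - x‖ ≤ e)
    (hRx : 1 - e ^ 2 ≤ RCLike.re ⟪y, R x⟫_𝕜) : ‖T z - y‖ ≤ 4 * e := by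
  have he : 0 ≤ e := (norm_nonneg _).trans hzx
  have hTRz : ‖(T - R) z‖ ≤ e := by simpa [hz] using (T - R).le_of_opNorm_le hTR z
  have hRzx : ‖R (z - x)‖ ≤ e := by simpa using (R.le_of_opNorm_le hR (z - x)).trans (by simpa)
  have hRxy : ‖R x - y‖ ≤ 2 * e :=
    norm_sub_le_two_mul_of_le_re_inner he hy (by simpa [hx] using R.le_of_opNorm_le hR x) hRx
  calc ‖T z - y‖ = ‖(T - R) z + R (z - x) + (R x - y)‖ := by
        rw [sub_apply, map_sub]
        abel_nf
    _ ≤ ‖(T - R) z‖ + ‖R (z - x)‖ + ‖R x - y‖ := norm_add₃_le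
    _ ≤ 4 * e := by linarith

theorem exists_contraction_apply_eq_of_norm_apply_eq_one (hT : IsCompactOperator T) (hT1 : ‖T‖ ≤ 1)
    (hTz : ‖T z‖ = 1) (hy : ‖y‖ = 1) :
    ∃ S : X →L[𝕜] Y, IsCompactOperator S ∧ ‖S‖ ≤ 1 ∧ S z = y ∧ ‖S - T‖ ≤ 2 * ‖T z - y‖ := by
  refine ⟨steer 𝕜 (T z) y ∘L T, hT.clm_comp (steer 𝕜 (T z) y), ?_, ?_, ?_⟩
  · calc ‖steer 𝕜 (T z) y ∘L T‖ ≤ ‖steer 𝕜 (T z) y‖ * ‖T‖ := ContinuousLinearMap.opNorm_comp_le _ _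
      _ ≤ 1 := mul_le_one₀ (norm_steer_le_one hTz hy) (norm_nonneg _) hT1
  · rw [ContinuousLinearMap.comp_apply, steer_apply_self hTz]
  · refine ContinuousLinearMap.opNorm_le_bound _ (by positivity) fun v ↦ ?_
    calc ‖(steer 𝕜 (T z) y ∘L T - T) v‖ = ‖(steer 𝕜 (T z) y - .id 𝕜 Y) (T v)‖ := by
          simp only [sub_apply, ContinuousLinearMap.comp_apply, ContinuousLinearMap.id_apply]
      _ ≤ 2 * ‖T z - y‖ * ‖T v‖ :=
          ContinuousLinearMap.le_of_opNorm_le _ (norm_steer_sub_id_le hTz hy) (T v)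
      _ ≤ 2 * ‖T z - y‖ * ‖v‖ := by
          gcongr
          simpa using T.le_of_opNorm_le hT1 v

theorem exists_contraction_apply_eq_of_attains (hR : ‖R‖ ≤ 1) (hy : ‖y‖ = 1) (hx : ‖x‖ = 1)
    (hz : ‖z‖ = 1) (hT : IsCompactOperator T) (hTz : ‖T z‖ = ‖T‖) (hTR : ‖T - R‖ ≤ e)
    (hzx : ‖z - x‖ ≤ e) (he : e < 1 / 4) (hRx : 1 - e ^ 2 ≤ RCLike.re ⟪y, R x⟫_𝕜) :
    ∃ S : X →L[𝕜] Y, IsCompactOperator S ∧ ‖S‖ ≤ 1 ∧ S z = y ∧ ‖S - R‖ ≤ 21 * e := by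
  have hTzy : ‖T z - y‖ ≤ 4 * e := norm_apply_sub_le_of_norm_sub_le hR hy hx hz hTR hzx hRx
  have hT_near : |1 - ‖T‖| ≤ 4 * e := by
    rw [← hy, ← hTz]
    exact (abs_norm_sub_norm_le y (T z)).trans (norm_sub_rev y (T z) ▸ hTzy)
  have hTpos : 0 < ‖T‖ := by linarith [(abs_le.1 hT_near).2]
  have hT_ne : T ≠ 0 := norm_pos_iff.1 hTpos
  have hTz_ne : T z ≠ 0 := norm_pos_iff.1 (hTz ▸ hTpos)
  obtain ⟨T', hT'_eq⟩ : ∃ T' : X →L[𝕜] Y, T' = (‖T‖⁻¹ : 𝕜) • T := ⟨_, rfl⟩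
  have hT'z : T' z = (‖T z‖⁻¹ : 𝕜) • T z := by rw [hT'_eq, hTz, smul_apply]
  obtain ⟨S, hS, hS1, hSz, hST'⟩ := exists_contraction_apply_eq_of_norm_apply_eq_one
    (T := T') (hT'_eq ▸ hT.smul _) (hT'_eq ▸ (norm_smul_inv_norm hT_ne).le)
    (hT'z ▸ norm_smul_inv_norm hTz_ne) hy
  refine ⟨S, hS, hS1, hSz, ?_⟩
  have hT'T : ‖T' - T‖ ≤ 4 * e := by
    rw [hT'_eq, norm_smul_inv_norm_sub_self hT_ne]
    exact hT_near
  have hT'zy : ‖T' z - y‖ ≤ 8 * e := by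
    rw [hT'z]
    linarith [norm_smul_inv_norm_sub_le (𝕜 := 𝕜) hTz_ne hy]
  calc ‖S - R‖ = ‖(S - T') + (T' - T) + (T - R)‖ := by rw [sub_add_sub_cancel, sub_add_sub_cancel]
    _ ≤ ‖S - T'‖ + ‖T' - T‖ + ‖T - R‖ := norm_add₃_le
    _ ≤ 21 * e := by linarith

end HilbertTarget

section RankOnePerturbation

variable {𝕜 : Type*} [RCLike 𝕜] {X : Type*} [NormedAddCommGroup X] [NormedSpace 𝕜 X]
  {Y : Type*} [NormedAddCommGroup Y]

theorem isCompactOperator_smulRight [NormedSpace 𝕜 Y] (φ : X →L[𝕜] 𝕜) (y : Y) :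
    IsCompactOperator (φ.smulRight y) :=
  (isCompactOperator_of_locallyCompactSpace_rng
    (ContinuousLinearMap.toSpanSingleton 𝕜 y)).comp_clm φ

variable [InnerProductSpace 𝕜 Y] {R : X →L[𝕜] Y} {φ : X →L[𝕜] 𝕜} {y : Y} {x z : X} {e : ℝ}

open scoped InnerProductSpace

variable (R φ y e) in
/-- The perturbation `R + e φ(·) y`; where it attains its norm, `φ` is almost as large as it
can be. -/
def rankOnePerturb : X →L[𝕜] Y := R + (e : 𝕜) • φ.smulRight y

theorem rankOnePerturb_apply (v : X) :
    rankOnePerturb R φ y e v = R v + (e : 𝕜) • φ v • y := rfl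

theorem isCompactOperator_rankOnePerturb (hR : IsCompactOperator R) :
    IsCompactOperator (rankOnePerturb R φ y e) :=
  hR.add ((isCompactOperator_smulRight φ y).smul (e : 𝕜))

theorem norm_rankOnePerturb_sub_le (he : 0 ≤ e) (hφ : ‖φ‖ ≤ 1) (hy : ‖y‖ = 1) :
    ‖rankOnePerturb R φ y e - R‖ ≤ e := by
  rw [rankOnePerturb, add_sub_cancel_left, norm_smul, ContinuousLinearMap.norm_smulRight_apply, hy,
    RCLike.norm_of_nonneg he, mul_one]
  exact mul_le_of_le_one_right he hφ

theorem norm_rankOnePerturb_apply_le (he : 0 ≤ e) (hR : ‖R‖ ≤ 1) (hy : ‖y‖ = 1) (v : X) :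
    ‖rankOnePerturb R φ y e v‖ ≤ ‖v‖ + e * ‖φ v‖ := by
  rw [rankOnePerturb_apply]
  refine norm_add_le_of_le (by simpa using R.le_of_opNorm_le hR v) ?_
  rw [norm_smul, norm_smul, hy, RCLike.norm_of_nonneg he, mul_one]

theorem re_inner_add_le_norm_rankOnePerturb (hy : ‖y‖ = 1) (hx : ‖x‖ ≤ 1) :
    RCLike.re ⟪y, R x⟫_𝕜 + e * RCLike.re (φ x) ≤ ‖rankOnePerturb R φ y e‖ := by
  calc RCLike.re ⟪y, R x⟫_𝕜 + e * RCLike.re (φ x)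
      = RCLike.re ⟪y, rankOnePerturb R φ y e x⟫_𝕜 := by
        rw [rankOnePerturb_apply, inner_add_right, inner_smul_right, inner_smul_right,
          inner_self_eq_norm_sq_to_K, hy, map_add, RCLike.re_ofReal_mul]
        simp
    _ ≤ ‖y‖ * ‖rankOnePerturb R φ y e x‖ := re_inner_le_norm _ _
    _ ≤ ‖rankOnePerturb R φ y e‖ := by
        rw [hy, one_mul]
        exact ContinuousLinearMap.unit_le_opNorm _ x hx

theorem re_inner_add_le_one_add_of_attains (he : 0 ≤ e) (hR : ‖R‖ ≤ 1) (hy : ‖y‖ = 1)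
    (hx : ‖x‖ ≤ 1) (hz : ‖z‖ ≤ 1)
    (hattain : ‖rankOnePerturb R φ y e z‖ = ‖rankOnePerturb R φ y e‖) :
    RCLike.re ⟪y, R x⟫_𝕜 + e * RCLike.re (φ x) ≤ 1 + e * ‖φ z‖ := by
  have hle := re_inner_add_le_norm_rankOnePerturb (R := R) (φ := φ) (e := e) hy hx
  rw [← hattain] at hle
  linarith [norm_rankOnePerturb_apply_le (φ := φ) he hR hy z]

end RankOnePerturbation

section UniformlyConvex

variable {𝕜 : Type*} [RCLike 𝕜] {X : Type*} [NormedAddCommGroup X] [NormedSpace 𝕜 X]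
  [UniformConvexSpace X] {Y : Type*} [NormedAddCommGroup Y]

theorem cauchySeq_of_tendsto_apply_of_norm_eq [NormedSpace 𝕜 Y] {T : X →L[𝕜] Y} {u : ℕ → X} {y : Y}
    (hT : T ≠ 0) (hu : ∀ n, ‖u n‖ ≤ 1) (hlim : Filter.Tendsto (T ∘ u) Filter.atTop (nhds y))
    (hy : ‖y‖ = ‖T‖) : CauchySeq u := by
  let := NormedSpace.restrictScalars ℝ 𝕜 X
  refine Metric.cauchySeq_iff.2 fun ε hε ↦ ?_
  obtain ⟨δ, hδ, hconvex⟩ := exists_forall_closed_ball_dist_add_le_two_sub X hε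
  obtain ⟨N, hN⟩ := Metric.tendsto_atTop.1 hlim (‖T‖ * δ / 2) (by positivity)
  refine ⟨N, fun m hm n hn ↦ ?_⟩
  rw [dist_eq_norm]
  by_contra! hfar
  have hupper : ‖T (u m) + T (u n)‖ ≤ ‖T‖ * (2 - δ) := by
    rw [← map_add]
    exact T.le_opNorm_of_le (hconvex (hu m) (hu n) hfar)
  have hlower : ‖y + y‖ < ‖T (u m) + T (u n)‖ + ‖T‖ * δ := by
    have hsum : ‖y + y - (T (u m) + T (u n))‖ < ‖T‖ * δ := by
      calc ‖y + y - (T (u m) + T (u n))‖ = ‖(T (u m) - y) + (T (u n) - y)‖ := by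
            rw [← norm_neg]
            abel_nf
        _ ≤ ‖T (u m) - y‖ + ‖T (u n) - y‖ := norm_add_le _ _
        _ < ‖T‖ * δ / 2 + ‖T‖ * δ / 2 := by
            rw [← dist_eq_norm, ← dist_eq_norm]
            exact add_lt_add (hN m hm) (hN n hn)
        _ = ‖T‖ * δ := by ring
    linarith [norm_le_norm_add_norm_sub' (y + y) (T (u m) + T (u n))]
  have hyy : ‖y + y‖ = 2 * ‖T‖ := by
    rw [← two_smul 𝕜 y, norm_smul, RCLike.norm_ofNat, hy]
  linarith

theorem exists_norm_apply_eq_opNorm_of_isCompactOperator [CompleteSpace X] [NormedSpace 𝕜 Y]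
    {T : X →L[𝕜] Y} (hT : IsCompactOperator T) (hT0 : T ≠ 0) : ∃ z, ‖z‖ = 1 ∧ ‖T z‖ = ‖T‖ := by
  have hnear (n : ℕ) : ∃ x, ‖x‖ < 1 ∧ ‖T‖ - 1 / ((n : ℝ) + 1) < ‖T x‖ :=
    T.exists_lt_apply_of_lt_opNorm (sub_lt_self _ (by positivity))
  choose u hu hTu using hnear
  obtain ⟨y, -, k, hk, hlim⟩ := (hT.isCompact_closure_image_closedBall 1).tendsto_subseq
    fun n ↦ subset_closure ⟨u n, by simpa using (hu n).le, rfl⟩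
  have hy : ‖y‖ = ‖T‖ := by
    refine le_antisymm (le_of_tendsto' hlim.norm fun n ↦ T.unit_le_opNorm _ (hu _).le) ?_
    have hbound := (tendsto_one_div_add_atTop_nhds_zero_nat (𝕜 := ℝ)).comp hk.tendsto_atTop
    simpa using le_of_tendsto_of_tendsto' (hbound.const_sub ‖T‖) hlim.norm fun n ↦ (hTu (k n)).le
  obtain ⟨z, hz⟩ := cauchySeq_tendsto_of_complete
    (cauchySeq_of_tendsto_apply_of_norm_eq (u := u ∘ k) hT0 (fun n ↦ (hu _).le) hlim hy)
  have hTz : T z = y := tendsto_nhds_unique ((T.continuous.tendsto z).comp hz) hlim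
  have hz1 : ‖z‖ ≤ 1 := le_of_tendsto' hz.norm fun n ↦ (hu _).le
  refine ⟨z, hz1.antisymm ?_, hTz ▸ hy⟩
  have hle := T.le_opNorm z
  rw [hTz, hy] at hle
  exact le_of_mul_le_mul_left (by rwa [mul_one]) (norm_pos_iff.2 hT0)

variable [InnerProductSpace 𝕜 Y]

open scoped InnerProductSpace

theorem exists_attains_rankOnePerturb_lt_norm_add [CompleteSpace X] {R : X →L[𝕜] Y}
    {φ : X →L[𝕜] 𝕜} {x : X} {y : Y} {e δ : ℝ} (he : 0 < e) (hR : ‖R‖ ≤ 1)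
    (hRc : IsCompactOperator R) (hy : ‖y‖ = 1) (hx : ‖x‖ ≤ 1) (hφ : ‖φ‖ ≤ 1) (hφx : φ x = 1)
    (hpos : 0 ≤ RCLike.re ⟪y, R x⟫_𝕜) (hRx : 1 - e * δ < RCLike.re ⟪y, R x⟫_𝕜) :
    ∃ z, ‖z‖ = 1 ∧ ‖rankOnePerturb R φ y e z‖ = ‖rankOnePerturb R φ y e‖ ∧ 2 - δ < ‖z + x‖ := by
  have hnorm := re_inner_add_le_norm_rankOnePerturb (R := R) (φ := φ) (e := e) hy hx
  rw [hφx, RCLike.one_re, mul_one] at hnorm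
  obtain ⟨z, hz, hattain⟩ := exists_norm_apply_eq_opNorm_of_isCompactOperator
    (isCompactOperator_rankOnePerturb (φ := φ) (y := y) (e := e) hRc)
    (norm_pos_iff.1 (by linarith))
  obtain ⟨u, hu, huφ⟩ := RCLike.exists_norm_eq_mul_self (φ z)
  have hφz : 1 - δ < ‖φ z‖ := by
    have hle := re_inner_add_le_one_add_of_attains he.le hR hy hx hz.le hattain
    rw [hφx, RCLike.one_re, mul_one] at hle
    exact lt_of_mul_lt_mul_left (by linarith) he.le
  refine ⟨u • z, by rw [norm_smul, hu, hz, one_mul],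
    by rw [map_smul, norm_smul, hu, hattain, one_mul], ?_⟩
  calc 2 - δ < ‖φ z‖ + 1 := by linarith
    _ = ‖φ (u • z + x)‖ := by
      rw [map_add, map_smul, smul_eq_mul, ← huφ, hφx, ← RCLike.ofReal_one (K := 𝕜),
        ← RCLike.ofReal_add, RCLike.norm_of_nonneg (by positivity)]
    _ ≤ ‖u • z + x‖ := by simpa using φ.le_of_opNorm_le hφ (u • z + x)

theorem pointedBPBpCompact_of_uniformConvexSpace [CompleteSpace X] :
    PointedBPBpCompact 𝕜 X Y := by
  intro ε hε
  obtain ⟨e, he0, he⟩ : ∃ e, 0 < e ∧ e < min (1 / 4) (ε / 21) := exists_between (by positivity)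
  obtain ⟨he1, he2⟩ := lt_min_iff.1 he
  obtain ⟨δ, hδ, hconvex⟩ := exists_forall_sphere_dist_add_le_two_sub X he0
  refine ⟨min (e * δ) (e ^ 2), by positivity, fun y R x hy hRc hR hx hRx ↦ ?_⟩
  have hRx1 : 1 - e * δ < RCLike.re ⟪y, R x⟫_𝕜 := by linarith [min_le_left (e * δ) (e ^ 2)]
  have hRx2 : 1 - e ^ 2 ≤ RCLike.re ⟪y, R x⟫_𝕜 := by linarith [min_le_right (e * δ) (e ^ 2)]
  obtain ⟨φ, hφ, hφx⟩ := exists_dual_vector'' 𝕜 x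
  rw [hx, RCLike.ofReal_one] at hφx
  obtain ⟨z, hz, hattain, hzx⟩ := exists_attains_rankOnePerturb_lt_norm_add he0 hR hRc hy hx.le
    hφ hφx (by nlinarith) hRx1
  have hclose : ‖z - x‖ ≤ e := by
    by_contra! hfar
    linarith [hconvex hz hx hfar.le]
  obtain ⟨S, hSc, hS, hSz, hSR⟩ := exists_contraction_apply_eq_of_attains hR hy hx hz
    (isCompactOperator_rankOnePerturb hRc) hattain (norm_rankOnePerturb_sub_le he0.le hφ hy)
    hclose he1 hRx2
  exact ⟨S, z, hSc, hS, hz, hSz, by linarith, by linarith⟩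

end UniformlyConvex

section PointwiseInequalities

variable {E : Type*} [NormedAddCommGroup E]

theorem nonneg_of_nonneg_on_sphere [NormedSpace ℝ E] {F : E → ℝ} {r : ℝ} (hr : r ≠ 0)
    (hhom : ∀ s : ℝ, 0 ≤ s → ∀ v, F (s • v) = s ^ r * F v) (hF : ∀ v, ‖v‖ = 1 → 0 ≤ F v) (v : E) :
    0 ≤ F v := by
  rcases eq_or_ne v 0 with rfl | hv
  · have hzero := hhom 0 le_rfl 0
    rw [smul_zero, Real.zero_rpow hr, zero_mul] at hzero
    exact hzero.ge
  · rw [← smul_inv_smul₀ (norm_ne_zero_iff.2 hv) v, hhom _ (norm_nonneg v)]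
    exact mul_nonneg (by positivity) (hF _ (norm_smul_inv_norm (𝕜 := ℝ) hv))

theorem norm_smul_rpow [NormedSpace ℝ E] {s : ℝ} (hs : 0 ≤ s) (v : E) (r : ℝ) :
    ‖s • v‖ ^ r = s ^ r * ‖v‖ ^ r := by
  rw [norm_smul, Real.norm_of_nonneg hs, Real.mul_rpow hs (norm_nonneg v)]

theorem one_le_norm_rpow_add_norm_rpow {q : E × E} (hq : ‖q‖ = 1) (r : ℝ) :
    1 ≤ ‖q.1‖ ^ r + ‖q.2‖ ^ r := by
  have hfst : 0 ≤ ‖q.1‖ ^ r := by positivity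
  have hsnd : 0 ≤ ‖q.2‖ ^ r := by positivity
  rcases max_choice ‖q.1‖ ‖q.2‖ with h | h <;> rw [Prod.norm_def, h] at hq <;>
    rw [hq, Real.one_rpow] <;> linarith

theorem norm_half_smul_add_rpow_lt [NormedSpace ℝ E] [StrictConvexSpace ℝ E] {r : ℝ} (hr : 1 < r)
    {a b : E} (hab : a ≠ b) : ‖(1 / 2 : ℝ) • (a + b)‖ ^ r < (‖a‖ ^ r + ‖b‖ ^ r) / 2 := by
  rcases eq_or_ne ‖a‖ ‖b‖ with hnorm | hnorm
  · have hlt := Real.rpow_lt_rpow (norm_nonneg _) ((norm_midpoint_lt_iff hnorm).2 hab)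
      (zero_lt_one.trans hr)
    rw [← hnorm]
    linarith
  · have hle : ‖(1 / 2 : ℝ) • (a + b)‖ ≤ (1 / 2 : ℝ) • ‖a‖ + (1 / 2 : ℝ) • ‖b‖ := by
      rw [← smul_add, norm_smul, Real.norm_of_nonneg (by norm_num)]
      exact mul_le_mul_of_nonneg_left (norm_add_le a b) (by norm_num)
    calc ‖(1 / 2 : ℝ) • (a + b)‖ ^ r ≤ ((1 / 2 : ℝ) • ‖a‖ + (1 / 2 : ℝ) • ‖b‖) ^ r := by gcongr
      _ < (1 / 2 : ℝ) • ‖a‖ ^ r + (1 / 2 : ℝ) • ‖b‖ ^ r :=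
        (strictConvexOn_rpow hr).2 (norm_nonneg a) (norm_nonneg b) hnorm (by norm_num)
          (by norm_num) (by norm_num)
      _ = (‖a‖ ^ r + ‖b‖ ^ r) / 2 := by simp only [smul_eq_mul]; ring

theorem norm_half_smul_add_rpow_le [NormedSpace ℝ E] [StrictConvexSpace ℝ E] {r : ℝ} (hr : 1 < r)
    (a b : E) : ‖(1 / 2 : ℝ) • (a + b)‖ ^ r ≤ (‖a‖ ^ r + ‖b‖ ^ r) / 2 := by
  rcases eq_or_ne a b with rfl | hab
  · rw [← two_smul ℝ a, smul_smul]
    norm_num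
  · exact (norm_half_smul_add_rpow_lt hr hab).le

theorem exists_norm_sub_rpow_le_of_norm_eq_one [NormedSpace ℝ E] [StrictConvexSpace ℝ E]
    [ProperSpace E] {r ε : ℝ} (hr : 1 < r) (hε : 0 < ε) :
    ∃ C > 0, ∀ q : E × E, ‖q‖ = 1 →
      ‖q.1 - q.2‖ ^ r ≤
        ε + C * ((‖q.1‖ ^ r + ‖q.2‖ ^ r) / 2 - ‖(1 / 2 : ℝ) • (q.1 + q.2)‖ ^ r) := by
  have hr0 : 0 < r := zero_lt_one.trans hr
  have hcont (f : E × E → E) (hf : Continuous f) : Continuous fun q ↦ ‖f q‖ ^ r :=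
    hf.norm.rpow_const fun _ ↦ Or.inr hr0.le
  have hfar : IsCompact (Metric.sphere (0 : E × E) 1 ∩ {q | ε ≤ ‖q.1 - q.2‖ ^ r}) :=
    (isCompact_sphere _ _).inter_right (isClosed_le continuous_const (hcont _ (by fun_prop)))
  obtain ⟨d, hd, hgap⟩ := hfar.exists_forall_le'
    (f := fun q ↦ (‖q.1‖ ^ r + ‖q.2‖ ^ r) / 2 - ‖(1 / 2 : ℝ) • (q.1 + q.2)‖ ^ r) (a := 0)
    ((((hcont _ continuous_fst).add (hcont _ continuous_snd)).div_const 2).sub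
      (hcont (fun q ↦ (1 / 2 : ℝ) • (q.1 + q.2)) (by fun_prop))).continuousOn
    fun q hq ↦ sub_pos.2 (norm_half_smul_add_rpow_lt hr fun heq ↦ by
      have hle : ε ≤ ‖q.1 - q.2‖ ^ r := hq.2
      rw [heq, sub_self, norm_zero, Real.zero_rpow hr0.ne'] at hle
      linarith)
  refine ⟨2 ^ r / d, by positivity, fun q hq ↦ ?_⟩
  rcases le_or_gt ε (‖q.1 - q.2‖ ^ r) with hle | hlt
  · have hbound : ‖q.1 - q.2‖ ≤ 2 := by
      linarith [norm_sub_le q.1 q.2, norm_fst_le q, norm_snd_le q]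
    calc ‖q.1 - q.2‖ ^ r ≤ 2 ^ r / d * d := by
          rw [div_mul_cancel₀ _ hd.ne']
          gcongr
      _ ≤ 2 ^ r / d * ((‖q.1‖ ^ r + ‖q.2‖ ^ r) / 2 - ‖(1 / 2 : ℝ) • (q.1 + q.2)‖ ^ r) := by
          gcongr
          exact hgap q ⟨mem_sphere_zero_iff_norm.2 hq, hle⟩
      _ ≤ _ := le_add_of_nonneg_left hε.le
  · exact hlt.le.trans (le_add_of_nonneg_right (mul_nonneg (by positivity)
      (sub_nonneg.2 (norm_half_smul_add_rpow_le hr _ _))))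

theorem exists_norm_sub_rpow_le [NormedSpace ℝ E] [StrictConvexSpace ℝ E] [ProperSpace E]
    {r ε : ℝ} (hr : 1 < r) (hε : 0 < ε) :
    ∃ C > 0, ∀ a b : E, ‖a - b‖ ^ r ≤
      ε * (‖a‖ ^ r + ‖b‖ ^ r) +
        C * ((‖a‖ ^ r + ‖b‖ ^ r) / 2 - ‖(1 / 2 : ℝ) • (a + b)‖ ^ r) := by
  obtain ⟨C, hC, hsphere⟩ := exists_norm_sub_rpow_le_of_norm_eq_one (E := E) hr hε
  refine ⟨C, hC, fun a b ↦ sub_nonneg.1 ?_⟩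
  refine nonneg_of_nonneg_on_sphere (E := E × E) (r := r)
    (F := fun q ↦ ε * (‖q.1‖ ^ r + ‖q.2‖ ^ r) +
      C * ((‖q.1‖ ^ r + ‖q.2‖ ^ r) / 2 - ‖(1 / 2 : ℝ) • (q.1 + q.2)‖ ^ r) - ‖q.1 - q.2‖ ^ r)
    (by positivity) (fun s hs q ↦ ?_) (fun q hq ↦ sub_nonneg.2 ((hsphere q hq).trans ?_)) (a, b)
  · simp only [Prod.smul_fst, Prod.smul_snd, ← smul_add, ← smul_sub, smul_comm (1 / 2 : ℝ) s,
      norm_smul_rpow hs]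
    ring
  · gcongr
    exact le_mul_of_one_le_right hε.le (one_le_norm_rpow_add_norm_rpow hq r)

theorem exists_norm_add_rpow_le_fderiv [InnerProductSpace ℝ E] [ProperSpace E] {r ε : ℝ}
    (hr : 1 < r) (hε : 0 < ε) :
    ∃ t > 0, ∀ a h : E, ‖a‖ ≤ 1 → ‖h‖ ≤ t →
      ‖a + h‖ ^ r ≤ ‖a‖ ^ r + fderiv ℝ (fun x : E ↦ ‖x‖ ^ r) a h + ε * t := by
  have hsmooth := contDiff_norm_rpow (E := E) hr
  obtain ⟨δ, hδ, hclose⟩ := Metric.uniformContinuousOn_iff_le.1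
    ((isCompact_closedBall (0 : E) 2).uniformContinuousOn_of_continuous
      (hsmooth.continuous_fderiv one_ne_zero).continuousOn) ε hε
  refine ⟨min δ 1, by positivity, fun a h ha hh ↦ ?_⟩
  have hmean := (convex_closedBall a (min δ 1)).norm_image_sub_le_of_norm_fderiv_le' (𝕜 := ℝ)
    (f := fun x : E ↦ ‖x‖ ^ r) (φ := fderiv ℝ (fun x : E ↦ ‖x‖ ^ r) a) (C := ε) (y := a + h)
    (fun x _ ↦ hsmooth.differentiable one_ne_zero x) (fun x hx ↦ ?_)
    (Metric.mem_closedBall_self (by positivity)) (by simpa using hh)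
  · rw [add_sub_cancel_left] at hmean
    have hupper := (le_abs_self _).trans hmean
    have hεh : ε * ‖h‖ ≤ ε * min δ 1 := by gcongr
    linarith
  · obtain ⟨hxδ, hx1⟩ := le_min_iff.1 (Metric.mem_closedBall.1 hx)
    rw [← dist_eq_norm]
    refine hclose x ?_ a (mem_closedBall_zero_iff.2 (by linarith)) hxδ
    rw [dist_eq_norm] at hx1
    rw [mem_closedBall_zero_iff]
    linarith [norm_le_norm_add_norm_sub' x a]

theorem exists_norm_add_rpow_add_norm_sub_rpow_le [InnerProductSpace ℝ E] [ProperSpace E]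
    {r ε : ℝ} (hr : 1 < r) (hε : 0 < ε) :
    ∃ t > 0, ∀ a b : E, ‖a + t • b‖ ^ r + ‖a - t • b‖ ^ r ≤
      2 * ‖a‖ ^ r + ε * t * (‖a‖ ^ r + ‖b‖ ^ r) := by
  obtain ⟨t, ht, htaylor⟩ := exists_norm_add_rpow_le_fderiv (E := E) hr (half_pos hε)
  refine ⟨t, ht, fun a b ↦ sub_nonneg.1 ?_⟩
  refine nonneg_of_nonneg_on_sphere (E := E × E) (r := r)
    (F := fun q ↦ 2 * ‖q.1‖ ^ r + ε * t * (‖q.1‖ ^ r + ‖q.2‖ ^ r) -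
      (‖q.1 + t • q.2‖ ^ r + ‖q.1 - t • q.2‖ ^ r))
    (by positivity) (fun s hs q ↦ ?_) (fun q hq ↦ sub_nonneg.2 ?_) (a, b)
  · simp only [Prod.smul_fst, Prod.smul_snd, smul_comm t s, ← smul_add, ← smul_sub,
      norm_smul_rpow hs]
    ring
  · have hfst : ‖q.1‖ ≤ 1 := hq ▸ norm_fst_le q
    have hsnd : ‖t • q.2‖ ≤ t := by
      rw [norm_smul, Real.norm_of_nonneg ht.le]
      exact mul_le_of_le_one_right ht.le (hq ▸ norm_snd_le q)
    have hadd := htaylor q.1 (t • q.2) hfst hsnd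
    have hsub := htaylor q.1 (-(t • q.2)) hfst (by rwa [norm_neg])
    rw [map_neg, ← sub_eq_add_neg] at hsub
    have hone := le_mul_of_one_le_right (mul_nonneg hε.le ht.le)
      (one_le_norm_rpow_add_norm_rpow hq r)
    linarith

end PointwiseInequalities

section LpGeometry

variable {Ω : Type*} [MeasurableSpace Ω] {ν : Measure Ω} {p : ℝ≥0∞} {E : Type*}
  [NormedAddCommGroup E]

theorem norm_rpow_toReal_eq_integral (hp0 : p ≠ 0) (hp' : p ≠ ∞) (f : Lp E p ν) :
    ‖f‖ ^ p.toReal = ∫ x, ‖f x‖ ^ p.toReal ∂ν := by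
  have hint : 0 ≤ ∫ x, ‖f x‖ ^ p.toReal ∂ν := integral_nonneg fun x ↦ by positivity
  rw [Lp.norm_def, (Lp.memLp f).eLpNorm_eq_integral_rpow_norm hp0 hp',
    ENNReal.toReal_ofReal (by positivity),
    Real.rpow_inv_rpow hint (ENNReal.toReal_pos hp0 hp').ne']

theorem one_lt_toReal (hp : 1 < p) (hp' : p ≠ ∞) : 1 < p.toReal := by
  simpa using (ENNReal.toReal_lt_toReal ENNReal.one_ne_top hp').2 hp

theorem exists_norm_sub_rpow_le_Lp [NormedSpace ℝ E] [StrictConvexSpace ℝ E] [ProperSpace E]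
    (hp : 1 < p) (hp' : p ≠ ∞) {ε : ℝ} (hε : 0 < ε) :
    ∃ C > 0, ∀ f g : Lp E p ν, ‖f - g‖ ^ p.toReal ≤
      ε * (‖f‖ ^ p.toReal + ‖g‖ ^ p.toReal) + C * ((‖f‖ ^ p.toReal + ‖g‖ ^ p.toReal) / 2 -
        ‖(1 / 2 : ℝ) • (f + g)‖ ^ p.toReal) := by
  obtain ⟨C, hC, hpointwise⟩ := exists_norm_sub_rpow_le (E := E) (one_lt_toReal hp hp') hε
  refine ⟨C, hC, fun f g ↦ ?_⟩
  have hp0 : p ≠ 0 := (zero_lt_one.trans hp).ne'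
  have hint (h : Lp E p ν) := (Lp.memLp h).integrable_norm_rpow hp0 hp'
  have hsum : Integrable (fun x ↦ ‖f x‖ ^ p.toReal + ‖g x‖ ^ p.toReal) ν := (hint f).add (hint g)
  have hgap : Integrable (fun x ↦ C * ((‖f x‖ ^ p.toReal + ‖g x‖ ^ p.toReal) / 2 -
      ‖((1 / 2 : ℝ) • (f + g) : Lp E p ν) x‖ ^ p.toReal)) ν :=
    ((hsum.div_const 2).sub (hint ((1 / 2 : ℝ) • (f + g)))).const_mul C
  simp only [norm_rpow_toReal_eq_integral hp0 hp']
  rw [← integral_add (hint f) (hint g), ← integral_const_mul, ← integral_div,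
    ← integral_sub (hsum.div_const 2) (hint _), ← integral_const_mul,
    ← integral_add (hsum.const_mul ε) hgap]
  refine integral_mono_ae (hint _) ((hsum.const_mul ε).add hgap) ?_
  filter_upwards [Lp.coeFn_sub f g, Lp.coeFn_add f g, Lp.coeFn_smul (1 / 2 : ℝ) (f + g)]
    with x hsub hadd hsmul
  rw [hsub, hsmul, Pi.smul_apply, hadd]
  exact hpointwise (f x) (g x)

theorem uniformConvexSpace_Lp [NormedSpace ℝ E] [StrictConvexSpace ℝ E] [ProperSpace E]
    [Fact (1 ≤ p)] (hp : 1 < p) (hp' : p ≠ ∞) : UniformConvexSpace (Lp E p ν) where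
  uniform_convex ε hε := by
    have hr := one_lt_toReal hp hp'
    set r := p.toReal
    obtain ⟨C, hC, hLp⟩ := exists_norm_sub_rpow_le_Lp (E := E) (ν := ν) hp hp'
      (by positivity : 0 < ε ^ r / 4)
    refine ⟨ε ^ r / (C * r), by positivity, fun f hf g hg hfg ↦ ?_⟩
    set m : ℝ := ‖(1 / 2 : ℝ) • (f + g)‖ with hm
    have hfar : ε ^ r / 2 ≤ C * (1 - m ^ r) := by
      have hle := hLp f g
      have hpow : ε ^ r ≤ ‖f - g‖ ^ r := by gcongr
      rw [hf, hg, Real.one_rpow] at hle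
      linarith
    have hbernoulli : 1 + r * (m - 1) ≤ m ^ r := by
      simpa using one_add_mul_self_le_rpow_one_add (s := m - 1)
        (by linarith [norm_nonneg ((1 / 2 : ℝ) • (f + g))]) hr.le
    have hgap : ε ^ r / (C * r) ≤ 2 * (1 - m) := by
      rw [div_le_iff₀ (by positivity)]
      linarith [mul_le_mul_of_nonneg_left hbernoulli hC.le]
    have hmidpoint : ‖f + g‖ = 2 * m := by
      rw [hm, norm_smul, Real.norm_of_nonneg (by norm_num)]
      ring
    linarith

theorem exists_norm_add_rpow_add_norm_sub_rpow_le_Lp [InnerProductSpace ℝ E] [ProperSpace E]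
    (hp : 1 < p) (hp' : p ≠ ∞) {ε : ℝ} (hε : 0 < ε) :
    ∃ t > 0, ∀ f g : Lp E p ν, ‖f + t • g‖ ^ p.toReal + ‖f - t • g‖ ^ p.toReal ≤
      2 * ‖f‖ ^ p.toReal + ε * t * (‖f‖ ^ p.toReal + ‖g‖ ^ p.toReal) := by
  obtain ⟨t, ht, hpointwise⟩ :=
    exists_norm_add_rpow_add_norm_sub_rpow_le (E := E) (one_lt_toReal hp hp') hε
  refine ⟨t, ht, fun f g ↦ ?_⟩
  have hp0 : p ≠ 0 := (zero_lt_one.trans hp).ne'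
  have hint (h : Lp E p ν) := (Lp.memLp h).integrable_norm_rpow hp0 hp'
  have hsum : Integrable (fun x ↦ ε * t * (‖f x‖ ^ p.toReal + ‖g x‖ ^ p.toReal)) ν :=
    ((hint f).add (hint g)).const_mul (ε * t)
  simp only [norm_rpow_toReal_eq_integral hp0 hp']
  rw [← integral_add (hint f) (hint g), ← integral_const_mul, ← integral_const_mul,
    ← integral_add (hint _) (hint _), ← integral_add ((hint f).const_mul 2) hsum]
  refine integral_mono_ae ((hint _).add (hint _)) (((hint f).const_mul 2).add hsum) ?_
  filter_upwards [Lp.coeFn_sub f (t • g), Lp.coeFn_add f (t • g), Lp.coeFn_smul t g]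
    with x hsub hadd hsmul
  rw [hsub, hadd, Pi.sub_apply, Pi.add_apply, hsmul]
  exact hpointwise (f x) (g x)

theorem uniformlySmooth_Lp [InnerProductSpace ℝ E] [ProperSpace E] [Fact (1 ≤ p)] (hp : 1 < p)
    (hp' : p ≠ ∞) : UniformlySmooth (Lp E p ν) := by
  intro ε hε
  have hr := one_lt_toReal hp hp'
  obtain ⟨t, ht, hLp⟩ :=
    exists_norm_add_rpow_add_norm_sub_rpow_le_Lp (E := E) (ν := ν) hp hp' (half_pos hε)
  refine ⟨t, ht, fun f g hf hg ↦ ?_⟩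
  have hg' : ‖t⁻¹ • g‖ ≤ 1 := by
    rw [norm_smul, Real.norm_of_nonneg (by positivity)]
    exact inv_mul_le_one_of_le₀ hg ht.le
  have hsum := hLp f (t⁻¹ • g)
  rw [smul_inv_smul₀ ht.ne'] at hsum
  set r := p.toReal
  have hfr : ‖f‖ ^ r ≤ 1 := Real.rpow_le_one (norm_nonneg _) hf (by positivity)
  have hgr : ‖t⁻¹ • g‖ ^ r ≤ 1 := Real.rpow_le_one (norm_nonneg _) hg' (by positivity)
  have hmean : ‖(1 / 2 : ℝ) • (‖f + g‖ + ‖f - g‖)‖ ^ r ≤ (1 + ε / 2 * t) ^ r := by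
    calc ‖(1 / 2 : ℝ) • (‖f + g‖ + ‖f - g‖)‖ ^ r
        ≤ (‖f + g‖ ^ r + ‖f - g‖ ^ r) / 2 := by
          simpa only [norm_norm] using norm_half_smul_add_rpow_le hr ‖f + g‖ ‖f - g‖
      _ ≤ 1 + ε / 2 * t := by
          have hle : ε / 2 * t * (‖f‖ ^ r + ‖t⁻¹ • g‖ ^ r) ≤ ε / 2 * t * 2 := by
            gcongr
            linarith
          linarith
      _ ≤ (1 + ε / 2 * t) ^ r :=
          Real.self_le_rpow_of_one_le (le_add_of_nonneg_right (by positivity)) hr.le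
  have hle := (Real.rpow_le_rpow_iff (norm_nonneg _) (by positivity) (by positivity)).1 hmean
  rw [norm_smul, Real.norm_of_nonneg (by norm_num), Real.norm_of_nonneg (by positivity)] at hle
  linarith

end LpGeometry

section VanishingAtInfinity

open scoped ZeroAtInfty

variable {𝕜 : Type*} [RCLike 𝕜] {ι : Type*} [TopologicalSpace ι]

theorem norm_c0_le_iff {x : C₀(ι, 𝕜)} {C : ℝ} (hC : 0 ≤ C) : ‖x‖ ≤ C ↔ ∀ i, ‖x i‖ ≤ C := by
  rw [← ZeroAtInftyContinuousMap.norm_toBCF_eq_norm, BoundedContinuousFunction.norm_le hC]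
  rfl

theorem norm_c0_apply_le (x : C₀(ι, 𝕜)) (i : ι) : ‖x i‖ ≤ ‖x‖ :=
  (norm_c0_le_iff (norm_nonneg x)).1 le_rfl i

theorem norm_add_smul_le_one_of_vanishes {m v : C₀(ι, 𝕜)} {c : ℝ} {t : 𝕜} (hm : ‖m‖ ≤ 1)
    (hv : ‖v‖ ≤ 1) (hmv : ∀ i, v i = 0 ∨ ‖m i‖ ≤ 1 - c) (ht : ‖t‖ ≤ c) : ‖m + t • v‖ ≤ 1 := by
  refine (norm_c0_le_iff zero_le_one).2 fun i ↦ ?_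
  rw [ZeroAtInftyContinuousMap.add_apply, ZeroAtInftyContinuousMap.smul_apply]
  rcases hmv i with hvi | hmi
  · rw [hvi, smul_zero, add_zero]
    exact (norm_c0_apply_le m i).trans hm
  · have htv : ‖t • v i‖ ≤ c * 1 := by
      rw [norm_smul]
      exact mul_le_mul ht ((norm_c0_apply_le v i).trans hv) (norm_nonneg _)
        ((norm_nonneg t).trans ht)
    linarith [norm_add_le (m i) (t • v i)]

theorem re_apply_le_of_vanishes {ψ : C₀(ι, 𝕜) →L[𝕜] 𝕜} {x v : C₀(ι, 𝕜)} {δ : ℝ} (hψ : ‖ψ‖ ≤ 1)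
    (hψx : 1 - δ ≤ RCLike.re (ψ x)) (hx : ‖x‖ ≤ 1) (hv : ‖v‖ ≤ 1)
    (hxv : ∀ i, v i = 0 ∨ ‖x i‖ ≤ 1 - 1 / 2) : RCLike.re (ψ v) ≤ 2 * δ := by
  have hle := (re_apply_le_norm hψ (x + ((1 / 2 : ℝ) : 𝕜) • v)).trans
    (norm_add_smul_le_one_of_vanishes hx hv hxv (RCLike.norm_of_nonneg (by norm_num)).le)
  rw [map_add, map_smul, smul_eq_mul, map_add, RCLike.re_ofReal_mul] at hle
  linarith

variable [DiscreteTopology ι]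

theorem finite_setOf_lt_norm_c0_apply (x : C₀(ι, 𝕜)) {c : ℝ} (hc : 0 < c) :
    {i | c < ‖x i‖}.Finite := by
  have hlim := x.zero_at_infty'.norm
  rw [Filter.cocompact_eq_cofinite, norm_zero] at hlim
  exact (Filter.eventually_cofinite.1 (hlim.eventually_lt_const hc)).subset
    fun i hi ↦ not_lt.2 (le_of_lt hi)

open scoped Classical in
variable (𝕜) in
/-- The `i`-th unit vector of `c₀(ι)`. -/
def c0UnitVec (i : ι) : C₀(ι, 𝕜) where
  toFun := Pi.single i 1
  continuous_toFun := continuous_of_discreteTopology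
  zero_at_infty' := by
    rw [Filter.cocompact_eq_cofinite]
    refine tendsto_const_nhds.congr' ?_
    filter_upwards [(Set.finite_singleton i).compl_mem_cofinite] with j hj
    exact (Pi.single_eq_of_ne (M := fun _ ↦ 𝕜) hj 1).symm

open scoped Classical in
theorem sum_smul_c0UnitVec_apply (s : Finset ι) (a : ι → 𝕜) (j : ι) :
    (∑ i ∈ s, a i • c0UnitVec 𝕜 i) j = if j ∈ s then a j else 0 := by
  have hcoe : (∑ i ∈ s, a i • c0UnitVec 𝕜 i) j = ∑ i ∈ s, (a i • c0UnitVec 𝕜 i) j :=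
    map_sum (⟨⟨fun x : C₀(ι, 𝕜) ↦ x j, rfl⟩, fun _ _ ↦ rfl⟩ : C₀(ι, 𝕜) →+ 𝕜) _ s
  rw [hcoe, ← Finset.sum_ite_eq s j a]
  refine Finset.sum_congr rfl fun i _ ↦ ?_
  rw [ZeroAtInftyContinuousMap.smul_apply, smul_eq_mul]
  change a i * (Pi.single i 1 : ι → 𝕜) j = _
  rw [Pi.single_apply, mul_ite, mul_one, mul_zero]

/-- The multiplication operator `x ↦ (dᵢ xᵢ)ᵢ` on `c₀(ι)`. -/
def c0Mul (d : ι → 𝕜) (hd : ∀ i, ‖d i‖ ≤ 1) : C₀(ι, 𝕜) →L[𝕜] C₀(ι, 𝕜) :=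
  LinearMap.mkContinuous
    { toFun := fun x ↦
        { toFun := fun i ↦ d i * x i
          continuous_toFun := continuous_of_discreteTopology
          zero_at_infty' := squeeze_zero_norm
            (fun i ↦ (norm_mul_le _ _).trans (mul_le_of_le_one_left (norm_nonneg _) (hd i)))
            (by simpa using x.zero_at_infty'.norm) }
      map_add' := fun x y ↦ by
        ext i
        exact mul_add _ _ _
      map_smul' := fun c x ↦ by
        ext i
        exact mul_left_comm _ _ _ } 1 fun x ↦ by
    rw [one_mul, norm_c0_le_iff (norm_nonneg x)]
    exact fun i ↦ (norm_mul_le _ _).trans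
      ((mul_le_of_le_one_left (norm_nonneg _) (hd i)).trans (norm_c0_apply_le x i))

theorem c0Mul_apply (d : ι → 𝕜) (hd : ∀ i, ‖d i‖ ≤ 1) (x : C₀(ι, 𝕜)) (i : ι) :
    c0Mul d hd x i = d i * x i := rfl

theorem norm_c0Mul_le (d : ι → 𝕜) (hd : ∀ i, ‖d i‖ ≤ 1) : ‖c0Mul d hd‖ ≤ 1 :=
  LinearMap.mkContinuous_norm_le _ zero_le_one _

theorem norm_c0Mul_apply_le (d : ι → 𝕜) (hd : ∀ i, ‖d i‖ ≤ 1) (x : C₀(ι, 𝕜)) :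
    ‖c0Mul d hd x‖ ≤ ‖x‖ := by
  simpa using (c0Mul d hd).le_of_opNorm_le (norm_c0Mul_le d hd) x

variable (𝕜) in
/-- The coordinate projection of `c₀(ι)` onto the vectors supported on `s`. -/
def c0Restrict (s : Set ι) : C₀(ι, 𝕜) →L[𝕜] C₀(ι, 𝕜) :=
  c0Mul (s.indicator 1) fun i ↦ (norm_indicator_le_norm_self _ i).trans (by simp)

theorem norm_c0Restrict_le (s : Set ι) : ‖c0Restrict 𝕜 s‖ ≤ 1 := norm_c0Mul_le _ _

theorem c0Restrict_apply_of_mem {s : Set ι} {i : ι} (hi : i ∈ s) (x : C₀(ι, 𝕜)) :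
    c0Restrict 𝕜 s x i = x i := by
  rw [c0Restrict, c0Mul_apply, Set.indicator_of_mem hi, Pi.one_apply, one_mul]

theorem c0Restrict_apply_of_notMem {s : Set ι} {i : ι} (hi : i ∉ s) (x : C₀(ι, 𝕜)) :
    c0Restrict 𝕜 s x i = 0 := by
  rw [c0Restrict, c0Mul_apply, Set.indicator_of_notMem hi, zero_mul]

theorem c0Restrict_congr {s : Set ι} {x x' : C₀(ι, 𝕜)} (h : ∀ i ∈ s, x i = x' i) :
    c0Restrict 𝕜 s x = c0Restrict 𝕜 s x' := by
  ext i
  by_cases hi : i ∈ s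
  · rw [c0Restrict_apply_of_mem hi, c0Restrict_apply_of_mem hi, h i hi]
  · rw [c0Restrict_apply_of_notMem hi, c0Restrict_apply_of_notMem hi]

theorem c0Restrict_c0Restrict (s : Set ι) (x : C₀(ι, 𝕜)) :
    c0Restrict 𝕜 s (c0Restrict 𝕜 s x) = c0Restrict 𝕜 s x :=
  c0Restrict_congr fun _ hi ↦ c0Restrict_apply_of_mem hi x

theorem c0Restrict_eq_sum (s : Finset ι) (x : C₀(ι, 𝕜)) :
    c0Restrict 𝕜 s x = ∑ i ∈ s, x i • c0UnitVec 𝕜 i := by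
  classical
  ext i
  rw [sum_smul_c0UnitVec_apply]
  split_ifs with hi
  · exact c0Restrict_apply_of_mem (Finset.mem_coe.2 hi) x
  · exact c0Restrict_apply_of_notMem (Finset.mem_coe.not.2 hi) x

theorem hasWeakStarSmallSlices_c0 : HasWeakStarSmallSlices 𝕜 C₀(ι, 𝕜) := by
  classical
  intro ε hε
  refine ⟨ε / 8, by positivity, fun x hx ↦ ?_⟩
  set s : Finset ι := (finite_setOf_lt_norm_c0_apply x (c := 1 - 1 / 2) (by norm_num)).toFinset
    with hs
  refine ⟨s.image (c0UnitVec 𝕜), ε / (2 * (s.card + 1)), by positivity,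
    fun ψ ψ' hψ hψ' hψx hψ'x hclose ↦ opNorm_le_of_forall_re_apply_le fun v hv ↦ ?_⟩
  have htail : ‖v - c0Restrict 𝕜 s v‖ ≤ 1 ∧
      ∀ i, (v - c0Restrict 𝕜 s v) i = 0 ∨ ‖x i‖ ≤ 1 - 1 / 2 := by
    refine ⟨(norm_c0_le_iff zero_le_one).2 fun i ↦ ?_, fun i ↦ ?_⟩ <;>
      rw [ZeroAtInftyContinuousMap.sub_apply] <;> by_cases hi : i ∈ (s : Set ι)
    · simp [c0Restrict_apply_of_mem hi]
    · rw [c0Restrict_apply_of_notMem hi, sub_zero]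
      exact (norm_c0_apply_le v i).trans hv
    · exact Or.inl (by rw [c0Restrict_apply_of_mem hi, sub_self])
    · exact Or.inr (not_lt.1 fun hlt ↦ hi (by simpa [hs] using hlt))
  have hψtail := re_apply_le_of_vanishes hψ hψx hx htail.1 htail.2
  have hψ'tail := re_apply_le_of_vanishes (v := -(v - c0Restrict 𝕜 s v)) hψ' hψ'x hx
    (by rw [norm_neg]; exact htail.1) fun i ↦ (htail.2 i).imp_left fun h ↦ by
      rw [ZeroAtInftyContinuousMap.neg_apply, h, neg_zero]
  have hhead : ‖(ψ - ψ') (c0Restrict 𝕜 s v)‖ ≤ ε / 2 := by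
    rw [c0Restrict_eq_sum, map_sum]
    calc ‖∑ i ∈ s, (ψ - ψ') (v i • c0UnitVec 𝕜 i)‖ ≤ ∑ i ∈ s, ε / (2 * (s.card + 1)) := by
          refine norm_sum_le_of_le _ fun i hi ↦ ?_
          rw [map_smul, norm_smul, sub_apply]
          exact (mul_le_of_le_one_left (norm_nonneg _) ((norm_c0_apply_le v i).trans hv)).trans
            (hclose _ (Finset.mem_image_of_mem _ hi))
      _ ≤ ε / 2 := by
          rw [Finset.sum_const, nsmul_eq_mul, ← mul_div_assoc,
            div_le_div_iff₀ (by positivity) (by norm_num)]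
          nlinarith
  have hsplit : (ψ - ψ') v =
      ψ (v - c0Restrict 𝕜 s v) + ψ' (-(v - c0Restrict 𝕜 s v)) + (ψ - ψ') (c0Restrict 𝕜 s v) := by
    simp only [sub_apply, map_sub, map_neg]
    ring
  rw [hsplit, map_add, map_add]
  linarith [RCLike.re_le_norm ((ψ - ψ') (c0Restrict 𝕜 s v))]

end VanishingAtInfinity

section Composition

variable {𝕜 : Type*} [RCLike 𝕜] {X Y : Type*} [NormedAddCommGroup X] [NormedSpace 𝕜 X]
  [NormedAddCommGroup Y] [NormedSpace 𝕜 Y]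

theorem opNorm_comp_le_left {G : X →L[𝕜] Y} {D : X →L[𝕜] X} (hD : ‖D‖ ≤ 1) : ‖G ∘L D‖ ≤ ‖G‖ :=
  (G.opNorm_comp_le D).trans (mul_le_of_le_one_right (norm_nonneg G) hD)

theorem norm_eq_one_and_attains_comp {G : X →L[𝕜] Y} {D : X →L[𝕜] X} {z : X} (hG : G ≠ 0)
    (hD : ‖D‖ ≤ 1) (hz : ‖z‖ ≤ 1) (hGDz : ‖G (D z)‖ = ‖G‖) :
    ‖z‖ = 1 ∧ ‖(G ∘L D) z‖ = ‖G ∘L D‖ := by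
  have hDz : ‖D z‖ ≤ ‖z‖ := by simpa using D.le_of_opNorm_le hD z
  have hGz : ‖G‖ * 1 ≤ ‖G‖ * ‖z‖ := by
    rw [mul_one]
    exact hGDz.ge.trans (G.le_opNorm_of_le hDz)
  exact ⟨hz.antisymm (le_of_mul_le_mul_left hGz (norm_pos_iff.2 hG)),
    ((G ∘L D).unit_le_opNorm z hz).antisymm ((opNorm_comp_le_left hD).trans hGDz.ge)⟩

theorem norm_comp_sub_le_of_opNorm_le_one {G R : X →L[𝕜] Y} {D : X →L[𝕜] X} (hD : ‖D‖ ≤ 1) :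
    ‖G ∘L D - R‖ ≤ ‖G - R‖ + ‖R ∘L D - R‖ := by
  calc ‖G ∘L D - R‖ = ‖(G - R) ∘L D + (R ∘L D - R)‖ := by
        rw [ContinuousLinearMap.sub_comp, sub_add_sub_cancel]
    _ ≤ ‖G - R‖ + ‖R ∘L D - R‖ := norm_add_le_of_le (opNorm_comp_le_left hD) le_rfl

end Composition

section HilbertTarget

variable {𝕜 : Type*} [RCLike 𝕜] {X : Type*} [NormedAddCommGroup X] [NormedSpace 𝕜 X]
  {Y : Type*} [NormedAddCommGroup Y] [InnerProductSpace 𝕜 Y]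

open scoped InnerProductSpace

theorem sq_norm_apply_le_of_norm_add_le_one {R : X →L[𝕜] Y} {y : Y} {m h : X} {η : ℝ}
    (hR : ‖R‖ ≤ 1) (hy : ‖y‖ = 1) (hRm : 1 - η ≤ RCLike.re ⟪y, R m⟫_𝕜) (hadd : ‖m + h‖ ≤ 1)
    (hsub : ‖m - h‖ ≤ 1) : ‖R h‖ ^ 2 ≤ 2 * η := by
  have hRadd : ‖R m + R h‖ ^ 2 ≤ 1 := by
    rw [← map_add]
    exact pow_le_one₀ (norm_nonneg _) ((R.unit_le_opNorm _ hadd).trans hR)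
  have hRsub : ‖R m - R h‖ ^ 2 ≤ 1 := by
    rw [← map_sub]
    exact pow_le_one₀ (norm_nonneg _) ((R.unit_le_opNorm _ hsub).trans hR)
  have hRm' : 1 - η ≤ ‖R m‖ := by simpa [hy] using hRm.trans (re_inner_le_norm y (R m))
  have hRm_sq : 1 - 2 * η ≤ ‖R m‖ ^ 2 := by nlinarith [sq_nonneg (‖R m‖ - 1)]
  linarith [parallelogram_law_with_norm 𝕜 (R m) (R h)]

theorem norm_half_smul_add_le_of_le_norm_sub {p q : Y} {b : ℝ} (hb : 0 ≤ b) (hb1 : b ≤ 1)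
    (hp : ‖p‖ ≤ 1) (hq : ‖q‖ ≤ 1) (hpq : b ≤ ‖p - q‖) :
    ‖((1 / 2 : ℝ) : 𝕜) • (p + q)‖ ≤ 1 - b ^ 2 / 8 := by
  have hadd_sq : ‖p + q‖ ^ 2 ≤ 4 - b ^ 2 := by
    have hp_sq : ‖p‖ ^ 2 ≤ 1 := pow_le_one₀ (norm_nonneg _) hp
    have hq_sq : ‖q‖ ^ 2 ≤ 1 := pow_le_one₀ (norm_nonneg _) hq
    have hb_sq : b ^ 2 ≤ ‖p - q‖ ^ 2 := pow_le_pow_left₀ hb hpq 2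
    linarith [parallelogram_law_with_norm 𝕜 p q]
  have hb_sq1 : b ^ 2 ≤ 1 := pow_le_one₀ hb hb1
  have hadd : ‖p + q‖ ≤ 2 * (1 - b ^ 2 / 8) :=
    le_of_sq_le_sq (hadd_sq.trans (by nlinarith [sq_nonneg (b ^ 2)])) (by linarith)
  rw [norm_smul, RCLike.norm_of_nonneg (by norm_num)]
  linarith

theorem norm_innerSL_comp_le_one {R : X →L[𝕜] Y} {y : Y} (hR : ‖R‖ ≤ 1) (hy : ‖y‖ = 1) :
    ‖innerSL 𝕜 y ∘L R‖ ≤ 1 := by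
  refine (ContinuousLinearMap.opNorm_comp_le _ R).trans ?_
  rwa [innerSL_apply_norm, hy, one_mul]

theorem re_inner_apply_sub_le {R S : X →L[𝕜] Y} {x : X} {y : Y} (hy : ‖y‖ = 1) (hx : ‖x‖ ≤ 1) :
    RCLike.re ⟪y, R x⟫_𝕜 - ‖S - R‖ ≤ RCLike.re ⟪y, S x⟫_𝕜 := by
  have hle : RCLike.re ⟪y, R x - S x⟫_𝕜 ≤ ‖y‖ * ‖S x - R x‖ := by
    rw [norm_sub_rev]
    exact re_inner_le_norm y (R x - S x)
  rw [inner_sub_right, map_sub, hy, one_mul, ← sub_apply] at hle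
  linarith [(S - R).unit_le_opNorm x hx]

end HilbertTarget

section PointedVanishingAtInfinity

open scoped ZeroAtInfty InnerProductSpace

variable {𝕜 : Type*} [RCLike 𝕜]

theorem exists_mul_eq_norm_sub_le {a x : 𝕜} {b : ℝ} (ha : ‖a‖ ≤ 1) (hx : ‖x‖ ≤ 1)
    (hbx : 1 - b < ‖x‖) :
    ∃ d z : 𝕜, ‖d‖ ≤ 1 ∧ ‖z‖ ≤ 1 ∧ d * z = a ∧ ‖z - x‖ ≤ b ∧ (d = 1 ∨ b ≤ ‖a - x‖) := by
  rcases le_total ‖a - x‖ b with hclose | hfar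
  · exact ⟨1, a, norm_one.le, ha, one_mul a, hclose, Or.inl rfl⟩
  obtain ⟨z, hz, hzx⟩ := RCLike.exists_norm_mul_eq_self x
  have hz0 : z ≠ 0 := norm_pos_iff.1 (hz ▸ one_pos)
  refine ⟨a / z, z, by rwa [norm_div, hz, div_one], hz.le, div_mul_cancel₀ a hz0, ?_, Or.inr hfar⟩
  calc ‖z - x‖ = ‖z * ((1 - ‖x‖ : ℝ) : 𝕜)‖ := by
        rw [RCLike.ofReal_sub, RCLike.ofReal_one, mul_sub, mul_one, hzx]
    _ = 1 - ‖x‖ := by rw [norm_mul, hz, one_mul, RCLike.norm_of_nonneg (by linarith)]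
    _ ≤ b := by linarith

variable {ι : Type*} [TopologicalSpace ι] {Y : Type*} [NormedAddCommGroup Y]

theorem norm_apply_le_of_vanishes [InnerProductSpace 𝕜 Y] {R : C₀(ι, 𝕜) →L[𝕜] Y} {y : Y}
    {m v : C₀(ι, 𝕜)} {c η τ : ℝ} (hR : ‖R‖ ≤ 1) (hy : ‖y‖ = 1)
    (hRm : 1 - η ≤ RCLike.re ⟪y, R m⟫_𝕜) (hm : ‖m‖ ≤ 1) (hv : ‖v‖ ≤ 1)
    (hmv : ∀ i, v i = 0 ∨ ‖m i‖ ≤ 1 - c) (hc : 0 < c) (hτ : 0 ≤ τ) (hη : 2 * η ≤ (c * τ) ^ 2) :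
    ‖R v‖ ≤ τ := by
  have hadd : ‖m + (c : 𝕜) • v‖ ≤ 1 :=
    norm_add_smul_le_one_of_vanishes hm hv hmv (RCLike.norm_of_nonneg hc.le).le
  have hsub : ‖m - (c : 𝕜) • v‖ ≤ 1 := by
    have hneg : m - (c : 𝕜) • v = m + (-c : 𝕜) • v := by
      ext i
      simp [sub_eq_add_neg]
    rw [hneg]
    exact norm_add_smul_le_one_of_vanishes hm hv hmv
      (by rw [norm_neg, RCLike.norm_of_nonneg hc.le])
  have hsq := (sq_norm_apply_le_of_norm_add_le_one hR hy hRm hadd hsub).trans hη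
  rw [map_smul, norm_smul, RCLike.norm_of_nonneg hc.le] at hsq
  exact le_of_mul_le_mul_left (le_of_sq_le_sq hsq (by positivity)) hc

variable [DiscreteTopology ι]

theorem exists_c0_mul_eq_norm_sub_le {s : Finset ι} {a x : C₀(ι, 𝕜)} {b : ℝ} (hb : 0 ≤ b)
    (ha : ‖a‖ ≤ 1) (hx : ‖x‖ ≤ 1) (hbx : ∀ i ∈ s, 1 - b < ‖x i‖) :
    ∃ (d : ι → 𝕜) (z : C₀(ι, 𝕜)), (∀ i, ‖d i‖ ≤ 1) ∧ ‖z‖ ≤ 1 ∧ (∀ i ∈ s, d i * z i = a i) ∧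
      ‖z - x‖ ≤ b ∧ ∀ i, d i = 1 ∨ b ≤ ‖a i - x i‖ := by
  have hcoord (i : ι) : ∃ d z : 𝕜, ‖d‖ ≤ 1 ∧ ‖z‖ ≤ 1 ∧ (i ∈ s → d * z = a i) ∧ ‖z - x i‖ ≤ b ∧
      (i ∉ s → z = x i) ∧ (d = 1 ∨ b ≤ ‖a i - x i‖) := by
    have hxi := (norm_c0_apply_le x i).trans hx
    by_cases hi : i ∈ s
    · obtain ⟨d, z, hd, hz, hdz, hzx, hd1⟩ :=
        exists_mul_eq_norm_sub_le ((norm_c0_apply_le a i).trans ha) hxi (hbx i hi)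
      exact ⟨d, z, hd, hz, fun _ ↦ hdz, hzx, fun h ↦ absurd hi h, hd1⟩
    · exact ⟨1, x i, norm_one.le, hxi, fun h ↦ absurd h hi, by simpa using hb, fun _ ↦ rfl,
        Or.inl rfl⟩
  choose d z hd hz hdz hzx hzs hd1 using hcoord
  have hlim : Filter.Tendsto z (Filter.cocompact ι) (nhds 0) := by
    refine x.zero_at_infty'.congr' ?_
    rw [Filter.cocompact_eq_cofinite]
    filter_upwards [s.finite_toSet.compl_mem_cofinite] with i hi
    exact (hzs i hi).symm
  exact ⟨d, ⟨⟨z, continuous_of_discreteTopology⟩, hlim⟩, hd, (norm_c0_le_iff zero_le_one).2 hz, hdz,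
    (norm_c0_le_iff hb).2 hzx, hd1⟩

theorem exists_norm_apply_eq_opNorm_of_apply_c0Restrict [NormedSpace 𝕜 Y] {s : Finset ι}
    {G : C₀(ι, 𝕜) →L[𝕜] Y} (hG : ∀ v, G (c0Restrict 𝕜 s v) = G v) :
    ∃ a, ‖a‖ ≤ 1 ∧ ‖G a‖ = ‖G‖ := by
  classical
  have : ProperSpace 𝕜 := FiniteDimensional.proper_rclike 𝕜 𝕜
  have hcompact : IsCompact (Set.univ.pi fun _ : ι ↦ Metric.closedBall (0 : 𝕜) 1) :=
    isCompact_univ_pi fun _ ↦ isCompact_closedBall _ _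
  have hcont : Continuous fun a : ι → 𝕜 ↦ ‖G (∑ i ∈ s, a i • c0UnitVec 𝕜 i)‖ := by fun_prop
  obtain ⟨a, ha, hmax⟩ := hcompact.exists_isMaxOn ⟨0, by simp⟩ hcont.continuousOn
  have ha1 : ‖∑ i ∈ s, a i • c0UnitVec 𝕜 i‖ ≤ 1 := by
    refine (norm_c0_le_iff zero_le_one).2 fun j ↦ ?_
    rw [sum_smul_c0UnitVec_apply]
    split_ifs
    · simpa using ha j trivial
    · simp
  refine ⟨_, ha1, (G.unit_le_opNorm _ ha1).antisymm
    (G.opNorm_le_of_unit_norm (norm_nonneg _) fun v hv ↦ ?_)⟩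
  rw [← hG v, c0Restrict_eq_sum]
  exact hmax fun i _ ↦ by simpa using (norm_c0_apply_le v i).trans hv.le

variable [InnerProductSpace 𝕜 Y] {R : C₀(ι, 𝕜) →L[𝕜] Y} {y : Y} {e : ℝ}

theorem norm_comp_c0Mul_sub_le {m : C₀(ι, 𝕜)} {d : ι → 𝕜} {c η τ : ℝ} (hd : ∀ i, ‖d i‖ ≤ 1)
    (hR : ‖R‖ ≤ 1) (hy : ‖y‖ = 1) (hRm : 1 - η ≤ RCLike.re ⟪y, R m⟫_𝕜) (hm : ‖m‖ ≤ 1)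
    (hmd : ∀ i, d i = 1 ∨ ‖m i‖ ≤ 1 - c) (hc : 0 < c) (hτ : 0 ≤ τ) (hη : 2 * η ≤ (c * τ) ^ 2) :
    ‖R ∘L c0Mul d hd - R‖ ≤ 2 * τ := by
  refine ContinuousLinearMap.opNorm_le_of_unit_norm (by positivity) fun v hv ↦ ?_
  set w : C₀(ι, 𝕜) := (2⁻¹ : 𝕜) • (c0Mul d hd v - v) with hw
  have hw1 : ‖w‖ ≤ 1 := by
    rw [hw, norm_smul, norm_inv, RCLike.norm_ofNat]
    linarith [norm_sub_le (c0Mul d hd v) v, norm_c0Mul_apply_le d hd v]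
  have hmw (i : ι) : w i = 0 ∨ ‖m i‖ ≤ 1 - c := by
    refine (hmd i).imp_left fun hdi ↦ ?_
    rw [hw, ZeroAtInftyContinuousMap.smul_apply, ZeroAtInftyContinuousMap.sub_apply, c0Mul_apply,
      hdi, one_mul, sub_self, smul_zero]
  have hRw : (R ∘L c0Mul d hd - R) v = (2 : 𝕜) • R w := by
    rw [hw, map_smul, smul_inv_smul₀ two_ne_zero, map_sub]
    rfl
  rw [hRw, norm_smul, RCLike.norm_ofNat]
  exact mul_le_mul_of_nonneg_left
    (norm_apply_le_of_vanishes hR hy hRm hm hw1 hmw hc hτ hη) zero_le_two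

theorem norm_comp_c0Mul_sub_le_of_midpoint {a x : C₀(ι, 𝕜)} {d : ι → 𝕜} {δ τ : ℝ}
    (hd : ∀ i, ‖d i‖ ≤ 1) (he : 0 < e) (he1 : e ≤ 1) (hR : ‖R‖ ≤ 1) (hy : ‖y‖ = 1) (ha : ‖a‖ ≤ 1)
    (hx : ‖x‖ ≤ 1) (hRa : 1 - δ ≤ RCLike.re ⟪y, R a⟫_𝕜) (hRx : 1 - δ ≤ RCLike.re ⟪y, R x⟫_𝕜)
    (hax : ∀ i, d i = 1 ∨ e ≤ ‖a i - x i‖) (hτ : 0 ≤ τ) (hδ : 2 * δ ≤ (e ^ 2 / 8 * τ) ^ 2) :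
    ‖R ∘L c0Mul d hd - R‖ ≤ 2 * τ := by
  refine norm_comp_c0Mul_sub_le (m := ((1 / 2 : ℝ) : 𝕜) • (a + x)) hd hR hy ?_ ?_ (fun i ↦ ?_)
    (by positivity) hτ hδ
  · rw [map_smul, map_add, inner_smul_right, inner_add_right, RCLike.re_ofReal_mul, map_add]
    linarith
  · rw [norm_smul, RCLike.norm_of_nonneg (by norm_num)]
    linarith [norm_add_le a x]
  · refine (hax i).imp_right fun hi ↦ ?_
    rw [ZeroAtInftyContinuousMap.smul_apply, ZeroAtInftyContinuousMap.add_apply]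
    exact norm_half_smul_add_le_of_le_norm_sub he.le he1 ((norm_c0_apply_le a i).trans ha)
      ((norm_c0_apply_le x i).trans hx) hi

theorem exists_attains_rankOnePerturb_of_apply_c0Restrict {s : Finset ι} {x : C₀(ι, 𝕜)} {δ : ℝ}
    (he : 0 < e) (he1 : e ≤ 1) (hR : ‖R‖ ≤ 1) (hRs : ∀ v, R (c0Restrict 𝕜 s v) = R v)
    (hy : ‖y‖ = 1) (hx : ‖x‖ ≤ 1) (hRx : 1 - e * δ / 2 ≤ RCLike.re ⟪y, R x⟫_𝕜) :
    ∃ a, ‖a‖ ≤ 1 ∧ 1 - δ ≤ RCLike.re ⟪y, R a⟫_𝕜 ∧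
      ‖rankOnePerturb R (innerSL 𝕜 y ∘L R) y e a‖ = ‖rankOnePerturb R (innerSL 𝕜 y ∘L R) y e‖ := by
  set φ : C₀(ι, 𝕜) →L[𝕜] 𝕜 := innerSL 𝕜 y ∘L R with hφ
  obtain ⟨z, hz, hattain⟩ := exists_norm_apply_eq_opNorm_of_apply_c0Restrict (s := s)
    (G := rankOnePerturb R φ y e) fun v ↦ by
      simp only [rankOnePerturb_apply, hφ, ContinuousLinearMap.comp_apply, hRs]
  obtain ⟨u, hu, huφ⟩ := RCLike.exists_norm_eq_mul_self (φ z)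
  refine ⟨u • z, by rwa [norm_smul, hu, one_mul], ?_,
    by rw [map_smul, norm_smul, hu, hattain, one_mul]⟩
  have hφuz : RCLike.re ⟪y, R (u • z)⟫_𝕜 = ‖φ z‖ := by
    rw [map_smul, inner_smul_right, ← RCLike.ofReal_re (K := 𝕜) ‖φ z‖, huφ]
    rfl
  have hle : RCLike.re ⟪y, R x⟫_𝕜 + e * RCLike.re ⟪y, R x⟫_𝕜 ≤ 1 + e * ‖φ z‖ :=
    re_inner_add_le_one_add_of_attains he.le hR hy hx hz hattain
  have hRx1 : RCLike.re ⟪y, R x⟫_𝕜 ≤ 1 :=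
    (re_apply_le_norm (norm_innerSL_comp_le_one hR hy) x).trans hx
  rw [hφuz]
  refine le_of_mul_le_mul_left ?_ he
  nlinarith

theorem exists_attains_near_of_apply_c0Restrict {s : Finset ι} {x : C₀(ι, 𝕜)} (he : 0 < e)
    (he1 : e < 1) (hR : ‖R‖ ≤ 1) (hRc : IsCompactOperator R)
    (hRs : ∀ v, R (c0Restrict 𝕜 s v) = R v) (hy : ‖y‖ = 1) (hx : ‖x‖ ≤ 1)
    (hxs : ∀ i ∈ s, 1 - e < ‖x i‖) (hRx : 1 - e ^ 7 / 256 ≤ RCLike.re ⟪y, R x⟫_𝕜) :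
    ∃ (T : C₀(ι, 𝕜) →L[𝕜] Y) (z : C₀(ι, 𝕜)), IsCompactOperator T ∧ ‖z‖ = 1 ∧ ‖T z‖ = ‖T‖ ∧
      ‖T - R‖ ≤ 3 * e ∧ ‖z - x‖ ≤ e := by
  obtain ⟨a, ha, hRa, hattain⟩ := exists_attains_rankOnePerturb_of_apply_c0Restrict
    (δ := e ^ 6 / 128) he he1.le hR hRs hy hx (by linarith)
  obtain ⟨d, z, hd, hz, hdz, hzx, hd1⟩ := exists_c0_mul_eq_norm_sub_le he.le ha hx hxs
  set φ : C₀(ι, 𝕜) →L[𝕜] 𝕜 := innerSL 𝕜 y ∘L R with hφ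
  set G := rankOnePerturb R φ y e with hG
  have hGs (v : C₀(ι, 𝕜)) : G (c0Restrict 𝕜 s v) = G v := by
    simp only [hG, rankOnePerturb_apply, hφ, ContinuousLinearMap.comp_apply, hRs]
  have hGDz : G (c0Mul d hd z) = G a := by rw [← hGs, c0Restrict_congr (x' := a) hdz, hGs]
  have hG0 : G ≠ 0 := by
    have hle : RCLike.re ⟪y, R x⟫_𝕜 + e * RCLike.re (φ x) ≤ ‖G‖ :=
      re_inner_add_le_norm_rankOnePerturb hy hx
    have hφx : RCLike.re (φ x) = RCLike.re ⟪y, R x⟫_𝕜 := rfl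
    have hpow : e ^ 7 ≤ 1 := pow_le_one₀ he.le he1.le
    exact norm_pos_iff.1 (by nlinarith)
  obtain ⟨hz1, hTz⟩ := norm_eq_one_and_attains_comp hG0 (norm_c0Mul_le d hd) hz (hGDz ▸ hattain)
  refine ⟨G ∘L c0Mul d hd, z, (isCompactOperator_rankOnePerturb hRc).comp_clm _, hz1, hTz, ?_, hzx⟩
  have hGR : ‖G - R‖ ≤ e := norm_rankOnePerturb_sub_le he.le (norm_innerSL_comp_le_one hR hy) hy
  have hRD : ‖R ∘L c0Mul d hd - R‖ ≤ 2 * e :=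
    norm_comp_c0Mul_sub_le_of_midpoint hd he he1.le hR hy ha hx hRa
      (by linarith [pow_le_pow_of_le_one he.le he1.le (show 6 ≤ 7 by norm_num), pow_pos he 7])
      hd1 he.le (by linarith)
  linarith [norm_comp_sub_le_of_opNorm_le_one (G := G) (R := R) (norm_c0Mul_le d hd)]

theorem exists_finset_norm_comp_c0Restrict_sub_le {x : C₀(ι, 𝕜)} {η τ : ℝ} (he : 0 < e)
    (he1 : e < 1) (hR : ‖R‖ ≤ 1) (hy : ‖y‖ = 1) (hx : ‖x‖ ≤ 1)
    (hRx : 1 - η ≤ RCLike.re ⟪y, R x⟫_𝕜) (hτ : 0 ≤ τ) (hη : 2 * η ≤ (e * τ) ^ 2) :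
    ∃ s : Finset ι, (∀ i ∈ s, 1 - e < ‖x i‖) ∧ ‖R ∘L c0Restrict 𝕜 s - R‖ ≤ 2 * τ := by
  have hfin := finite_setOf_lt_norm_c0_apply x (c := 1 - e) (by linarith)
  refine ⟨hfin.toFinset, fun i hi ↦ hfin.mem_toFinset.1 hi,
    norm_comp_c0Mul_sub_le _ hR hy hRx hx (fun i ↦ ?_) he hτ hη⟩
  by_cases hi : i ∈ (hfin.toFinset : Set ι)
  · exact Or.inl (Set.indicator_of_mem hi _)
  · exact Or.inr (not_lt.1 fun hlt ↦ hi (hfin.mem_toFinset.2 hlt))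

theorem exists_attains_near_of_le_re_inner {x : C₀(ι, 𝕜)} (he : 0 < e) (he1 : e < 1)
    (hR : ‖R‖ ≤ 1) (hRc : IsCompactOperator R) (hy : ‖y‖ = 1) (hx : ‖x‖ ≤ 1)
    (hRx : 1 - e ^ 16 / 2 ^ 21 ≤ RCLike.re ⟪y, R x⟫_𝕜) :
    ∃ (T : C₀(ι, 𝕜) →L[𝕜] Y) (z : C₀(ι, 𝕜)), IsCompactOperator T ∧ ‖z‖ = 1 ∧ ‖T z‖ = ‖T‖ ∧
      ‖T - R‖ ≤ 5 * e ∧ ‖z - x‖ ≤ e := by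
  obtain ⟨s, hxs, hRs⟩ := exists_finset_norm_comp_c0Restrict_sub_le (τ := e ^ 7 / 1024) he he1 hR hy
    hx hRx (by positivity) (by apply le_of_eq; ring)
  have hpow16 : e ^ 16 ≤ e ^ 7 := pow_le_pow_of_le_one he.le he1.le (by norm_num)
  have hpow7 : e ^ 7 ≤ e := pow_le_of_le_one he.le he1.le (by norm_num)
  have hRx' : 1 - e ^ 7 / 256 ≤ RCLike.re ⟪y, (R ∘L c0Restrict 𝕜 s) x⟫_𝕜 := by
    linarith [re_inner_apply_sub_le (R := R) (S := R ∘L c0Restrict 𝕜 s) hy hx, pow_pos he 7]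
  have hRs1 : ‖R ∘L c0Restrict 𝕜 s‖ ≤ 1 := by
    refine le_trans ?_ hR
    exact opNorm_comp_le_left (norm_c0Restrict_le _)
  obtain ⟨T, z, hT, hz, hTz, hTR, hzx⟩ := exists_attains_near_of_apply_c0Restrict he he1 hRs1
    (hRc.comp_clm (c0Restrict 𝕜 s)) (fun v ↦ congrArg R (c0Restrict_c0Restrict _ v)) hy hx hxs hRx'
  exact ⟨T, z, hT, hz, hTz,
    by linarith [norm_sub_le_norm_sub_add_norm_sub T (R ∘L c0Restrict 𝕜 s) R], hzx⟩

theorem pointedBPBpCompact_c0 : PointedBPBpCompact 𝕜 C₀(ι, 𝕜) Y := by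
  intro ε hε
  obtain ⟨e, he, he'⟩ : ∃ e, 0 < e ∧ e < min (1 / 20) (ε / 105) := exists_between (by positivity)
  obtain ⟨he1, he2⟩ := lt_min_iff.1 he'
  refine ⟨e ^ 16 / 2 ^ 21, by positivity, fun y R x hy hRc hR hx hRx ↦ ?_⟩
  obtain ⟨T, z, hT, hz, hTz, hTR, hzx⟩ :=
    exists_attains_near_of_le_re_inner he (by linarith) hR hRc hy hx.le hRx.le
  have hpow : e ^ 16 ≤ e ^ 2 := pow_le_pow_of_le_one he.le (by linarith) (by norm_num)
  obtain ⟨S, hSc, hS, hSz, hSR⟩ := exists_contraction_apply_eq_of_attains (e := 5 * e) hR hy hx hz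
    hT hTz hTR (by linarith) (by linarith) (by nlinarith)
  exact ⟨S, z, hSc, hS, hz, hSz, by linarith, by linarith⟩

end PointedVanishingAtInfinity

section Conclusion

open scoped ZeroAtInfty

theorem bpbp_compact_L1_c0_Lp_hilbert_general {𝕜 : Type*} [RCLike 𝕜] {Y : Type*}
    [NormedAddCommGroup Y] [InnerProductSpace 𝕜 Y] {Ω : Type*} [MeasurableSpace Ω] (μ : Measure Ω) :
    (∀ (ι : Type*) [TopologicalSpace ι] [DiscreteTopology ι],
      BPBpCompact 𝕜 (Lp C₀(ι, 𝕜) 1 μ) Y) ∧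
    ∀ (Ω' : Type*) [MeasurableSpace Ω'] (ν : Measure Ω') (p : ℝ≥0∞) [Fact (1 ≤ p)], 1 < p → p ≠ ∞ →
      BPBpCompact 𝕜 (Lp (Lp 𝕜 p ν) 1 μ) Y := by
  refine ⟨fun ι _ _ ↦ pointedBPBpCompact_c0.bpbpCompact_L1 hasWeakStarSmallSlices_c0,
    fun Ω' _ ν p _ hp hp' ↦ ?_⟩
  let := InnerProductSpace.rclikeToReal 𝕜 𝕜
  have : ProperSpace 𝕜 := FiniteDimensional.proper_rclike 𝕜 𝕜
  have : UniformConvexSpace (Lp 𝕜 p ν) := uniformConvexSpace_Lp hp hp'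
  exact pointedBPBpCompact_of_uniformConvexSpace.bpbpCompact_L1
    (uniformlySmooth_Lp hp hp').hasWeakStarSmallSlices

end Conclusion

/-- If Y is a Hilbert space, then (L₁(μ, c₀), Y) and (L₁(μ, L_p(ν)), Y) (1 < p < ∞)
have the BPBp for compact operators. -/
theorem bpbp_compact_L1_c0_Lp_hilbert {𝕜 : Type*} [RCLike 𝕜] {Y : Type*}
    [NormedAddCommGroup Y] [InnerProductSpace 𝕜 Y] [CompleteSpace Y]
    {Ω : Type*} [MeasurableSpace Ω] (μ : MeasureTheory.Measure Ω) :
    BPBpCompact 𝕜 (MeasureTheory.Lp (ZeroAtInftyContinuousMap ℕ 𝕜) 1 μ) Y ∧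
    ∀ (Ω' : Type) (_ : MeasurableSpace Ω') (ν : MeasureTheory.Measure Ω') (p : ℝ≥0∞),
      ∀ (hp : 1 < p), p ≠ ⊤ →
        haveI : Fact (1 ≤ p) := ⟨hp.le⟩
        BPBpCompact 𝕜 (MeasureTheory.Lp (MeasureTheory.Lp 𝕜 p ν) 1 μ) Y :=
  ⟨(bpbp_compact_L1_c0_Lp_hilbert_general.{_, _, _, _, 0} μ).1 ℕ, fun Ω' _ ν p hp hp' ↦
    have : Fact (1 ≤ p) := ⟨hp.le⟩
    (bpbp_compact_L1_c0_Lp_hilbert_general.{_, _, _, 0} μ).2 Ω' ν p hp hp'⟩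
end
end

section
/- Let X and Y be Banach spaces and let 1 ≤ p < ∞. If the pair (X, ℓ_p(Y)) has the BPBp for compact operators, then the pair (X, L_p(μ, Y)) has the BPBp for compact operators for every measure space (Ω, Σ, μ) such that L₁(μ) is infinite-dimensional. -/
open MeasureTheory

noncomputable section

open scoped ENNReal

/-!
If the identity of `W` is uniformly approximated on finite sets, hence on compact sets, by
contractions `J ∘ Q` with `J` an isometric embedding of `Z` into `W`, then every norm-one compact
`T : X → W` is close to `J ∘ R` with `R : X → Z` compact of norm one. Approximating `R` by a
norm-attaining operator and composing with `J` transfers the property from `(X, Z)` to `(X, W)`.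

For `Z = ℓ_p(Y)` and `W = L_p(μ, Y)`, take a sequence of disjoint sets of positive finite measure:
`J` sends a sequence to the normalized step function on these sets and `Q` averages over them, so
that `J ∘ Q` fixes all step functions. Such a sequence exists because `L₁(μ)` is
infinite-dimensional, and it can be refined so that finitely many given elements of `L_p(μ, Y)` are
all close to step functions on it.
-/

open Function Set Filter

section Transfer

variable {𝕜 : Type*} [RCLike 𝕜] {X Z W : Type*} [NormedAddCommGroup X] [NormedSpace 𝕜 X]
  [NormedAddCommGroup Z] [NormedSpace 𝕜 Z] [NormedAddCommGroup W] [NormedSpace 𝕜 W]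

variable (𝕜 Z W) in
/-- The identity of `W` is approximated on finite sets by contractions `J ∘ Q` that factor through
isometric embeddings `J` of `Z` into `W`. This is what transfers the Bishop–Phelps–Bollobás
property for compact operators from range `Z` to range `W`. -/
def IdApproxFactorsThrough : Prop :=
  ∀ F : Set W, F.Finite → ∀ δ : ℝ, 0 < δ →
    ∃ (J : Z →ₗᵢ[𝕜] W) (Q : W →L[𝕜] Z), ‖Q‖ ≤ 1 ∧ ∀ w ∈ F, ‖J (Q w) - w‖ ≤ δ

lemma norm_isometry_comp_apply_sub_le (J : Z →ₗᵢ[𝕜] W) {Q : W →L[𝕜] Z} (hQ : ‖Q‖ ≤ 1) (v w : W) :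
    ‖J (Q v) - v‖ ≤ ‖J (Q w) - w‖ + 2 * ‖v - w‖ := by
  have hJQ : ‖J (Q (v - w))‖ ≤ ‖v - w‖ := by
    simpa only [J.norm_map, one_mul] using Q.le_of_opNorm_le hQ (v - w)
  calc ‖J (Q v) - v‖ = ‖(J (Q w) - w) + J (Q (v - w)) - (v - w)‖ := by
        rw [map_sub, map_sub]; congr 1; abel
    _ ≤ ‖J (Q w) - w‖ + ‖J (Q (v - w))‖ + ‖v - w‖ :=
        (norm_sub_le _ _).trans (by gcongr; exact norm_add_le _ _)
    _ ≤ ‖J (Q w) - w‖ + 2 * ‖v - w‖ := by linarith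

lemma norm_inv_norm_smul_sub_self {v : Z} (hv : v ≠ 0) :
    ‖((‖v‖⁻¹ : ℝ) : 𝕜) • v - v‖ = |1 - ‖v‖| := by
  have hv' : ‖v‖ ≠ 0 := norm_ne_zero_iff.2 hv
  calc ‖((‖v‖⁻¹ : ℝ) : 𝕜) • v - v‖ = ‖((‖v‖⁻¹ - 1 : ℝ) : 𝕜) • v‖ := by simp [sub_smul]
    _ = |‖v‖⁻¹ - 1| * |‖v‖| := by rw [norm_smul, RCLike.norm_ofReal, abs_norm]
    _ = |1 - ‖v‖| := by rw [← abs_mul, sub_mul, inv_mul_cancel₀ hv', one_mul]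

namespace IdApproxFactorsThrough

lemma exists_forall_mem_of_totallyBounded (h : IdApproxFactorsThrough 𝕜 Z W) {K : Set W}
    (hK : TotallyBounded K) {δ : ℝ} (hδ : 0 < δ) :
    ∃ (J : Z →ₗᵢ[𝕜] W) (Q : W →L[𝕜] Z), ‖Q‖ ≤ 1 ∧ ∀ w ∈ K, ‖J (Q w) - w‖ ≤ δ := by
  obtain ⟨F, hF, hKF⟩ := Metric.totallyBounded_iff.1 hK (δ / 4) (by positivity)
  obtain ⟨J, Q, hQ, hJQ⟩ := h F hF (δ / 2) (by positivity)
  refine ⟨J, Q, hQ, fun w hw => ?_⟩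
  obtain ⟨v, hv, hwv⟩ := mem_iUnion₂.1 (hKF hw)
  rw [Metric.mem_ball, dist_eq_norm] at hwv
  linarith [norm_isometry_comp_apply_sub_le J hQ w v, hJQ v hv]

lemma exists_norm_comp_sub_le (h : IdApproxFactorsThrough 𝕜 Z W) {T : X →L[𝕜] W}
    (hT : IsCompactOperator T) {δ : ℝ} (hδ : 0 < δ) :
    ∃ (J : Z →ₗᵢ[𝕜] W) (R : X →L[𝕜] Z), IsCompactOperator R ∧
      ‖J.toContinuousLinearMap ∘L R - T‖ ≤ δ := by
  obtain ⟨K, hK, hTK⟩ := IsCompactOperator.image_closedBall_subset_compact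
    (f := (T : X →ₗ[𝕜] W)) hT 1
  obtain ⟨J, Q, -, hJQ⟩ := h.exists_forall_mem_of_totallyBounded hK.totallyBounded hδ
  refine ⟨J, Q ∘L T, hT.clm_comp Q,
    ContinuousLinearMap.opNorm_le_of_unit_norm hδ.le fun x hx => ?_⟩
  exact hJQ (T x) (hTK ⟨x, by simp [hx], rfl⟩)

lemma exists_norm_eq_one_norm_comp_sub_le (h : IdApproxFactorsThrough 𝕜 Z W) {T : X →L[𝕜] W}
    (hT : IsCompactOperator T) (hT1 : ‖T‖ = 1) {δ : ℝ} (hδ : 0 < δ) :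
    ∃ (J : Z →ₗᵢ[𝕜] W) (R : X →L[𝕜] Z), IsCompactOperator R ∧ ‖R‖ = 1 ∧
      ‖J.toContinuousLinearMap ∘L R - T‖ ≤ δ := by
  obtain ⟨J, R, hR, hJR⟩ := h.exists_norm_comp_sub_le hT (δ := min (δ / 2) 2⁻¹) (by positivity)
  obtain ⟨hJR_half, hJR_inv⟩ := le_min_iff.1 hJR
  have hnorm : |1 - ‖R‖| ≤ ‖J.toContinuousLinearMap ∘L R - T‖ := by
    rw [← hT1, ← J.norm_toContinuousLinearMap_comp (g := R), norm_sub_rev]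
    exact abs_norm_sub_norm_le _ _
  have hR0 : R ≠ 0 := by
    rintro rfl
    norm_num at hnorm hJR_inv
    linarith
  set c : 𝕜 := ((‖R‖⁻¹ : ℝ) : 𝕜) with hc
  refine ⟨J, c • R, hR.smul c, ?_, ?_⟩
  · rw [norm_smul, hc, RCLike.norm_ofReal, abs_inv, abs_norm,
      inv_mul_cancel₀ (norm_ne_zero_iff.2 hR0)]
  · have hsplit : J.toContinuousLinearMap ∘L (c • R) - T =
        J.toContinuousLinearMap ∘L (c • R - R) + (J.toContinuousLinearMap ∘L R - T) := by
      rw [ContinuousLinearMap.comp_sub]; abel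
    calc ‖J.toContinuousLinearMap ∘L (c • R) - T‖
        ≤ ‖c • R - R‖ + ‖J.toContinuousLinearMap ∘L R - T‖ := by
          rw [hsplit, ← J.norm_toContinuousLinearMap_comp (g := c • R - R)]
          exact norm_add_le _ _
      _ ≤ δ := by rw [norm_inv_norm_smul_sub_self hR0]; linarith

theorem bpbpCompactWith (h : IdApproxFactorsThrough 𝕜 Z W) {η : ℝ → ℝ}
    (hη : BPBpCompactWith 𝕜 X Z η) : BPBpCompactWith 𝕜 X W (fun ε => η (ε / 2)) := by
  intro ε hε
  obtain ⟨hη_pos, hη_attain⟩ := hη (ε / 2) (half_pos hε)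
  refine ⟨hη_pos, fun T hT hT1 x₀ hx₀ hTx₀ => ?_⟩
  obtain ⟨δ, hδ, hδ_lt⟩ := exists_between
    (lt_min (half_pos hε) (show 0 < ‖T x₀‖ - (1 - η (ε / 2)) by linarith))
  obtain ⟨hδε, hδη⟩ := lt_min_iff.1 hδ_lt
  obtain ⟨J, R, hR, hR1, hJR⟩ := h.exists_norm_eq_one_norm_comp_sub_le hT hT1 hδ
  have hRx₀ : 1 - η (ε / 2) < ‖R x₀‖ := by
    have hclose : ‖T x₀ - J (R x₀)‖ ≤ δ := by
      rw [norm_sub_rev]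
      simpa [hx₀] using (J.toContinuousLinearMap ∘L R - T).le_of_opNorm_le hJR x₀
    linarith [norm_sub_norm_le (T x₀) (J (R x₀)), J.norm_map (R x₀)]
  obtain ⟨S, x₁, hS, hS1, hx₁, hSx₁, hx₀x₁, hSR⟩ := hη_attain R hR hR1 x₀ hx₀ hRx₀
  refine ⟨J.toContinuousLinearMap ∘L S, x₁, hS.clm_comp J.toContinuousLinearMap,
    by rw [J.norm_toContinuousLinearMap_comp, hS1], hx₁, by simpa using hSx₁, by linarith, ?_⟩
  calc ‖J.toContinuousLinearMap ∘L S - T‖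
      ≤ ‖J.toContinuousLinearMap ∘L S - J.toContinuousLinearMap ∘L R‖
          + ‖J.toContinuousLinearMap ∘L R - T‖ := norm_sub_le_norm_sub_add_norm_sub _ _ _
    _ = ‖S - R‖ + ‖J.toContinuousLinearMap ∘L R - T‖ := by
        rw [← ContinuousLinearMap.comp_sub, J.norm_toContinuousLinearMap_comp]
    _ < ε := by linarith

end IdApproxFactorsThrough

end Transfer

section DisjointFamily

variable {Ω ι : Type*} [MeasurableSpace Ω]

/-- A pairwise disjoint family of measurable sets of positive finite measure: the supports of the
step functions that span a copy of `ℓ_p` inside `L_p(μ)`. -/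
structure IsDisjointFinitePos (μ : Measure Ω) (A : ι → Set Ω) : Prop where
  measurableSet (i : ι) : MeasurableSet (A i)
  disjoint : Pairwise (Disjoint on A)
  measure_ne_zero (i : ι) : μ (A i) ≠ 0
  measure_ne_top (i : ι) : μ (A i) ≠ ∞

variable {μ : Measure Ω}

lemma exists_seq_measurableSet_disjoint_of_infinite_support [TopologicalSpace Ω] [T2Space Ω]
    [HereditarilyLindelofSpace Ω] [OpensMeasurableSpace Ω] (hμ : μ.support.Infinite) :
    ∃ V : ℕ → Set Ω, (∀ n, MeasurableSet (V n)) ∧ Pairwise (Disjoint on V) ∧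
      ∀ n, μ (V n) ≠ 0 := by
  have := hμ.to_subtype
  obtain ⟨U, hU_inf, hU_open, hU_disj⟩ := exists_seq_infinite_isOpen_pairwise_disjoint μ.support
  choose O hO hOU using fun n => isOpen_induced_iff.1 (hU_open n)
  have himage (n : ℕ) : (↑) '' U n = μ.support ∩ O n := by
    rw [← hOU, Subtype.image_preimage_coe]
  refine ⟨fun n => μ.support ∩ O n,
    fun n => Measure.isClosed_support.measurableSet.inter (hO n).measurableSet,
    fun m n hmn => ?_, fun n => ?_⟩
  · rw [onFun, ← himage, ← himage]
    exact (disjoint_image_iff Subtype.val_injective).2 (hU_disj hmn)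
  · obtain ⟨x, hx⟩ := (hU_inf n).nonempty
    have hxO : (x : Ω) ∈ O n := by rwa [← hOU] at hx
    have hpos := (Measure.mem_support_iff_forall _).1 x.2 (O n) ((hO n).mem_nhds hxO)
    beta_reduce
    rwa [inter_comm, measure_inter_conull Measure.measure_compl_support, ← pos_iff_ne_zero]

lemma exists_measurable_subset_of_memLp {E : Type*} [NormedAddCommGroup E] {p : ℝ≥0∞} (hp0 : p ≠ 0)
    (hp : p ≠ ∞) {f : Ω → E} (hf : MemLp f p μ) {s : Set Ω} (hs : MeasurableSet s)
    (hsf : μ (s ∩ support f) ≠ 0) :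
    ∃ t ⊆ s, MeasurableSet t ∧ μ t ≠ 0 ∧ μ t ≠ ∞ := by
  obtain ⟨D, hD, hfD, hDσ⟩ := (hf.aefinStronglyMeasurable hp0 hp).exists_set_sigmaFinite
  have hsD : 0 < μ.restrict D s := by
    rw [Measure.restrict_apply hs]
    refine (pos_iff_ne_zero.2 hsf).trans_le (measure_mono_ae ?_)
    filter_upwards [(ae_restrict_iff' hD.compl).1 hfD] with ω hω hωs
    exact ⟨hωs.1, not_not.1 fun hωD => hωs.2 (hω hωD)⟩
  obtain ⟨t, ht, hts, ht_pos, ht_fin⟩ := (μ.restrict D).exists_subset_measure_lt_top hs hsD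
  rw [Measure.restrict_apply ht] at ht_pos ht_fin
  exact ⟨t ∩ D, inter_subset_left.trans hts, ht.inter hD, ht_pos.ne', ht_fin.ne⟩

variable {𝕜 : Type*} [RCLike 𝕜] {p : ℝ≥0∞}

lemma linearIndependent_coord_of_forall_ae_mem {f : ι → Lp 𝕜 p μ} (hf : LinearIndependent 𝕜 f)
    {S : Set (ι → 𝕜)} (hS : ∀ᵐ ω ∂μ, (fun i => f i ω) ∈ S) :
    LinearIndependent 𝕜 (fun (i : ι) (z : S) => (z : ι → 𝕜) i) := by
  rw [linearIndependent_iff'] at hf ⊢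
  refine fun s c hc => hf s c (Lp.ext ?_)
  have hsmul : ∀ᵐ ω ∂μ, ∀ i ∈ s, (c i • f i : Lp 𝕜 p μ) ω = c i * f i ω :=
    (ae_ball_iff s.countable_toSet).2 fun i _ => Lp.coeFn_smul (c i) (f i)
  filter_upwards [Lp.coeFn_finsetSum s fun i => c i • f i, hsmul, hS, Lp.coeFn_zero 𝕜 p μ]
    with ω hsum hsmul hωS hzero
  rw [hsum, hzero]
  calc (∑ i ∈ s, ⇑(c i • f i)) ω = ∑ i ∈ s, c i * f i ω := by
        rw [Finset.sum_apply]; exact Finset.sum_congr rfl hsmul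
    _ = 0 := by simpa using congrFun hc ⟨_, hωS⟩

lemma infinite_of_linearIndependent_of_forall_ae_mem [Infinite ι] {f : ι → Lp 𝕜 p μ}
    (hf : LinearIndependent 𝕜 f) {S : Set (ι → 𝕜)} (hS : ∀ᵐ ω ∂μ, (fun i => f i ω) ∈ S) :
    S.Infinite := fun hfin =>
  have := hfin.to_subtype
  Module.Finite.not_linearIndependent_of_infinite _ (linearIndependent_coord_of_forall_ae_mem hf hS)

lemma exists_linearIndependent_nat_of_not_finiteDimensional {K V : Type*} [DivisionRing K]
    [AddCommGroup V] [Module K V] (hV : ¬FiniteDimensional K V) :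
    ∃ f : ℕ → V, LinearIndependent K f := by
  let b := Module.Basis.ofVectorSpace K V
  have : Infinite (Module.Basis.ofVectorSpaceIndex K V) :=
    not_finite_iff_infinite.1 fun _ => hV (Module.Finite.of_basis b)
  exact ⟨b ∘ Infinite.natEmbedding _, b.linearIndependent.comp _ (Embedding.injective _)⟩

-- The joint law of a linearly independent sequence in `L_p(μ)` has infinite support away from `0`.
-- Disjoint neighbourhoods in that support pull back to disjoint sets on which some member of the
-- sequence does not vanish, so that they have subsets of positive finite measure.
theorem exists_isDisjointFinitePos_of_not_finiteDimensional [Fact (1 ≤ p)] (hp : p ≠ ∞)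
    (hμ : ¬FiniteDimensional 𝕜 (Lp 𝕜 p μ)) : ∃ A : ℕ → Set Ω, IsDisjointFinitePos μ A := by
  have hp0 : p ≠ 0 := (zero_lt_one.trans_le Fact.out).ne'
  obtain ⟨f, hf⟩ := exists_linearIndependent_nat_of_not_finiteDimensional hμ
  let g : Ω → ℕ → 𝕜 := fun ω n => f n ω
  have hg : Measurable g := measurable_pi_lambda _ fun n => (Lp.stronglyMeasurable (f n)).measurable
  let ν : Measure (ℕ → 𝕜) := (μ.map g).restrict {0}ᶜ
  have hgν : ∀ᵐ ω ∂μ, g ω ∈ insert 0 ν.support := by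
    have hsupp : ∀ᵐ z ∂μ.map g, z ∈ ({0}ᶜ : Set (ℕ → 𝕜)) → z ∈ ν.support :=
      (ae_restrict_iff' (measurableSet_singleton 0).compl).1 Measure.support_mem_ae
    filter_upwards [ae_of_ae_map hg.aemeasurable hsupp] with ω hω
    exact or_iff_not_imp_left.2 hω
  have hν : ν.support.Infinite := fun hfin =>
    infinite_of_linearIndependent_of_forall_ae_mem hf hgν (hfin.insert 0)
  obtain ⟨V, hV, hV_disj, hV_ne⟩ := exists_seq_measurableSet_disjoint_of_infinite_support hν
  have hpre (n : ℕ) : ∃ t ⊆ g ⁻¹' V n, MeasurableSet t ∧ μ t ≠ 0 ∧ μ t ≠ ∞ := by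
    have hcover : g ⁻¹' (V n ∩ {0}ᶜ) ⊆ ⋃ m, g ⁻¹' V n ∩ support (f m) := fun ω hω => by
      obtain ⟨m, hm⟩ := Function.ne_iff.1 hω.2
      exact mem_iUnion.2 ⟨m, hω.1, hm⟩
    have hne : μ (⋃ m, g ⁻¹' V n ∩ support (f m)) ≠ 0 := fun h0 => hV_ne n <| by
      rw [Measure.restrict_apply (hV n), Measure.map_apply hg
        ((hV n).inter (measurableSet_singleton 0).compl)]
      exact measure_mono_null hcover h0
    obtain ⟨m, hm⟩ := not_forall.1 (mt measure_iUnion_null hne)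
    exact exists_measurable_subset_of_memLp hp0 hp (Lp.memLp (f m)) (hg (hV n)) hm
  choose A hAV hA hA_ne_zero hA_ne_top using hpre
  exact ⟨A, hA, fun m n hmn => ((hV_disj hmn).preimage g).mono (hAV m) (hAV n), hA_ne_zero,
    hA_ne_top⟩

end DisjointFamily

section Sequences

variable {ι : Type*} {E : ι → Type*} [∀ i, NormedAddCommGroup (E i)] {p : ℝ≥0∞}

lemma memℓp_iff_tsum_enorm_ne_top (hp : 0 < p.toReal) {f : ∀ i, E i} :
    Memℓp f p ↔ ∑' i, ‖f i‖ₑ ^ p.toReal ≠ ∞ := by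
  have hnorm (i : ι) : ‖f i‖ₑ ^ p.toReal = ENNReal.ofReal (‖f i‖ ^ p.toReal) := by
    rw [← ofReal_norm, ENNReal.ofReal_rpow_of_nonneg (norm_nonneg _) hp.le]
  rw [memℓp_gen_iff hp]
  simp only [hnorm]
  refine ⟨Summable.tsum_ofReal_ne_top, fun h => ?_⟩
  simpa only [ENNReal.toReal_ofReal (Real.rpow_nonneg (norm_nonneg _) _)]
    using ENNReal.summable_toReal h

lemma enorm_rpow_eq_tsum_enorm [Fact (1 ≤ p)] (hp : 0 < p.toReal) (y : lp E p) :
    ‖y‖ₑ ^ p.toReal = ∑' i, ‖y i‖ₑ ^ p.toReal := by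
  simp only [← ofReal_norm, ENNReal.ofReal_rpow_of_nonneg (norm_nonneg _) hp.le]
  rw [lp.norm_rpow_eq_tsum hp, ENNReal.ofReal_tsum_of_nonneg (fun i => by positivity)
    ((memℓp_gen_iff hp).1 (lp.memℓp y))]

end Sequences

section StepFunctions

variable {Ω ι E F : Type*} {A : ι → Set Ω}

/-- The function that takes the constant value `z i` on `A i` and vanishes off `⋃ i, A i`, for a
pairwise disjoint family `A`. -/
def stepFun [AddCommMonoid E] (A : ι → Set Ω) (z : ι → E) (ω : Ω) : E :=
  ∑ᶠ i, (A i).indicator (fun _ => z i) ω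

section AddCommMonoid

variable [AddCommMonoid E] [AddCommMonoid F]

lemma stepFun_of_mem (hA : Pairwise (Disjoint on A)) (z : ι → E) {i : ι} {ω : Ω} (hω : ω ∈ A i) :
    stepFun A z ω = z i := by
  rw [stepFun, finsum_eq_single _ i, indicator_of_mem hω]
  exact fun j hj => indicator_of_notMem (disjoint_right.1 (hA hj) hω) _

lemma stepFun_of_notMem (z : ι → E) {ω : Ω} (hω : ω ∉ ⋃ i, A i) : stepFun A z ω = 0 :=
  finsum_eq_zero_of_forall_eq_zero fun i =>
    indicator_of_notMem (fun hi => hω (mem_iUnion_of_mem i hi)) _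

lemma eq_stepFun_of_forall_mem (hA : Pairwise (Disjoint on A)) {f : Ω → E} {z : ι → E}
    (hmem : ∀ i, ∀ ω ∈ A i, f ω = z i) (hnotMem : ∀ ω ∉ ⋃ i, A i, f ω = 0) : f = stepFun A z := by
  ext ω
  by_cases hω : ω ∈ ⋃ i, A i
  · obtain ⟨i, hi⟩ := mem_iUnion.1 hω
    rw [hmem i ω hi, stepFun_of_mem hA z hi]
  · rw [hnotMem ω hω, stepFun_of_notMem z hω]

lemma stepFun_add (hA : Pairwise (Disjoint on A)) (y z : ι → E) :
    stepFun A (y + z) = stepFun A y + stepFun A z :=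
  .symm <| eq_stepFun_of_forall_mem hA
    (fun i ω hi => by rw [Pi.add_apply, stepFun_of_mem hA y hi, stepFun_of_mem hA z hi,
      Pi.add_apply])
    (fun ω hω => by rw [Pi.add_apply, stepFun_of_notMem y hω, stepFun_of_notMem z hω, add_zero])

lemma comp_stepFun (hA : Pairwise (Disjoint on A)) {φ : E → F} (hφ : φ 0 = 0) (z : ι → E) :
    φ ∘ stepFun A z = stepFun A (φ ∘ z) :=
  eq_stepFun_of_forall_mem hA
    (fun i ω hi => by rw [comp_apply, stepFun_of_mem hA z hi, comp_apply])
    (fun ω hω => by rw [comp_apply, stepFun_of_notMem z hω, hφ])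

lemma stepFun_smul {M : Type*} [SMulZeroClass M E] (hA : Pairwise (Disjoint on A)) (c : M)
    (z : ι → E) : stepFun A (c • z) = c • stepFun A z :=
  (comp_stepFun hA (smul_zero c) z).symm

lemma support_stepFun_subset (z : ι → E) : support (stepFun A z) ⊆ ⋃ i, A i := fun _ hω =>
  not_not.1 fun h => hω (stepFun_of_notMem z h)

end AddCommMonoid

variable [NormedAddCommGroup E] [MeasurableSpace Ω] {μ : Measure Ω} {p : ℝ≥0∞}

lemma aestronglyMeasurable_stepFun [Countable ι] (hA_meas : ∀ i, MeasurableSet (A i))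
    (hA : Pairwise (Disjoint on A)) (z : ι → E) : AEStronglyMeasurable (stepFun A z) μ := by
  rw [← indicator_eq_self.2 (support_stepFun_subset z),
    aestronglyMeasurable_indicator_iff (.iUnion hA_meas), aestronglyMeasurable_iUnion_iff]
  exact fun i => aestronglyMeasurable_const.congr <|
    (ae_restrict_mem (hA_meas i)).mono fun ω hω => (stepFun_of_mem hA z hω).symm

lemma eLpNorm_restrict_iUnion_rpow [Countable ι] (hA_meas : ∀ i, MeasurableSet (A i))
    (hA : Pairwise (Disjoint on A)) (hp0 : p ≠ 0) (hp : p ≠ ∞) (f : Ω → E) :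
    eLpNorm f p (μ.restrict (⋃ i, A i)) ^ p.toReal =
      ∑' i, eLpNorm f p (μ.restrict (A i)) ^ p.toReal := by
  have hpow (ν : Measure Ω) : eLpNorm f p ν ^ p.toReal = ∫⁻ ω, ‖f ω‖ₑ ^ p.toReal ∂ν := by
    rw [eLpNorm_eq_lintegral_rpow_enorm_toReal hp0 hp, ← ENNReal.rpow_mul,
      one_div_mul_cancel (ENNReal.toReal_pos hp0 hp).ne', ENNReal.rpow_one]
  simp only [hpow, lintegral_iUnion hA_meas hA]

variable (μ p) in
/-- The `L_p` norm of the indicator of `s`, for `p ≠ ∞` and `s` of finite measure. It is the factor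
between the value of a step function on `s` and the corresponding coordinate in `ℓ_p`. -/
def lpWeight (s : Set Ω) : ℝ := μ.real s ^ (1 / p.toReal)

lemma enorm_lpWeight {s : Set Ω} (hs : μ s ≠ ∞) : ‖lpWeight μ p s‖ₑ = μ s ^ (1 / p.toReal) := by
  rw [lpWeight, Real.enorm_of_nonneg (by positivity),
    ← ENNReal.ofReal_rpow_of_nonneg (by positivity) (by positivity), ofReal_measureReal hs]

variable [NormedSpace ℝ E]

lemma enorm_average_mul_rpow_le_eLpNorm [IsFiniteMeasure μ] (hp1 : 1 ≤ p) {f : Ω → E}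
    (hf : AEStronglyMeasurable f μ) :
    ‖⨍ ω, f ω ∂μ‖ₑ * μ univ ^ (1 / p.toReal) ≤ eLpNorm f p μ := by
  rcases eq_or_ne μ 0 with rfl | hμ
  · simp
  have : NeZero μ := ⟨hμ⟩
  have hpow_ne_zero : μ univ ^ (1 / p.toReal) ≠ 0 := by simp [ENNReal.rpow_eq_zero_iff, hμ]
  have hpow_ne_top : μ univ ^ (1 / p.toReal) ≠ ∞ := by finiteness
  calc ‖⨍ ω, f ω ∂μ‖ₑ * μ univ ^ (1 / p.toReal)
      ≤ eLpNorm f p ((μ univ)⁻¹ • μ) * μ univ ^ (1 / p.toReal) := by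
        gcongr
        calc ‖⨍ ω, f ω ∂μ‖ₑ ≤ eLpNorm f 1 ((μ univ)⁻¹ • μ) :=
              (enorm_integral_le_lintegral_enorm f).trans eLpNorm_one_eq_lintegral_enorm.ge
          _ ≤ eLpNorm f p ((μ univ)⁻¹ • μ) :=
              eLpNorm_le_eLpNorm_of_exponent_le hp1 (hf.smul_measure _)
    _ = eLpNorm f p μ := by
        rw [eLpNorm_smul_measure_of_ne_zero (ENNReal.inv_ne_zero.2 (measure_ne_top μ _)),
          smul_eq_mul, ENNReal.toReal_div, ENNReal.toReal_one, ENNReal.inv_rpow, mul_right_comm,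
          ENNReal.inv_mul_cancel hpow_ne_zero hpow_ne_top, one_mul]

lemma enorm_lpWeight_smul_setAverage_le (hp1 : 1 ≤ p) {s : Set Ω} (hs : μ s ≠ ∞) {f : Ω → E}
    (hf : AEStronglyMeasurable f μ) :
    ‖lpWeight μ p s • ⨍ ω in s, f ω ∂μ‖ₑ ≤ eLpNorm f p (μ.restrict s) := by
  have : IsFiniteMeasure (μ.restrict s) := isFiniteMeasure_restrict.2 hs
  simpa only [enorm_smul, enorm_lpWeight hs, mul_comm, Measure.restrict_apply_univ] using
    enorm_average_mul_rpow_le_eLpNorm hp1 hf.restrict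

lemma setAverage_Lp_add {s : Set Ω} (hs : μ s ≠ ∞) [hp1 : Fact (1 ≤ p)] (f g : Lp E p μ) :
    ⨍ ω in s, (f + g : Lp E p μ) ω ∂μ = ⨍ ω in s, f ω ∂μ + ⨍ ω in s, g ω ∂μ := by
  rw [average_congr (ae_restrict_of_ae (Lp.coeFn_add f g)), average_eq, average_eq, average_eq,
    ← smul_add]
  exact congrArg _ (integral_add (integrableOn_Lp_of_measure_ne_top f hp1.out hs)
    (integrableOn_Lp_of_measure_ne_top g hp1.out hs))

lemma setAverage_Lp_smul {𝕜 : Type*} [RCLike 𝕜] [NormedSpace 𝕜 E] [SMulCommClass ℝ 𝕜 E]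
    (s : Set Ω) (c : 𝕜) (f : Lp E p μ) :
    ⨍ ω in s, (c • f : Lp E p μ) ω ∂μ = c • ⨍ ω in s, f ω ∂μ := by
  rw [average_congr (ae_restrict_of_ae (Lp.coeFn_smul c f))]
  exact integral_smul c _

namespace IsDisjointFinitePos

lemma lpWeight_ne_zero (hA : IsDisjointFinitePos μ A) (i : ι) : lpWeight μ p (A i) ≠ 0 :=
  (Real.rpow_pos_of_pos (ENNReal.toReal_pos (hA.measure_ne_zero i) (hA.measure_ne_top i)) _).ne'

variable [Countable ι]

lemma eLpNorm_stepFun_rpow (hA : IsDisjointFinitePos μ A) (hp0 : p ≠ 0) (hp : p ≠ ∞) (z : ι → E) :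
    eLpNorm (stepFun A z) p μ ^ p.toReal = ∑' i, ‖lpWeight μ p (A i) • z i‖ₑ ^ p.toReal := by
  rw [← eLpNorm_restrict_eq_of_support_subset (support_stepFun_subset z),
    eLpNorm_restrict_iUnion_rpow hA.measurableSet hA.disjoint hp0 hp]
  refine tsum_congr fun i => congrArg (· ^ p.toReal) ?_
  have hconst : stepFun A z =ᵐ[μ.restrict (A i)] fun _ => z i :=
    (ae_restrict_mem (hA.measurableSet i)).mono fun ω hω => stepFun_of_mem hA.disjoint z hω
  rw [eLpNorm_congr_ae hconst, eLpNorm_const' _ hp0 hp, Measure.restrict_apply_univ, enorm_smul,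
    enorm_lpWeight (hA.measure_ne_top i), mul_comm]

lemma memLp_stepFun (hA : IsDisjointFinitePos μ A) (hp0 : p ≠ 0) (hp : p ≠ ∞) {z : ι → E}
    (hz : Memℓp (fun i => lpWeight μ p (A i) • z i) p) : MemLp (stepFun A z) p μ := by
  have hp_pos := ENNReal.toReal_pos hp0 hp
  refine ⟨aestronglyMeasurable_stepFun hA.measurableSet hA.disjoint z, lt_top_iff_ne_top.2 ?_⟩
  rw [ne_eq, ← ENNReal.rpow_eq_top_iff_of_pos hp_pos, hA.eLpNorm_stepFun_rpow hp0 hp]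
  exact (memℓp_iff_tsum_enorm_ne_top hp_pos).1 hz

lemma tsum_enorm_lpWeight_smul_setAverage_rpow_le (hA : IsDisjointFinitePos μ A) (hp1 : 1 ≤ p)
    (hp : p ≠ ∞) {f : Ω → E} (hf : AEStronglyMeasurable f μ) :
    ∑' i, ‖lpWeight μ p (A i) • ⨍ ω in A i, f ω ∂μ‖ₑ ^ p.toReal ≤ eLpNorm f p μ ^ p.toReal :=
  calc ∑' i, ‖lpWeight μ p (A i) • ⨍ ω in A i, f ω ∂μ‖ₑ ^ p.toReal
      ≤ ∑' i, eLpNorm f p (μ.restrict (A i)) ^ p.toReal := by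
        gcongr with i
        exact enorm_lpWeight_smul_setAverage_le hp1 (hA.measure_ne_top i) hf
    _ = eLpNorm f p (μ.restrict (⋃ i, A i)) ^ p.toReal :=
        (eLpNorm_restrict_iUnion_rpow hA.measurableSet hA.disjoint
          (zero_lt_one.trans_le hp1).ne' hp f).symm
    _ ≤ eLpNorm f p μ ^ p.toReal := by
        gcongr
        exact Measure.restrict_le_self

variable [Fact (1 ≤ p)]

lemma memLp_stepFun_inv_lpWeight_smul (hA : IsDisjointFinitePos μ A) (hp : p ≠ ∞)
    (y : lp (fun _ : ι => E) p) :
    MemLp (stepFun A fun i => (lpWeight μ p (A i))⁻¹ • y i) p μ :=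
  hA.memLp_stepFun (zero_lt_one.trans_le Fact.out).ne' hp <| by
    simpa only [smul_inv_smul₀ (hA.lpWeight_ne_zero _)] using lp.memℓp y

lemma eLpNorm_stepFun_inv_lpWeight_smul (hA : IsDisjointFinitePos μ A) (hp : p ≠ ∞)
    (y : lp (fun _ : ι => E) p) :
    eLpNorm (stepFun A fun i => (lpWeight μ p (A i))⁻¹ • y i) p μ = ‖y‖ₑ := by
  have hp0 : p ≠ 0 := (zero_lt_one.trans_le Fact.out).ne'
  have hp_pos := ENNReal.toReal_pos hp0 hp
  refine ENNReal.rpow_left_injective hp_pos.ne' ?_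
  simp only [hA.eLpNorm_stepFun_rpow hp0 hp, smul_inv_smul₀ (hA.lpWeight_ne_zero _),
    enorm_rpow_eq_tsum_enorm hp_pos]

lemma memℓp_lpWeight_smul_setAverage (hA : IsDisjointFinitePos μ A) (hp : p ≠ ∞)
    (f : Lp E p μ) : Memℓp (fun i => lpWeight μ p (A i) • ⨍ ω in A i, f ω ∂μ) p := by
  have hp_pos := ENNReal.toReal_pos (zero_lt_one.trans_le (Fact.out : 1 ≤ p)).ne' hp
  rw [memℓp_iff_tsum_enorm_ne_top hp_pos]
  exact ((hA.tsum_enorm_lpWeight_smul_setAverage_rpow_le Fact.out hp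
    (Lp.aestronglyMeasurable f)).trans_lt
      (ENNReal.rpow_lt_top_of_nonneg hp_pos.le (Lp.eLpNorm_ne_top f))).ne

variable {𝕜 : Type*} [RCLike 𝕜] [NormedSpace 𝕜 E] [SMulCommClass ℝ 𝕜 E]

variable (𝕜) in
/-- The isometric embedding of `ℓ_p(E)` into `L_p(μ, E)` whose range consists of the step functions
on a disjoint family of sets of positive finite measure. -/
def stepEmbedding (hA : IsDisjointFinitePos μ A) (hp : p ≠ ∞) :
    lp (fun _ : ι => E) p →ₗᵢ[𝕜] Lp E p μ where
  toFun y := (hA.memLp_stepFun_inv_lpWeight_smul hp y).toLp _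
  map_add' y z := by
    rw [← MemLp.toLp_add]
    congr 1
    exact (congrArg (stepFun A) (funext fun i => smul_add _ (y i) (z i))).trans
      (stepFun_add hA.disjoint _ _)
  map_smul' c y := by
    rw [← MemLp.toLp_const_smul]
    congr 1
    exact (congrArg (stepFun A) (funext fun i => smul_comm _ c (y i))).trans
      (stepFun_smul hA.disjoint c _)
  norm_map' y := by
    simp [Lp.norm_toLp, hA.eLpNorm_stepFun_inv_lpWeight_smul hp]

lemma coeFn_stepEmbedding (hA : IsDisjointFinitePos μ A) (hp : p ≠ ∞)
    (y : lp (fun _ : ι => E) p) :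
    hA.stepEmbedding 𝕜 hp y =ᵐ[μ] stepFun A fun i => (lpWeight μ p (A i))⁻¹ • y i :=
  MemLp.coeFn_toLp (hA.memLp_stepFun_inv_lpWeight_smul hp y)

variable (𝕜) in
/-- The contraction from `L_p(μ, E)` to `ℓ_p(E)` that sends a function to its averages over the
members of a disjoint family of sets of positive finite measure, scaled so as to be a left inverse
of `IsDisjointFinitePos.stepEmbedding` when `E` is complete. -/
def averagingMap (hA : IsDisjointFinitePos μ A) (hp : p ≠ ∞) :
    Lp E p μ →L[𝕜] lp (fun _ : ι => E) p :=
  LinearMap.mkContinuous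
    { toFun f := ⟨fun i => lpWeight μ p (A i) • ⨍ ω in A i, f ω ∂μ,
        hA.memℓp_lpWeight_smul_setAverage hp f⟩
      map_add' f g := by
        ext i
        exact (congrArg _ (setAverage_Lp_add (hA.measure_ne_top i) f g)).trans (smul_add _ _ _)
      map_smul' c f := by
        ext i
        exact (congrArg _ (setAverage_Lp_smul (A i) c f)).trans (smul_comm _ _ _) } 1 fun f => by
    have hp_pos := ENNReal.toReal_pos (zero_lt_one.trans_le (Fact.out : 1 ≤ p)).ne' hp
    rw [one_mul, ← enorm_le_iff_norm_le, ← ENNReal.rpow_le_rpow_iff hp_pos,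
      enorm_rpow_eq_tsum_enorm hp_pos, Lp.enorm_def]
    exact hA.tsum_enorm_lpWeight_smul_setAverage_rpow_le Fact.out hp (Lp.aestronglyMeasurable f)

lemma averagingMap_apply (hA : IsDisjointFinitePos μ A) (hp : p ≠ ∞) (f : Lp E p μ) (i : ι) :
    hA.averagingMap 𝕜 hp f i = lpWeight μ p (A i) • ⨍ ω in A i, f ω ∂μ := rfl

lemma norm_averagingMap_le (hA : IsDisjointFinitePos μ A) (hp : p ≠ ∞) :
    ‖hA.averagingMap (E := E) 𝕜 hp‖ ≤ 1 :=
  LinearMap.mkContinuous_norm_le _ zero_le_one _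

lemma stepEmbedding_averagingMap_of_ae_eq [CompleteSpace E] (hA : IsDisjointFinitePos μ A)
    (hp : p ≠ ∞) {f : Lp E p μ} {z : ι → E} (hf : f =ᵐ[μ] stepFun A z) :
    hA.stepEmbedding 𝕜 hp (hA.averagingMap 𝕜 hp f) = f := by
  have haverage (i : ι) : ⨍ ω in A i, f ω ∂μ = z i := by
    rw [setAverage_congr_fun (g := fun _ => z i) (hA.measurableSet i),
      setAverage_const (hA.measure_ne_zero i) (hA.measure_ne_top i)]
    filter_upwards [hf] with ω hω hωA
    rw [hω, stepFun_of_mem hA.disjoint z hωA]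
  refine Lp.ext ((hA.coeFn_stepEmbedding hp _).trans ?_)
  simp only [averagingMap_apply, haverage, inv_smul_smul₀ (hA.lpWeight_ne_zero _)]
  exact hf.symm

end IsDisjointFinitePos

end StepFunctions

section Approximation

variable {Ω : Type*} [MeasurableSpace Ω] {μ : Measure Ω}

lemma exists_isDisjointFinitePos_nat_comp_ae_eq_stepFun {κ E : Type*} [Countable κ]
    [AddCommMonoid E] {g : Ω → κ} (hg : ∀ k, MeasurableSet (g ⁻¹' {k})) {v : κ → E}
    (hv : ∀ k, v k ≠ 0 → μ (g ⁻¹' {k}) ≠ ∞)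
    (hinf : {k | μ (g ⁻¹' {k}) ≠ 0 ∧ μ (g ⁻¹' {k}) ≠ ∞}.Infinite) :
    ∃ A : ℕ → Set Ω, IsDisjointFinitePos μ A ∧ ∃ z, v ∘ g =ᵐ[μ] stepFun A z := by
  have := hinf.to_subtype
  obtain ⟨e⟩ := nonempty_equiv_of_countable
    (α := ℕ) (β := {k | μ (g ⁻¹' {k}) ≠ 0 ∧ μ (g ⁻¹' {k}) ≠ ∞})
  have hdisj : Pairwise (Disjoint on fun n => g ⁻¹' {(e n : κ)}) := fun m n hmn =>
    (disjoint_singleton.2 fun h => hmn (e.injective (Subtype.ext h))).preimage g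
  refine ⟨fun n => g ⁻¹' {(e n : κ)}, ⟨fun n => hg _, hdisj, fun n => (e n).2.1,
    fun n => (e n).2.2⟩, fun n => v (e n), ?_⟩
  have hfiber_ne_zero : ∀ᵐ ω ∂μ, ∀ k, μ (g ⁻¹' {k}) = 0 → ω ∉ g ⁻¹' {k} :=
    ae_all_iff.2 fun k => eventually_imp_distrib_left.2 measure_eq_zero_iff_ae_notMem.1
  filter_upwards [hfiber_ne_zero] with ω hω
  by_cases hfin : μ (g ⁻¹' {g ω}) = ∞
  · have hω_notMem : ω ∉ ⋃ n, g ⁻¹' {(e n : κ)} := fun h => by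
      obtain ⟨n, hn : g ω = e n⟩ := mem_iUnion.1 h
      exact (e n).2.2 (hn ▸ hfin)
    rw [stepFun_of_notMem _ hω_notMem]
    exact not_not.1 fun hne => hv _ hne hfin
  · let n := e.symm ⟨g ω, fun h0 => hω _ h0 rfl, hfin⟩
    have hn : (e n : κ) = g ω := by simp [n]
    rw [stepFun_of_mem hdisj (fun n => v (e n)) (i := n) hn.symm, hn, comp_apply]

lemma exists_measurable_nat_preimage_succ_eq {B : ℕ → Set Ω} (hB_meas : ∀ n, MeasurableSet (B n))
    (hB : Pairwise (Disjoint on B)) : ∃ d : Ω → ℕ, Measurable d ∧ ∀ n, d ⁻¹' {n + 1} = B n := by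
  have hsucc (n : ℕ) : stepFun B (· + 1) ⁻¹' {n + 1} = B n := by
    ext ω
    by_cases hω : ω ∈ ⋃ n, B n
    · obtain ⟨m, hm⟩ := mem_iUnion.1 hω
      rw [mem_preimage, stepFun_of_mem hB _ hm, mem_singleton_iff, add_left_inj]
      exact ⟨fun h => h ▸ hm, fun hn => hB.eq (not_disjoint_iff.2 ⟨ω, hm, hn⟩)⟩
    · rw [mem_preimage, stepFun_of_notMem _ hω]
      exact ⟨fun h => absurd h (by simp), fun hn => absurd (mem_iUnion_of_mem n hn) hω⟩
  have hzero : stepFun B (· + 1) ⁻¹' {0} = (⋃ n, B n)ᶜ := by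
    ext ω
    refine ⟨fun h hω => ?_, fun hω => stepFun_of_notMem _ hω⟩
    obtain ⟨m, hm⟩ := mem_iUnion.1 hω
    simp [stepFun_of_mem hB _ hm] at h
  refine ⟨stepFun B (· + 1), measurable_to_countable' fun k => ?_, hsucc⟩
  cases k with
  | zero => exact hzero ▸ (MeasurableSet.iUnion hB_meas).compl
  | succ n => exact hsucc n ▸ hB_meas n

lemma exists_isDisjointFinitePos_simpleFunc_ae_eq_stepFun {E : Type*} [AddCommMonoid E]
    {B : ℕ → Set Ω} (hB : IsDisjointFinitePos μ B) {s : SimpleFunc Ω E} (hs : s.FinMeasSupp μ) :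
    ∃ A : ℕ → Set Ω, IsDisjointFinitePos μ A ∧ ∃ z, s =ᵐ[μ] stepFun A z := by
  obtain ⟨d, hd, hdB⟩ := exists_measurable_nat_preimage_succ_eq hB.measurableSet hB.disjoint
  let g : Ω → s.range × ℕ := fun ω => (⟨s ω, s.mem_range_self ω⟩, d ω)
  have hg (k : s.range × ℕ) : g ⁻¹' {k} = s ⁻¹' {(k.1 : E)} ∩ d ⁻¹' {k.2} := by
    ext ω
    simp [g, Prod.ext_iff, Subtype.ext_iff]
  have hinf : {k | μ (g ⁻¹' {k}) ≠ 0 ∧ μ (g ⁻¹' {k}) ≠ ∞}.Infinite := by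
    have hpos (n : ℕ) : ∃ v : s.range, μ (g ⁻¹' {(v, n + 1)}) ≠ 0 := by
      by_contra! hnull
      refine hB.measure_ne_zero n (measure_mono_null (fun ω hω => ?_) (measure_iUnion_null hnull))
      exact mem_iUnion.2 ⟨⟨s ω, s.mem_range_self ω⟩, Prod.ext rfl ((hdB n).ge hω)⟩
    choose v hv using hpos
    refine infinite_of_injective_forall_mem (f := fun n => (v n, n + 1))
      (fun m n hmn => Nat.succ_injective (congrArg Prod.snd hmn)) fun n => ⟨hv n, ?_⟩
    exact measure_ne_top_of_subset ((hg _).le.trans (inter_subset_right.trans (hdB n).le))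
      (hB.measure_ne_top n)
  refine exists_isDisjointFinitePos_nat_comp_ae_eq_stepFun (g := g) (v := fun k => (k.1 : E))
    (fun k => ?_) (fun k hk => ?_) hinf
  · exact hg k ▸ (s.measurableSet_fiber _).inter (hd (measurableSet_singleton _))
  · exact measure_ne_top_of_subset ((hg k).le.trans inter_subset_left)
      (hs.meas_preimage_singleton_ne_zero hk).ne

variable {E : Type*} [NormedAddCommGroup E] {p : ℝ≥0∞} [Fact (1 ≤ p)]

lemma exists_stepFun_norm_sub_le (hp : p ≠ ∞) {B : ℕ → Set Ω} (hB : IsDisjointFinitePos μ B)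
    {F : Set (Lp E p μ)} (hF : F.Finite) {δ : ℝ} (hδ : 0 < δ) :
    ∃ A : ℕ → Set Ω, IsDisjointFinitePos μ A ∧ ∀ f ∈ F, ∃ g : Lp E p μ, ‖f - g‖ ≤ δ ∧
      ∃ z, g =ᵐ[μ] stepFun A z := by
  have := hF.fintype
  have hG : MemLp (fun ω (f : F) => (f : Lp E p μ) ω) p μ := .of_eval fun f => Lp.memLp f.1
  obtain ⟨s, hGs, hs⟩ :=
    hG.exists_simpleFunc_eLpNorm_sub_lt hp (ENNReal.ofReal_pos.2 hδ).ne'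
  have hp0 : p ≠ 0 := (zero_lt_one.trans_le Fact.out).ne'
  obtain ⟨A, hA, z, hsz⟩ := exists_isDisjointFinitePos_simpleFunc_ae_eq_stepFun hB
    ((SimpleFunc.memLp_iff_finMeasSupp hp0 hp).1 hs)
  refine ⟨A, hA, fun f hf => ⟨(hs.eval ⟨f, hf⟩).toLp _, ?_, fun n => z n ⟨f, hf⟩, ?_⟩⟩
  · rw [Lp.norm_def]
    refine ENNReal.toReal_le_of_le_ofReal hδ.le (le_trans (eLpNorm_mono_ae ?_) hGs.le)
    filter_upwards [Lp.coeFn_sub f ((hs.eval ⟨f, hf⟩).toLp _), (hs.eval ⟨f, hf⟩).coeFn_toLp]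
      with ω hsub hcoe
    rw [hsub, Pi.sub_apply, hcoe]
    exact norm_le_pi_norm ((fun f : F => (f : Lp E p μ) ω) - s ω) ⟨f, hf⟩
  · filter_upwards [(hs.eval ⟨f, hf⟩).coeFn_toLp, hsz] with ω hcoe hω
    rw [hcoe, hω]
    exact congrFun (comp_stepFun hA.disjoint (φ := fun v : F → E => v ⟨f, hf⟩) rfl z) ω

theorem idApproxFactorsThrough_lp_Lp {𝕜 : Type*} [RCLike 𝕜] [NormedSpace 𝕜 E] [CompleteSpace E]
    (hp : p ≠ ∞) {B : ℕ → Set Ω} (hB : IsDisjointFinitePos μ B) :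
    IdApproxFactorsThrough 𝕜 (lp (fun _ : ℕ => E) p) (Lp E p μ) := by
  let : NormedSpace ℝ E := .restrictScalars ℝ 𝕜 E
  have : IsScalarTower ℝ 𝕜 E := .of_algebraMap_smul fun _ _ => rfl
  intro F hF δ hδ
  obtain ⟨A, hA, hFA⟩ := exists_stepFun_norm_sub_le hp hB hF (half_pos hδ)
  refine ⟨hA.stepEmbedding 𝕜 hp, hA.averagingMap 𝕜 hp, hA.norm_averagingMap_le hp,
    fun f hf => ?_⟩
  obtain ⟨g, hfg, z, hgz⟩ := hFA f hf
  have hgap := norm_isometry_comp_apply_sub_le (hA.stepEmbedding 𝕜 hp)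
    (hA.norm_averagingMap_le hp) f g
  rw [hA.stepEmbedding_averagingMap_of_ae_eq hp hgz, sub_self, norm_zero] at hgap
  linarith

end Approximation

theorem bpbp_compact_Lp_range_general {𝕜 : Type*} [RCLike 𝕜] {X Y : Type*}
    [NormedAddCommGroup X] [NormedSpace 𝕜 X]
    [NormedAddCommGroup Y] [NormedSpace 𝕜 Y] [CompleteSpace Y]
    (p : ℝ≥0∞) [Fact (1 ≤ p)] (hp : p ≠ ∞)
    (h : BPBpCompact 𝕜 X (lp (fun _ : ℕ => Y) p))
    {Ω : Type*} [MeasurableSpace Ω] (μ : Measure Ω)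
    (hμ : ¬FiniteDimensional 𝕜 (Lp 𝕜 1 μ)) :
    BPBpCompact 𝕜 X (Lp Y p μ) := by
  obtain ⟨η, hη⟩ := h
  obtain ⟨B, hB⟩ := exists_isDisjointFinitePos_of_not_finiteDimensional ENNReal.one_ne_top hμ
  exact ⟨_, (idApproxFactorsThrough_lp_Lp hp hB).bpbpCompactWith hη⟩

/-- Theorem 3.14 (a): if (X, ℓ_p(Y)) has the BPBp for compact operators, then so does
(X, L_p(μ, Y)) whenever L₁(μ) is infinite-dimensional. -/
theorem bpbp_compact_Lp_range {𝕜 : Type*} [RCLike 𝕜] {X Y : Type*}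
    [NormedAddCommGroup X] [NormedSpace 𝕜 X] [CompleteSpace X]
    [NormedAddCommGroup Y] [NormedSpace 𝕜 Y] [CompleteSpace Y]
    (p : ℝ≥0∞) [Fact (1 ≤ p)] (hp : p ≠ ⊤)
    (h : BPBpCompact 𝕜 X (lp (fun _ : ℕ => Y) p))
    {Ω : Type*} [MeasurableSpace Ω] (μ : MeasureTheory.Measure Ω)
    (hμ : ¬FiniteDimensional 𝕜 (MeasureTheory.Lp 𝕜 1 μ)) :
    BPBpCompact 𝕜 X (MeasureTheory.Lp Y p μ) :=
  bpbp_compact_Lp_range_general p hp h μ hμ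
end
end
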